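/- There exists a universal constant c₁ > 0 such that the following holds. Let n ∈ ℕ, let 0 < p ≤ 1/2 with pn ∈ ℤ, let k ∈ ℕ, and let h : S(n,p) → ℤ satisfy ‖h^{>k}‖₂² ≤ ε ≤ p^{c₁ k}. Suppose there is some l ≤ k such that ‖D_Q h‖₂² ≤ 2ε for every (l+1)-tuple Q. Then there exists a function g : S(n,p) → ℤ of degree ≤ l such that ‖D_P(h − g)‖₂² ≤ 2ε for every l-tuple P. -/

import Mathlib

open Finset
open scoped Classical

/-- A point of the slice `S(n,p)`: a Boolean vector whose number of ones equals `p * n`. -/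
abbrev SlicePoint (n : ℕ) (p : ℝ) : Type :=
  {x : Fin n → Bool // ((Finset.univ.filter (fun i => x i = true)).card : ℝ) = p * n}

variable {n : ℕ} {p : ℝ}

/-- Expectation with respect to the uniform measure on the slice. -/
noncomputable def sExp (f : SlicePoint n p → ℝ) : ℝ :=
  (∑ x : SlicePoint n p, f x) / (Fintype.card (SlicePoint n p) : ℝ)

/-- The inner product `⟨f,g⟩ = E_x [f x * g x]` on functions on the slice. -/
noncomputable def sInner (f g : SlicePoint n p → ℝ) : ℝ :=
  sExp (fun x => f x * g x)

/-- `‖f‖₂² = E_x [f x ^ 2]`. -/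
noncomputable def sNormSq (f : SlicePoint n p → ℝ) : ℝ := sInner f f

/-- `‖f‖₂`. -/
noncomputable def sNorm (f : SlicePoint n p → ℝ) : ℝ := Real.sqrt (sNormSq f)

/-- The `i`-th coordinate of a slice point, viewed as a real number in `{0,1}`. -/
def coordR (x : SlicePoint n p) (i : Fin n) : ℝ := if x.1 i then 1 else 0

/-- `AND_T (x) = ∏_{i ∈ T} x_i`. -/
def andT (T : Finset (Fin n)) : SlicePoint n p → ℝ := fun x => ∏ i ∈ T, coordR x i

/-- The space `L_k` of functions of degree at most `k` on the slice. -/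
def degLE (n : ℕ) (p : ℝ) (k : ℕ) : Submodule ℝ (SlicePoint n p → ℝ) :=
  Submodule.span ℝ {g | ∃ T : Finset (Fin n), T.card ≤ k ∧ g = andT T}

/-- The space `L_{k-1}` (i.e. spanned by `AND_T` with `|T| < k`). -/
def degLT (n : ℕ) (p : ℝ) (k : ℕ) : Submodule ℝ (SlicePoint n p → ℝ) :=
  Submodule.span ℝ {g | ∃ T : Finset (Fin n), T.card < k ∧ g = andT T}

/-- `fk` is the orthogonal projection `f^{≤ k}` of `f` onto `L_k`. -/
def IsLowProj (n : ℕ) (p : ℝ) (k : ℕ) (f fk : SlicePoint n p → ℝ) : Prop :=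
  fk ∈ degLE n p k ∧ ∀ g ∈ degLE n p k, sInner (f - fk) g = 0

/-- `fk` is the orthogonal projection of `f` onto the span of `AND_T`, `|T| < k`. -/
def IsLowProjLT (n : ℕ) (p : ℝ) (k : ℕ) (f fk : SlicePoint n p → ℝ) : Prop :=
  fk ∈ degLT n p k ∧ ∀ g ∈ degLT n p k, sInner (f - fk) g = 0

/-- `Pr_x [f x ≠ g x]` under the uniform measure on the slice. -/
noncomputable def probNe (f g : SlicePoint n p → ℝ) : ℝ :=
  sExp (fun x => if f x = g x then 0 else 1)

/-- The action of a permutation on a slice point: `(x^π)_{π i} = x_i`. -/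
def permPt (π : Equiv.Perm (Fin n)) (x : SlicePoint n p) : SlicePoint n p :=
  ⟨fun i => x.1 (π.symm i), by
    have h : (Finset.univ.filter (fun i => x.1 (π.symm i) = true)) =
        (Finset.univ.filter (fun i => x.1 i = true)).map π.toEmbedding := by
      ext i
      simp [Finset.mem_map_equiv]
    rw [h, Finset.card_map]
    exact x.2⟩

/-- The derivative operator `D_{ij} f = (f - f^{(ij)})/2`. -/
noncomputable def Dij (i j : Fin n) (f : SlicePoint n p → ℝ) : SlicePoint n p → ℝ :=
  fun x => (f x - f (permPt (Equiv.swap i j) x)) / 2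

/-- The derivative operator `D_P` associated with a set `P` of pairs,
obtained by composing the `D_{ab}` for `(a,b) ∈ P` (these commute for tuples). -/
noncomputable def DP (P : Finset (Fin n × Fin n)) (f : SlicePoint n p → ℝ) :
    SlicePoint n p → ℝ :=
  P.toList.foldr (fun q g => Dij q.1 q.2 g) f

/-- `P` is a `k`-tuple: `k` pairs `(a,b)` with `a < b`, all `2k` entries distinct. -/
def IsTuple {n : ℕ} (k : ℕ) (P : Finset (Fin n × Fin n)) : Prop :=
  P.card = k ∧ (∀ q ∈ P, q.1 < q.2) ∧
    ∀ q ∈ P, ∀ r ∈ P, q ≠ r →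
      q.1 ≠ r.1 ∧ q.1 ≠ r.2 ∧ q.2 ≠ r.1 ∧ q.2 ≠ r.2

/-- `P` is shifted: for every pair `(a,b) ∈ P`, every `a' ≤ a` occurs as an entry of `P`. -/
def IsShifted {n : ℕ} (P : Finset (Fin n × Fin n)) : Prop :=
  ∀ q ∈ P, ∀ a : Fin n, a ≤ q.1 → ∃ r ∈ P, r.1 = a ∨ r.2 = a

/-- `P` is sorted: `a_i < a_j ↔ b_i < b_j`. -/
def IsSorted {n : ℕ} (P : Finset (Fin n × Fin n)) : Prop :=
  ∀ q ∈ P, ∀ r ∈ P, (q.1 < r.1 ↔ q.2 < r.2)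

/-- `Ψ_P (x) = ∏_{(a,b) ∈ P} (x_b - x_a)`. -/
def PsiP (P : Finset (Fin n × Fin n)) : SlicePoint n p → ℝ :=
  fun x => ∏ q ∈ P, (coordR x q.2 - coordR x q.1)

/-- The slice Laplacian `L f = f - (1 / C(n,2)) ∑_{i<j} f^{(ij)}`. -/
noncomputable def sliceLap (f : SlicePoint n p → ℝ) : SlicePoint n p → ℝ :=
  fun x => f x -
    (∑ q ∈ Finset.univ.filter (fun q : Fin n × Fin n => q.1 < q.2),
      f (permPt (Equiv.swap q.1 q.2) x)) / (n.choose 2 : ℝ)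

/-- The noise operator `H_t = exp (-t L) = ∑_l (-t)^l L^l / l!`. -/
noncomputable def Ht (t : ℝ) (f : SlicePoint n p → ℝ) : SlicePoint n p → ℝ :=
  fun x => ∑' l : ℕ, ((-t) ^ l / (l.factorial : ℝ)) * (sliceLap^[l] f) x

/-- The averaging operator `E_I f (x) = E_{Q ∼ S_I} [f (x^Q)]`, averaging over a uniformly
random permutation of the coordinates in `I` (fixing the coordinates outside `I`). -/
noncomputable def avgI (I : Finset (Fin n)) (f : SlicePoint n p → ℝ) : SlicePoint n p → ℝ :=
  fun x => (∑ σ : {σ : Equiv.Perm (Fin n) // ∀ i ∉ I, σ i = i}, f (permPt σ.1 x)) /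
    (Fintype.card {σ : Equiv.Perm (Fin n) // ∀ i ∉ I, σ i = i} : ℝ)

/-- The conditional variance `V_I (f) = ‖f - E_I f‖₂²`. -/
noncomputable def condVar (I : Finset (Fin n)) (f : SlicePoint n p → ℝ) : ℝ :=
  sNormSq (f - avgI I f)

/-- Expectation with respect to the uniform measure on the discrete cube. -/
noncomputable def cExp {n : ℕ} (f : (Fin n → Bool) → ℝ) : ℝ :=
  (∑ x : Fin n → Bool, f x) / (2 ^ n : ℝ)

/-- The Fourier–Walsh coefficient `f̂ (S) = E_x [f x * χ_S x]`. -/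
noncomputable def walshCoeff {n : ℕ} (f : (Fin n → Bool) → ℝ) (S : Finset (Fin n)) : ℝ :=
  cExp (fun x => f x * ∏ i ∈ S, (if x i then (-1 : ℝ) else 1))

/-- The Fourier weight of `f` beyond degree `k`: `W^{>k} (f) = ∑_{|S| > k} f̂(S)²`. -/
noncomputable def WAbove {n : ℕ} (k : ℕ) (f : (Fin n → Bool) → ℝ) : ℝ :=
  ∑ S ∈ Finset.univ.filter (fun S : Finset (Fin n) => k < S.card), walshCoeff f S ^ 2

/-- `Pr_x [f x ≠ g x]` under the uniform measure on the cube. -/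
noncomputable def cProbNe {n : ℕ} (f g : (Fin n → Bool) → ℝ) : ℝ :=
  cExp (fun x => if f x = g x then 0 else 1)

/-- The action of a permutation on a point of the cube: `(x^π)_{π i} = x_i`. -/
def cPerm {n : ℕ} (π : Equiv.Perm (Fin n)) (x : Fin n → Bool) : Fin n → Bool :=
  fun i => x (π.symm i)

/-- The derivative operator on the cube. -/
noncomputable def cDij {n : ℕ} (i j : Fin n) (f : (Fin n → Bool) → ℝ) :
    (Fin n → Bool) → ℝ :=
  fun x => (f x - f (cPerm (Equiv.swap i j) x)) / 2

/-!
For disjoint pairs `L = [(a₁, b₁), …, (a_l, b_l)]` put `Ψ_L = ∏ (x_{a_i} - x_{b_i})`.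

*Gap.* The noise operator of the uniform cube is carried to the slice by averaging a function over
the slice points below a random point of the cube. The resulting operator `R` is hypercontractive,
by Bonami's inequality on the cube, and commutes with permutations. So it acts on functions of
exact degree `d`, up to lower degree, as a scalar, and testing on `Ψ_L` bounds this scalar below by
a power of `p`. Hence a function with values in `2⁻ˡ ℤ` that lies within `ε` of degree `≤ k` either
has norm squared at most `2ε`, or has norm squared greater than `p^(28k)`.

*Rounding.* By the gap, `D_L h` is almost invariant under every permutation of the coordinates
outside `L`; its average over them is a multiple of `Ψ_L`, whose coefficient is close to a number
`c(L) / 2^l` with `c(L)` an integer. The unrounded coefficients satisfy the linear relations between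
the polynomials `Ψ_L`, and the rounding errors are so small that the integers `c(L)` satisfy them
exactly. This forces `c(L)` to be the alternating sum, over the ways to choose one entry from each
pair of `L`, of some integer function `u` of `l`-sets. Then `g = ∑ u(T) AND_T` has
`D_L g = c(L) 2⁻ˡ Ψ_L`, so `D_L (h - g)` is small, and by the gap its norm squared is at most `2ε`.
-/

/-! ### Garnir relations for pairings -/

section Pairings

variable {ι M : Type*} [AddCommGroup M] {A B : Finset ι} {k : ℕ} {x z : ι}

/-- `DistinctIn A s`: the points of the list `s` are distinct elements of `A`. -/
def DistinctIn (A : Finset ι) (s : List ι) : Prop := s.Nodup ∧ ∀ i ∈ s, i ∈ A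

lemma distinctIn_cons {s : List ι} : DistinctIn A (x :: s) ↔ x ∈ A ∧ x ∉ s ∧ DistinctIn A s := by
  simp only [DistinctIn, List.nodup_cons, List.mem_cons, forall_eq_or_imp]
  tauto

lemma DistinctIn.perm {s t : List ι} (hs : DistinctIn A s) (h : s.Perm t) : DistinctIn A t :=
  ⟨h.nodup_iff.1 hs.1, fun i hi => hs.2 i (h.mem_iff.2 hi)⟩

lemma DistinctIn.mono {s : List ι} (hAB : A ⊆ B) (h : DistinctIn A s) : DistinctIn B s :=
  ⟨h.1, fun i hi => hAB (h.2 i hi)⟩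

lemma DistinctIn.of_insert {s : List ι} (h : DistinctIn (insert z A) s) (hz : z ∉ s) :
    DistinctIn A s :=
  ⟨h.1, fun i hi => (mem_insert.1 (h.2 i hi)).resolve_left fun e => hz (e ▸ hi)⟩

lemma DistinctIn.cons_insert {s : List ι} (h : DistinctIn A s) (hz : z ∉ A) :
    DistinctIn (insert z A) (z :: s) :=
  distinctIn_cons.2 ⟨mem_insert_self z A, fun hzs => hz (h.2 z hzs), h.mono (subset_insert z A)⟩

/-- The points matched by a list of pairs. -/
def entries (L : List (ι × ι)) : List ι := L.flatMap fun q => [q.1, q.2]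

variable {L L' : List (ι × ι)}

@[simp] lemma entries_nil : entries ([] : List (ι × ι)) = [] := rfl

@[simp] lemma entries_cons (q : ι × ι) (L : List (ι × ι)) :
    entries (q :: L) = q.1 :: q.2 :: entries L := rfl

lemma entries_perm (h : L.Perm L') : (entries L).Perm (entries L') :=
  h.flatMap_right _

/-- The alternating sum `∑ ± u (T ∪ {one endpoint of each pair of L})`, where choosing the second
endpoint of a pair contributes a sign `-1`. -/
noncomputable def altSum (u : Finset ι → M) : List (ι × ι) → Finset ι → M
  | [], T => u T
  | q :: L, T => altSum u L (insert q.1 T) - altSum u L (insert q.2 T)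

lemma altSum_perm (u : Finset ι → M) (h : L.Perm L') (T : Finset ι) :
    altSum u L T = altSum u L' T := by
  induction h generalizing T with
  | nil => rfl
  | cons q _ ih => simp only [altSum, ih]
  | swap q r L =>
    simp only [altSum, insert_comm r.1, insert_comm r.2]
    abel
  | trans _ _ ih₁ ih₂ => rw [ih₁, ih₂]

lemma altSum_add (u v : Finset ι → M) (L : List (ι × ι)) (T : Finset ι) :
    altSum (u + v) L T = altSum u L T + altSum v L T := by
  induction L generalizing T with
  | nil => rfl
  | cons q L ih => simp only [altSum, ih]; abel

lemma altSum_neg (u : Finset ι → M) (L : List (ι × ι)) (T : Finset ι) :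
    altSum (-u) L T = -altSum u L T := by
  induction L generalizing T with
  | nil => rfl
  | cons q L ih => simp only [altSum, ih]; abel

@[simp] lemma altSum_zero (L : List (ι × ι)) (T : Finset ι) :
    altSum (0 : Finset ι → M) L T = 0 := by
  induction L generalizing T with
  | nil => rfl
  | cons q L ih => simp only [altSum, ih, sub_zero]

lemma altSum_congr_of_notMem {u v : Finset ι → M} (huv : ∀ T, z ∉ T → u T = v T)
    (hL : z ∉ entries L) {T : Finset ι} (hz : z ∉ T) : altSum u L T = altSum v L T := by
  induction L generalizing T with
  | nil => exact huv T hz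
  | cons q L ih =>
    simp only [entries_cons, List.mem_cons, not_or] at hL
    simp only [altSum]
    rw [ih hL.2.2 (by simp [hz, hL.1]), ih hL.2.2 (by simp [hz, hL.2.1])]

lemma altSum_eq_altSum_erase {u v : Finset ι → M} (huv : ∀ T, z ∈ T → u T = v (T.erase z))
    (hL : z ∉ entries L) {T : Finset ι} (hz : z ∈ T) :
    altSum u L T = altSum v L (T.erase z) := by
  induction L generalizing T with
  | nil => exact huv T hz
  | cons q L ih =>
    simp only [entries_cons, List.mem_cons, not_or] at hL
    simp only [altSum]
    rw [ih hL.2.2 (by simp [hz]), ih hL.2.2 (by simp [hz]),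
      erase_insert_of_ne (Ne.symm hL.1), erase_insert_of_ne (Ne.symm hL.2.1)]

lemma map_altSum {N : Type*} [AddCommGroup N] (φ : M →+ N) (u : Finset ι → M) (L : List (ι × ι))
    (T : Finset ι) : φ (altSum u L T) = altSum (φ ∘ u) L T := by
  induction L generalizing T with
  | nil => rfl
  | cons q L ih => simp only [altSum, map_sub, ih]

lemma altSum_congr_of_card {u v : Finset ι → M} (hL : (entries L).Nodup) {T : Finset ι}
    (hT : ∀ i ∈ entries L, i ∉ T) (huv : ∀ S, #S = #T + L.length → u S = v S) :
    altSum u L T = altSum v L T := by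
  induction L generalizing T with
  | nil => exact huv T rfl
  | cons q L ih =>
    simp only [entries_cons, List.nodup_cons, List.mem_cons, not_or, forall_eq_or_imp] at hL hT
    have hins {i : ι} (hiL : i ∉ entries L) (hiT : i ∉ T) :
        altSum u L (insert i T) = altSum v L (insert i T) := by
      refine ih hL.2.2 (fun j hj => ?_) fun S hS => huv S ?_
      · rw [mem_insert, not_or]
        exact ⟨ne_of_mem_of_not_mem hj hiL, hT.2.2 j hj⟩
      · rw [hS, card_insert_of_notMem hiT, List.length_cons, add_right_comm, add_assoc]
    rw [altSum, altSum, hins hL.1.2 hT.1, hins hL.2.1 hT.2.1]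

lemma altSum_prod {R : Type*} [CommRing R] (f : ι → R) (hL : (entries L).Nodup) {T : Finset ι}
    (hT : ∀ i ∈ entries L, i ∉ T) :
    altSum (fun S => ∏ i ∈ S, f i) L T = (∏ i ∈ T, f i) * (L.map fun q => f q.1 - f q.2).prod := by
  induction L generalizing T with
  | nil => simp [altSum]
  | cons q L ih =>
    simp only [entries_cons, List.nodup_cons, List.mem_cons, not_or, forall_eq_or_imp] at hL hT
    have hins {i : ι} (hiL : i ∉ entries L) (j : ι) (hj : j ∈ entries L) : j ∉ insert i T := by
      rw [mem_insert, not_or]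
      exact ⟨ne_of_mem_of_not_mem hj hiL, hT.2.2 j hj⟩
    rw [altSum, ih hL.2.2 (hins hL.1.2), ih hL.2.2 (hins hL.2.1), prod_insert hT.1,
      prod_insert hT.2.1, List.map_cons, List.prod_cons]
    ring

/-- `IsPairing A k L`: the list `L` consists of `k` pairs of points of `A`, all `2k` of them
distinct. -/
def IsPairing (A : Finset ι) (k : ℕ) (L : List (ι × ι)) : Prop :=
  DistinctIn A (entries L) ∧ L.length = k

lemma isPairing_cons {q : ι × ι} :
    IsPairing A (k + 1) (q :: L) ↔ DistinctIn A (q.1 :: q.2 :: entries L) ∧ L.length = k := by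
  simp [IsPairing]

lemma IsPairing.perm (h : IsPairing A k L) (hp : L.Perm L') : IsPairing A k L' :=
  ⟨h.1.perm (entries_perm hp), hp.length_eq ▸ h.2⟩

lemma IsPairing.mono (hAB : A ⊆ B) (h : IsPairing A k L) : IsPairing B k L := ⟨h.1.mono hAB, h.2⟩

lemma DistinctIn.isPairing_insert (h : DistinctIn A (x :: entries L)) (hz : z ∉ A)
    (hk : L.length = k) : IsPairing (insert z A) (k + 1) ((x, z) :: L) :=
  isPairing_cons.2 ⟨(h.cons_insert hz).perm (.swap x z _), hk⟩

/-- The relations between the values of `c` on the lists of `k` disjoint pairs in `A` that hold for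
`c = altSum u · ∅`; they are the Garnir relations of the Specht module of a two-row shape. -/
structure GarnirRelations (A : Finset ι) (k : ℕ) (c : List (ι × ι) → M) : Prop where
  perm : ∀ L L', L.Perm L' → IsPairing A k L → c L = c L'
  swap_pair : ∀ a b L, IsPairing A k ((a, b) :: L) → c ((b, a) :: L) = -c ((a, b) :: L)
  add_pair : ∀ a b e L, DistinctIn A (a :: b :: e :: entries L) → L.length + 1 = k →
    c ((a, e) :: L) = c ((a, b) :: L) + c ((b, e) :: L)
  plucker : ∀ a b e f L, DistinctIn A (a :: b :: e :: f :: entries L) → L.length + 2 = k →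
    c ((a, b) :: (e, f) :: L) + c ((b, e) :: (a, f) :: L) + c ((e, a) :: (b, f) :: L) = 0

/-- For `c` vanishing on the pairings of `A`, the common value of `c ((a, z) :: L)` over all
`a ∈ A` not matched by `L`; zero when there is no such `a`. -/
noncomputable def contraction (A : Finset ι) (z : ι) (c : List (ι × ι) → M)
    (L : List (ι × ι)) : M :=
  if h : ∃ a ∈ A, a ∉ entries L then c ((h.choose, z) :: L) else 0

lemma contraction_of_full {c : List (ι × ι) → M} (h : ¬∃ a ∈ A, a ∉ entries L) :
    contraction A z c L = 0 :=
  dif_neg h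

lemma contraction_perm_of_full {c : List (ι × ι) → M} (h : ¬∃ a ∈ A, a ∉ entries L)
    (hp : (entries L).Perm (entries L')) : contraction A z c L' = 0 :=
  contraction_of_full (by simpa only [hp.mem_iff] using h)

namespace GarnirRelations

variable {c : List (ι × ι) → M}

lemma mono (hAB : A ⊆ B) (h : GarnirRelations B k c) : GarnirRelations A k c where
  perm L L' hp hL := h.perm L L' hp (hL.mono hAB)
  swap_pair a b L hL := h.swap_pair a b L (hL.mono hAB)
  add_pair a b e L hL := h.add_pair a b e L (hL.mono hAB)
  plucker a b e f L hL := h.plucker a b e f L (hL.mono hAB)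

lemma sub_altSum (h : GarnirRelations A k c) (u : Finset ι → M) :
    GarnirRelations A k (fun L => c L - altSum u L ∅) where
  perm L L' hp hL := by rw [h.perm L L' hp hL, altSum_perm u hp]
  swap_pair a b L hL := by rw [h.swap_pair a b L hL]; simp only [altSum]; abel
  add_pair a b e L hL hk := by rw [h.add_pair a b e L hL hk]; simp only [altSum]; abel
  plucker a b e f L hL hk := by
    rw [← h.plucker a b e f L hL hk]
    simp only [altSum]
    rw [insert_comm e a, insert_comm f a, insert_comm e b, insert_comm f b, insert_comm a b,
      insert_comm f e]
    abel

section Contraction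

variable (hc : GarnirRelations (insert z A) (k + 1) c) (hz : z ∉ A)
  (h₀ : ∀ L, IsPairing A (k + 1) L → c L = 0)
include hc hz h₀

lemma contraction_eq (hx : DistinctIn A (x :: entries L)) (hk : L.length = k) :
    contraction A z c L = c ((x, z) :: L) := by
  have h : ∃ a ∈ A, a ∉ entries L := ⟨x, (distinctIn_cons.1 hx).1, (distinctIn_cons.1 hx).2.1⟩
  obtain ⟨hyA, hyL⟩ := h.choose_spec
  rw [contraction, dif_pos h]
  set y := h.choose
  obtain hyx | hyx := eq_or_ne y x
  · rw [hyx]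
  have hyxL : DistinctIn A (y :: x :: entries L) :=
    distinctIn_cons.2 ⟨hyA, by simp [hyx, hyL], hx⟩
  have hyxzL : DistinctIn (insert z A) (y :: x :: z :: entries L) :=
    (hyxL.cons_insert hz).perm ((List.Perm.swap y z _).trans (.cons y (.swap x z _)))
  rw [hc.add_pair y x z L hyxzL (by rw [hk]), h₀ _ (isPairing_cons.2 ⟨hyxL, hk⟩), zero_add]

lemma contraction_cons {q : ι × ι} (hx : DistinctIn A (x :: entries (q :: L)))
    (hk : (q :: L).length = k) : contraction A z c (q :: L) = c (q :: (x, z) :: L) := by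
  rw [contraction_eq hc hz h₀ hx hk]
  exact hc.perm _ _ (.swap q (x, z) L) (hx.isPairing_insert hz hk)

lemma contraction_swap_pair {a b : ι} (hL : IsPairing A k ((a, b) :: L)) :
    contraction A z c ((b, a) :: L) = -contraction A z c ((a, b) :: L) := by
  have hp : (entries ((a, b) :: L)).Perm (entries ((b, a) :: L)) := .swap b a _
  by_cases h : ∃ x ∈ A, x ∉ entries ((a, b) :: L)
  · obtain ⟨x, hxA, hxL⟩ := h
    have hx := distinctIn_cons.2 ⟨hxA, hxL, hL.1⟩
    rw [contraction_cons hc hz h₀ hx hL.2, contraction_cons hc hz h₀ (hx.perm (hp.cons x)) hL.2]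
    exact hc.swap_pair a b _ ((hx.isPairing_insert hz hL.2).perm (.swap (a, b) (x, z) L))
  · rw [contraction_of_full h, contraction_perm_of_full h hp, neg_zero]

lemma contraction_add_pair {a b e : ι} (hL : DistinctIn A (a :: b :: e :: entries L))
    (hk : L.length + 1 = k) :
    contraction A z c ((a, e) :: L) =
      contraction A z c ((a, b) :: L) + contraction A z c ((b, e) :: L) := by
  have hbae : DistinctIn A (b :: a :: e :: entries L) := hL.perm (.swap b a _)
  have heab : DistinctIn A (e :: a :: b :: entries L) :=
    hL.perm ((List.Perm.cons a (.swap e b _)).trans (.swap e a _))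
  have habez : DistinctIn (insert z A) (a :: b :: e :: z :: entries L) :=
    (hL.cons_insert hz).perm
      ((List.Perm.swap a z _).trans
        (.cons a ((List.Perm.swap b z _).trans (.cons b (.swap e z _)))))
  have hpair : IsPairing (insert z A) (k + 1) ((a, e) :: (b, z) :: L) :=
    (hbae.isPairing_insert (L := (a, e) :: L) hz hk).perm (.swap (a, e) (b, z) L)
  have hplucker := hc.plucker a b e z L habez (by omega)
  rw [hc.swap_pair a e _ hpair] at hplucker
  rw [contraction_cons hc hz h₀ hbae hk, contraction_cons hc hz h₀ heab hk,
    contraction_cons hc hz h₀ hL hk, eq_comm, ← sub_eq_zero, ← hplucker]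
  abel

lemma contraction_plucker {a b e f : ι} (hL : DistinctIn A (a :: b :: e :: f :: entries L))
    (hk : L.length + 2 = k) :
    contraction A z c ((a, b) :: (e, f) :: L) + contraction A z c ((b, e) :: (a, f) :: L) +
      contraction A z c ((e, a) :: (b, f) :: L) = 0 := by
  have hp₁ : (entries ((a, b) :: (e, f) :: L)).Perm (entries ((b, e) :: (a, f) :: L)) :=
    (List.Perm.swap b a _).trans (.cons b (.swap e a _))
  have hp₂ : (entries ((a, b) :: (e, f) :: L)).Perm (entries ((e, a) :: (b, f) :: L)) :=
    (List.Perm.cons a (.swap e b _)).trans (.swap e a _)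
  by_cases h : ∃ x ∈ A, x ∉ entries ((a, b) :: (e, f) :: L)
  · obtain ⟨x, hxA, hxL⟩ := h
    have hx := distinctIn_cons.2 ⟨hxA, hxL, hL⟩
    have hcons {q r : ι × ι} (hqr : DistinctIn A (x :: entries (q :: r :: L))) :
        contraction A z c (q :: r :: L) = c (q :: r :: (x, z) :: L) := by
      rw [contraction_eq hc hz h₀ hqr hk]
      exact hc.perm _ _ ((List.Perm.swap q (x, z) _).trans (.cons q (.swap r (x, z) L)))
        (hqr.isPairing_insert hz hk)
    rw [hcons hx, hcons (hx.perm (hp₁.cons x)), hcons (hx.perm (hp₂.cons x))]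
    refine hc.plucker a b e f _ ((hx.cons_insert hz).perm ?_) (by simp [← hk])
    exact ((List.Perm.swap x z _).trans (List.perm_append_comm (l₁ := [x, z])
      (l₂ := [a, b, e, f]) |>.append_right (entries L)))
  · rw [contraction_of_full h, contraction_perm_of_full h hp₁, contraction_perm_of_full h hp₂,
      add_zero, add_zero]

lemma garnirRelations_contraction : GarnirRelations A k (contraction A z c) where
  perm L L' hp hL := by
    by_cases h : ∃ x ∈ A, x ∉ entries L
    · obtain ⟨x, hxA, hxL⟩ := h
      have hx := distinctIn_cons.2 ⟨hxA, hxL, hL.1⟩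
      rw [contraction_eq hc hz h₀ hx hL.2,
        contraction_eq hc hz h₀ (hx.perm ((entries_perm hp).cons x)) (hL.perm hp).2]
      exact hc.perm _ _ (hp.cons _) (hx.isPairing_insert hz hL.2)
    · rw [contraction_of_full h, contraction_perm_of_full h (entries_perm hp)]
  swap_pair _ _ _ hL := contraction_swap_pair hc hz h₀ hL
  add_pair _ _ _ _ hL hk := contraction_add_pair hc hz h₀ hL hk
  plucker _ _ _ _ _ hL hk := contraction_plucker hc hz h₀ hL hk

end Contraction

/-- The function `T ↦ -u (T \ z)` on the sets containing `z`, extended by zero. -/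
noncomputable def consNeg (z : ι) (u : Finset ι → M) (T : Finset ι) : M :=
  if z ∈ T then -u (T.erase z) else 0

lemma altSum_consNeg_of_notMem (u : Finset ι → M) (hz : z ∉ entries L) {T : Finset ι}
    (hT : z ∉ T) : altSum (consNeg z u) L T = 0 := by
  rw [altSum_congr_of_notMem (u := consNeg z u) (v := 0) (fun T hT => if_neg hT) hz hT, altSum_zero]

lemma altSum_consNeg_cons (u : Finset ι → M) (hx : x ≠ z) (hz : z ∉ entries L) :
    altSum (consNeg z u) ((x, z) :: L) ∅ = altSum u L ∅ := by
  have hzT : altSum (consNeg z u) L (insert z ∅) = -altSum u L ∅ := by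
    rw [altSum_eq_altSum_erase (u := consNeg z u) (v := -u) (fun T hT => if_pos hT) hz (by simp),
      altSum_neg, erase_insert (notMem_empty z)]
  rw [altSum, altSum_consNeg_of_notMem u hz (by simpa using hx.symm), hzT, zero_sub, neg_neg]

lemma eq_altSum_consNeg (hc : GarnirRelations (insert z A) (k + 1) c) (hz : z ∉ A)
    (h₀ : ∀ L, IsPairing A (k + 1) L → c L = 0) {u : Finset ι → M}
    (hu : ∀ L, IsPairing A k L → contraction A z c L = altSum u L ∅)
    (hL : IsPairing (insert z A) (k + 1) L) : c L = altSum (consNeg z u) L ∅ := by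
  have hcons {a : ι} {L : List (ι × ι)} (haL : IsPairing (insert z A) (k + 1) ((a, z) :: L)) :
      c ((a, z) :: L) = altSum (consNeg z u) ((a, z) :: L) ∅ := by
    obtain ⟨haL, hk⟩ := isPairing_cons.1 haL
    obtain ⟨-, hzaL, haL⟩ := distinctIn_cons.1 (haL.perm (.swap z a _))
    replace haL := haL.of_insert hzaL
    rw [List.mem_cons, not_or] at hzaL
    rw [altSum_consNeg_cons u (Ne.symm hzaL.1) hzaL.2, ← contraction_eq hc hz h₀ haL hk,
      hu L ⟨(distinctIn_cons.1 haL).2.2, hk⟩]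
  by_cases hzL : z ∈ entries L
  · obtain ⟨⟨a, b⟩, hq, hzq⟩ := List.mem_flatMap.1 hzL
    have hp := List.perm_cons_erase hq
    replace hL := hL.perm hp
    rw [hc.perm _ _ hp (hL.perm hp.symm), altSum_perm _ hp]
    simp only [List.mem_cons, List.not_mem_nil, or_false] at hzq
    obtain rfl | rfl := hzq
    · have hL' : IsPairing (insert z A) (k + 1) ((b, z) :: L.erase (z, b)) :=
        ⟨hL.1.perm (.swap b z _), hL.2⟩
      rw [hc.swap_pair b z _ hL', hcons hL', altSum, altSum, neg_sub]
    · exact hcons hL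
  · rw [altSum_consNeg_of_notMem u hzL (notMem_empty z)]
    exact h₀ L ⟨hL.1.of_insert hzL, hL.2⟩

theorem exists_eq_altSum (hc : GarnirRelations A k c) :
    ∃ u : Finset ι → M, ∀ L, IsPairing A k L → c L = altSum u L ∅ := by
  induction A using Finset.induction_on generalizing k c with
  | empty =>
    refine ⟨fun _ => c [], fun L hL => ?_⟩
    cases L with
    | nil => rfl
    | cons q L => exact absurd (hL.1.2 q.1 (by simp)) (notMem_empty _)
  | insert z A hz ih =>
    cases k with
    | zero =>
      refine ⟨fun _ => c [], fun L hL => ?_⟩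
      rw [List.length_eq_zero_iff.1 hL.2, altSum]
    | succ k =>
      obtain ⟨u₀, hu₀⟩ := ih (hc.mono (subset_insert z A))
      set v₀ : Finset ι → M := fun T => if z ∈ T then 0 else u₀ T
      have hc₀ := hc.sub_altSum v₀
      have hvanish (L : List (ι × ι)) (hL : IsPairing A (k + 1) L) : c L - altSum v₀ L ∅ = 0 := by
        have hzL : z ∉ entries L := fun h => hz (hL.1.2 z h)
        rw [hu₀ L hL, altSum_congr_of_notMem (u := v₀) (fun T hT => if_neg hT) hzL (notMem_empty z),
          sub_self]
      obtain ⟨u₁, hu₁⟩ := ih (garnirRelations_contraction hc₀ hz hvanish)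
      refine ⟨v₀ + consNeg z u₁, fun L hL => ?_⟩
      rw [altSum_add, ← eq_altSum_consNeg hc₀ hz hvanish hu₁ hL, add_sub_cancel]

end GarnirRelations

end Pairings

/-! ### The noise operator on the discrete cube -/

section Cube

variable {f g : (Fin n → Bool) → ℝ} {ρ : ℝ}

lemma cExp_add (f g : (Fin n → Bool) → ℝ) : cExp (f + g) = cExp f + cExp g := by
  simp only [cExp, Pi.add_apply, sum_add_distrib, add_div]

lemma cExp_smul (c : ℝ) (f : (Fin n → Bool) → ℝ) : cExp (c • f) = c * cExp f := by
  simp only [cExp, Pi.smul_apply, smul_eq_mul, ← mul_sum, mul_div_assoc]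

lemma cExp_mono (h : f ≤ g) : cExp f ≤ cExp g :=
  div_le_div_of_nonneg_right (sum_le_sum fun x _ => h x) (by positivity)

lemma cExp_nonneg (h : 0 ≤ f) : 0 ≤ cExp f :=
  div_nonneg (sum_nonneg fun x _ => h x) (by positivity)

lemma cExp_mul_sq_le (f g : (Fin n → Bool) → ℝ) :
    cExp (f * g) ^ 2 ≤ cExp (f ^ 2) * cExp (g ^ 2) := by
  simp only [cExp, Pi.mul_apply, Pi.pow_apply, div_pow, div_mul_div_comm, ← sq]
  gcongr
  exact sum_mul_sq_le_sq_mul_sq _ _ _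

lemma sum_cube_succ (F : (Fin (n + 1) → Bool) → ℝ) :
    ∑ y, F y = ∑ y, F (Fin.cons true y) + ∑ y, F (Fin.cons false y) := by
  rw [← (Fin.consEquiv fun _ => Bool).sum_comp, Fintype.sum_prod_type, Fintype.sum_bool]
  rfl

lemma cExp_succ (f : (Fin (n + 1) → Bool) → ℝ) :
    cExp f = (cExp (fun y => f (Fin.cons true y)) + cExp fun y => f (Fin.cons false y)) / 2 := by
  simp only [cExp, sum_cube_succ f, pow_succ]
  field_simp

/-- The noise operator `N_ρ` on the uniform cube: `(N_ρ f) y` is the expectation of `f` at the point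
obtained from `y` by rerandomizing each coordinate independently with probability `1 - ρ`. -/
noncomputable def cubeNoise (ρ : ℝ) : ((Fin n → Bool) → ℝ) →ₗ[ℝ] ((Fin n → Bool) → ℝ) :=
  Matrix.mulVecLin fun y y' => ∏ i, if y i = y' i then (1 + ρ) / 2 else (1 - ρ) / 2

lemma cubeNoise_apply (ρ : ℝ) (f : (Fin n → Bool) → ℝ) (y : Fin n → Bool) :
    cubeNoise ρ f y = ∑ y', (∏ i, if y i = y' i then (1 + ρ) / 2 else (1 - ρ) / 2) * f y' :=
  rfl

lemma cubeNoise_cons (f : (Fin (n + 1) → Bool) → ℝ) (b : Bool) (y : Fin n → Bool) :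
    cubeNoise ρ f (Fin.cons b y) = (1 + ρ) / 2 * cubeNoise ρ (fun y => f (Fin.cons b y)) y +
      (1 - ρ) / 2 * cubeNoise ρ (fun y => f (Fin.cons (!b) y)) y := by
  simp only [cubeNoise_apply, sum_cube_succ, Fin.prod_univ_succ, Fin.cons_zero, Fin.cons_succ,
    mul_assoc, ← mul_sum]
  cases b <;> simp [add_comm]

/-- The average of `f` over its first coordinate. -/
noncomputable def headAvg (f : (Fin (n + 1) → Bool) → ℝ) : (Fin n → Bool) → ℝ :=
  (1 / 2 : ℝ) • ((fun y => f (Fin.cons true y)) + fun y => f (Fin.cons false y))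

/-- The derivative of `f` in its first coordinate; together with `headAvg` it decomposes `f` in the
inductive proof of hypercontractivity. -/
noncomputable def headDiff (f : (Fin (n + 1) → Bool) → ℝ) : (Fin n → Bool) → ℝ :=
  (1 / 2 : ℝ) • ((fun y => f (Fin.cons true y)) - fun y => f (Fin.cons false y))

lemma cExp_sq_succ (f : (Fin (n + 1) → Bool) → ℝ) :
    cExp (f ^ 2) = cExp (headAvg f ^ 2) + cExp (headDiff f ^ 2) := by
  rw [cExp_succ, ← cExp_add, ← cExp_add, div_eq_inv_mul, ← cExp_smul]
  congr 1
  funext y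
  simp only [headAvg, headDiff, Pi.add_apply, Pi.sub_apply, Pi.pow_apply, Pi.smul_apply,
    smul_eq_mul]
  ring

lemma cExp_cubeNoise_pow_four_succ (ρ : ℝ) (f : (Fin (n + 1) → Bool) → ℝ) :
    cExp (cubeNoise ρ f ^ 4) = cExp (cubeNoise ρ (headAvg f) ^ 4) +
      6 * ρ ^ 2 * cExp (cubeNoise ρ (headAvg f) ^ 2 * cubeNoise ρ (headDiff f) ^ 2) +
      ρ ^ 4 * cExp (cubeNoise ρ (headDiff f) ^ 4) := by
  rw [cExp_succ, ← cExp_add, div_eq_inv_mul, ← cExp_smul, ← cExp_smul, ← cExp_smul, ← cExp_add,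
    ← cExp_add]
  congr 1
  funext y
  simp only [headAvg, headDiff, map_smul, map_add, map_sub, Pi.add_apply, Pi.sub_apply,
    Pi.mul_apply, Pi.pow_apply, Pi.smul_apply, smul_eq_mul, cubeNoise_cons, Bool.not_true,
    Bool.not_false]
  ring

lemma cExp_sq_mul_sq_le {s t : ℝ} (hs : 0 ≤ s) (ht : 0 ≤ t) (hf : cExp (f ^ 4) ≤ s ^ 2)
    (hg : cExp (g ^ 4) ≤ t ^ 2) : cExp (f ^ 2 * g ^ 2) ≤ s * t := by
  refine (abs_le_of_sq_le_sq' ?_ (mul_nonneg hs ht)).2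
  calc cExp (f ^ 2 * g ^ 2) ^ 2 ≤ cExp (f ^ 4) * cExp (g ^ 4) := by
        have := cExp_mul_sq_le (f ^ 2) (g ^ 2)
        rwa [← pow_mul, ← pow_mul] at this
    _ ≤ s ^ 2 * t ^ 2 :=
        mul_le_mul hf hg (cExp_nonneg fun y => Even.pow_nonneg (by decide) (g y)) (sq_nonneg s)
    _ = (s * t) ^ 2 := (mul_pow s t 2).symm

/-- Bonami's hypercontractive inequality from `L²` to `L⁴`. -/
theorem cExp_cubeNoise_pow_four_le (hρ : 3 * ρ ^ 2 ≤ 1) (f : (Fin n → Bool) → ℝ) :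
    cExp (cubeNoise ρ f ^ 4) ≤ cExp (f ^ 2) ^ 2 := by
  induction n with
  | zero =>
    simp only [cExp, univ_unique, sum_singleton, pow_zero, div_one, Pi.pow_apply, cubeNoise_apply,
      univ_eq_empty, prod_empty, one_mul, ← pow_mul]
    exact le_rfl
  | succ n ih =>
    set a := headAvg f
    set d := headDiff f
    have hsq (g : (Fin n → Bool) → ℝ) : 0 ≤ cExp (g ^ 2) := cExp_nonneg fun y => sq_nonneg (g y)
    have hmix := cExp_sq_mul_sq_le (hsq a) (hsq d) (ih a) (ih d)
    have hmix₀ : 0 ≤ cExp (cubeNoise ρ a ^ 2 * cubeNoise ρ d ^ 2) :=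
      cExp_nonneg fun y => mul_nonneg (sq_nonneg _) (sq_nonneg _)
    have hd₀ : 0 ≤ cExp (cubeNoise ρ d ^ 4) := cExp_nonneg fun y => Even.pow_nonneg (by decide) _
    have hρ₂ : 6 * ρ ^ 2 ≤ 2 := by linarith
    have hρ₄ : ρ ^ 4 ≤ 1 := by nlinarith [sq_nonneg ρ]
    calc cExp (cubeNoise ρ f ^ 4)
        ≤ cExp (cubeNoise ρ a ^ 4) + 2 * cExp (cubeNoise ρ a ^ 2 * cubeNoise ρ d ^ 2) +
            1 * cExp (cubeNoise ρ d ^ 4) := by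
          rw [cExp_cubeNoise_pow_four_succ]
          gcongr
      _ ≤ cExp (a ^ 2) ^ 2 + 2 * (cExp (a ^ 2) * cExp (d ^ 2)) + 1 * cExp (d ^ 2) ^ 2 := by
          gcongr
          exacts [ih a, ih d]
      _ = cExp (f ^ 2) ^ 2 := by rw [cExp_sq_succ f]; ring

/-- The Walsh character `χ_S`. -/
def walsh (S : Finset (Fin n)) : (Fin n → Bool) → ℝ := ∏ i ∈ S, fun y => if y i then -1 else 1

lemma cubeNoise_walsh (ρ : ℝ) (S : Finset (Fin n)) : cubeNoise ρ (walsh S) = ρ ^ #S • walsh S := by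
  funext y
  have hprod (z : Fin n → Bool) :
      walsh S z = ∏ i, if i ∈ S then (if z i then -1 else 1) else 1 := by
    rw [walsh, prod_apply, ← prod_filter (p := (· ∈ S)), filter_mem_eq_inter, univ_inter]
  have hpow : ρ ^ #S = ∏ i : Fin n, if i ∈ S then ρ else 1 := by
    rw [← prod_filter, filter_mem_eq_inter, univ_inter, prod_const]
  simp only [cubeNoise_apply, hprod, Pi.smul_apply, smul_eq_mul, hpow, ← prod_mul_distrib]
  rw [← Fintype.piFinset_univ, ← prod_univ_sum
    (f := fun i b => (if y i = b then (1 + ρ) / 2 else (1 - ρ) / 2) *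
      if i ∈ S then (if b then (-1 : ℝ) else 1) else 1)]
  refine prod_congr rfl fun i _ => ?_
  rw [Fintype.sum_bool]
  cases y i <;> by_cases hi : i ∈ S <;> simp only [hi, if_true, if_false, reduceCtorEq] <;> ring

/-- The function `Ψ_L y = ∏_{(a,b) ∈ L} (y_a - y_b)` on the cube. -/
def cubePsi (L : List (Fin n × Fin n)) (y : Fin n → Bool) : ℝ :=
  (L.map fun q => (if y q.1 then (1 : ℝ) else 0) - if y q.2 then 1 else 0).prod

lemma altSum_walsh {L : List (Fin n × Fin n)} (hL : (entries L).Nodup) :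
    altSum walsh L ∅ = (-2 : ℝ) ^ L.length • cubePsi L := by
  have hprod := altSum_prod (fun i (y : Fin n → Bool) => if y i then (-1 : ℝ) else 1) hL
    (T := ∅) (by simp)
  rw [prod_empty, one_mul] at hprod
  refine hprod.trans ?_
  clear hprod hL
  induction L with
  | nil => funext y; simp [cubePsi]
  | cons q L ih =>
    funext y
    simp only [List.map_cons, List.prod_cons, ih, cubePsi, Pi.mul_apply, Pi.sub_apply,
      Pi.smul_apply, smul_eq_mul, List.length_cons, pow_succ]
    split_ifs <;> ring

lemma cubeNoise_cubePsi {L : List (Fin n × Fin n)} (hL : (entries L).Nodup) :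
    cubeNoise ρ (cubePsi L) = ρ ^ L.length • cubePsi L := by
  have hscale : cubePsi L = (-2 : ℝ)⁻¹ ^ L.length • altSum walsh L ∅ := by
    rw [altSum_walsh hL, smul_smul, ← mul_pow]
    norm_num
  have hnoise : cubeNoise ρ (altSum walsh L ∅) = ρ ^ L.length • altSum walsh L ∅ := by
    calc cubeNoise ρ (altSum walsh L ∅)
        = altSum (fun S => cubeNoise ρ (walsh S)) L ∅ :=
          map_altSum (cubeNoise ρ).toAddMonoidHom walsh L ∅
      _ = altSum (fun S => ρ ^ L.length • walsh S) L ∅ :=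
          altSum_congr_of_card hL (by simp) fun S hS => by
            rw [cubeNoise_walsh, hS, card_empty, zero_add]
      _ = ρ ^ L.length • altSum walsh L ∅ :=
          (map_altSum (DistribSMul.toAddMonoidHom _ (ρ ^ L.length)) walsh L ∅).symm
  rw [hscale, map_smul, hnoise, smul_comm]

lemma cubePsi_sq_le_one (L : List (Fin n × Fin n)) (y : Fin n → Bool) : cubePsi L y ^ 2 ≤ 1 := by
  induction L with
  | nil => simp [cubePsi]
  | cons q L ih =>
    simp only [cubePsi, List.map_cons, List.prod_cons, mul_pow] at ih ⊢
    refine mul_le_one₀ ?_ (sq_nonneg _) ih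
    split_ifs <;> norm_num

lemma cExp_mul_cubeNoise (ρ : ℝ) (f g : (Fin n → Bool) → ℝ) :
    cExp (f * cubeNoise ρ g) = cExp (cubeNoise ρ f * g) := by
  simp only [cExp, Pi.mul_apply, cubeNoise_apply, mul_sum, sum_mul]
  rw [sum_comm]
  simp only [eq_comm, mul_left_comm, mul_comm]

lemma cubeNoise_comp_cPerm (ρ : ℝ) (π : Equiv.Perm (Fin n)) (f : (Fin n → Bool) → ℝ) :
    cubeNoise ρ (f ∘ cPerm π) = cubeNoise ρ f ∘ cPerm π := by
  funext y
  simp only [cubeNoise_apply, Function.comp_apply]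
  refine Fintype.sum_equiv (π.arrowCongr (Equiv.refl Bool)) _ _ fun y' => ?_
  congr 1
  exact (π.symm.prod_comp fun i => if y i = y' i then (1 + ρ) / 2 else (1 - ρ) / 2).symm

end Cube

/-! ### Functions on the slice -/

section Slice

variable {f g h : SlicePoint n p → ℝ} {k : ℕ}

@[simp] lemma permPt_val (π : Equiv.Perm (Fin n)) (x : SlicePoint n p) (i : Fin n) :
    (permPt π x).1 i = x.1 (π.symm i) :=
  rfl

lemma permPt_permPt (π σ : Equiv.Perm (Fin n)) (x : SlicePoint n p) :
    permPt π (permPt σ x) = permPt (π * σ) x :=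
  rfl

/-- The action of a permutation on the slice, as a bijection. -/
def permPtEquiv (π : Equiv.Perm (Fin n)) : SlicePoint n p ≃ SlicePoint n p where
  toFun := permPt π
  invFun := permPt π⁻¹
  left_inv x := by rw [permPt_permPt, inv_mul_cancel]; rfl
  right_inv x := by rw [permPt_permPt, mul_inv_cancel]; rfl

/-- The linear map `f ↦ f^π`. -/
noncomputable def permFun (π : Equiv.Perm (Fin n)) :
    (SlicePoint n p → ℝ) →ₗ[ℝ] (SlicePoint n p → ℝ) :=
  LinearMap.funLeft ℝ ℝ (permPt π)

lemma permFun_apply (π : Equiv.Perm (Fin n)) (f : SlicePoint n p → ℝ) (x : SlicePoint n p) :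
    permFun π f x = f (permPt π x) :=
  rfl

lemma permFun_permFun (π σ : Equiv.Perm (Fin n)) (f : SlicePoint n p → ℝ) :
    permFun π (permFun σ f) = permFun (σ * π) f :=
  rfl

@[simp] lemma permFun_one (f : SlicePoint n p → ℝ) : permFun 1 f = f := rfl

lemma permFun_mul (π : Equiv.Perm (Fin n)) (f g : SlicePoint n p → ℝ) :
    permFun π (f * g) = permFun π f * permFun π g :=
  rfl

lemma sExp_permFun (π : Equiv.Perm (Fin n)) (f : SlicePoint n p → ℝ) :
    sExp (permFun π f) = sExp f := by
  rw [sExp, sExp, ← (permPtEquiv π).sum_comp f]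
  rfl

lemma sExp_mono (h : f ≤ g) : sExp f ≤ sExp g :=
  div_le_div_of_nonneg_right (sum_le_sum fun x _ => h x) (Nat.cast_nonneg _)

lemma sExp_const [Nonempty (SlicePoint n p)] (c : ℝ) :
    sExp (fun _ : SlicePoint n p => c) = c := by
  rw [sExp, sum_const, card_univ, nsmul_eq_mul,
    mul_div_cancel_left₀ _ (Nat.cast_ne_zero.2 Fintype.card_ne_zero)]

lemma sInner_eq_dotProduct (f g : SlicePoint n p → ℝ) :
    sInner f g = f ⬝ᵥ g / Fintype.card (SlicePoint n p) :=
  rfl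

lemma sInner_comm (f g : SlicePoint n p → ℝ) : sInner f g = sInner g f := by
  rw [sInner_eq_dotProduct, dotProduct_comm, sInner_eq_dotProduct]

lemma sInner_add_left (f g h : SlicePoint n p → ℝ) :
    sInner (f + g) h = sInner f h + sInner g h := by
  simp only [sInner_eq_dotProduct, add_dotProduct, add_div]

lemma sInner_smul_left (c : ℝ) (f h : SlicePoint n p → ℝ) :
    sInner (c • f) h = c * sInner f h := by
  simp only [sInner_eq_dotProduct, smul_dotProduct, smul_eq_mul, mul_div_assoc]

lemma sInner_sub_left (f g h : SlicePoint n p → ℝ) :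
    sInner (f - g) h = sInner f h - sInner g h := by
  simp only [sInner_eq_dotProduct, sub_dotProduct, sub_div]

lemma sInner_add_right (f g h : SlicePoint n p → ℝ) :
    sInner h (f + g) = sInner h f + sInner h g := by
  simp only [sInner_eq_dotProduct, dotProduct_add, add_div]

lemma sInner_smul_right (c : ℝ) (f h : SlicePoint n p → ℝ) :
    sInner h (c • f) = c * sInner h f := by
  simp only [sInner_eq_dotProduct, dotProduct_smul, smul_eq_mul, mul_div_assoc]

lemma sInner_sub_right (f g h : SlicePoint n p → ℝ) :
    sInner h (f - g) = sInner h f - sInner h g := by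
  simp only [sInner_eq_dotProduct, dotProduct_sub, sub_div]

@[simp] lemma sInner_zero_right (f : SlicePoint n p → ℝ) : sInner f 0 = 0 := by
  simp [sInner_eq_dotProduct]

lemma sInner_permFun (π : Equiv.Perm (Fin n)) (f g : SlicePoint n p → ℝ) :
    sInner (permFun π f) (permFun π g) = sInner f g :=
  sExp_permFun π (f * g)

lemma sInner_permFun_left (π : Equiv.Perm (Fin n)) (f g : SlicePoint n p → ℝ) :
    sInner (permFun π f) g = sInner f (permFun π⁻¹ g) := by
  rw [← sInner_permFun π⁻¹, permFun_permFun, mul_inv_cancel, permFun_one]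

lemma sInner_sq_le (f g : SlicePoint n p → ℝ) : sInner f g ^ 2 ≤ sNormSq f * sNormSq g := by
  simp only [sNormSq, sInner, sExp, div_pow, div_mul_div_comm, ← sq]
  gcongr
  exact sum_mul_sq_le_sq_mul_sq _ _ _

lemma sNormSq_eq_sExp_sq (f : SlicePoint n p → ℝ) : sNormSq f = sExp (f ^ 2) := by
  simp only [sNormSq, sInner, sExp, Pi.pow_apply, sq]

lemma sNormSq_nonneg (f : SlicePoint n p → ℝ) : 0 ≤ sNormSq f :=
  div_nonneg (sum_nonneg fun x _ => mul_self_nonneg (f x)) (Nat.cast_nonneg _)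

lemma sNormSq_smul (c : ℝ) (f : SlicePoint n p → ℝ) : sNormSq (c • f) = c ^ 2 * sNormSq f := by
  rw [sNormSq, sInner_smul_left, sInner_smul_right, ← mul_assoc, ← sq, sNormSq]

lemma sNormSq_add (f g : SlicePoint n p → ℝ) :
    sNormSq (f + g) = sNormSq f + 2 * sInner f g + sNormSq g := by
  simp only [sNormSq, sInner_add_left, sInner_add_right, sInner_comm g f]
  ring

lemma sNormSq_sub (f g : SlicePoint n p → ℝ) :
    sNormSq (f - g) = sNormSq f - 2 * sInner f g + sNormSq g := by
  simp only [sNormSq, sInner_sub_left, sInner_sub_right, sInner_comm g f]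
  ring

lemma sNormSq_add_le (f g : SlicePoint n p → ℝ) :
    sNormSq (f + g) ≤ 2 * sNormSq f + 2 * sNormSq g := by
  linarith [sNormSq_add f g, sNormSq_sub f g, sNormSq_nonneg (f - g)]

lemma sNormSq_sub_le (f g : SlicePoint n p → ℝ) :
    sNormSq (f - g) ≤ 2 * sNormSq f + 2 * sNormSq g := by
  linarith [sNormSq_add f g, sNormSq_sub f g, sNormSq_nonneg (f + g)]

lemma sNormSq_permFun (π : Equiv.Perm (Fin n)) (f : SlicePoint n p → ℝ) :
    sNormSq (permFun π f) = sNormSq f :=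
  sInner_permFun π f f

lemma permFun_andT (π : Equiv.Perm (Fin n)) (T : Finset (Fin n)) :
    permFun π (andT T : SlicePoint n p → ℝ) = andT (T.map π.symm.toEmbedding) := by
  funext x
  simp only [permFun_apply, andT, prod_map]
  rfl

lemma andT_mem_degLE {T : Finset (Fin n)} (hT : #T ≤ k) :
    (andT T : SlicePoint n p → ℝ) ∈ degLE n p k :=
  Submodule.subset_span ⟨T, hT, rfl⟩

lemma degLT_succ (k : ℕ) : degLT n p (k + 1) = degLE n p k := by
  simp only [degLT, degLE, Nat.lt_succ_iff]

lemma degLT_zero : degLT n p 0 = ⊥ := by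
  simp [degLT]

lemma degLE_mono {k l : ℕ} (h : k ≤ l) : degLE n p k ≤ degLE n p l :=
  Submodule.span_mono fun _ ⟨T, hT, hg⟩ => ⟨T, hT.trans h, hg⟩

lemma degLT_le_degLE (k : ℕ) : degLT n p k ≤ degLE n p k :=
  Submodule.span_mono fun _ ⟨T, hT, hg⟩ => ⟨T, hT.le, hg⟩

lemma permFun_mem_degLE (π : Equiv.Perm (Fin n)) (hf : f ∈ degLE n p k) :
    permFun π f ∈ degLE n p k := by
  suffices degLE n p k ≤ (degLE n p k).comap (permFun π) from this hf
  refine Submodule.span_le.2 ?_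
  rintro _ ⟨T, hT, rfl⟩
  rw [SetLike.mem_coe, Submodule.mem_comap, permFun_andT]
  exact andT_mem_degLE (by rwa [card_map])

lemma permFun_mem_degLT (π : Equiv.Perm (Fin n)) (hf : f ∈ degLT n p k) :
    permFun π f ∈ degLT n p k := by
  cases k with
  | zero =>
    rw [degLT_zero, Submodule.mem_bot] at hf ⊢
    rw [hf, map_zero]
  | succ k =>
    rw [degLT_succ] at hf ⊢
    exact permFun_mem_degLE π hf

lemma exists_orthogonal_projection (W : Submodule ℝ (SlicePoint n p → ℝ))
    (f : SlicePoint n p → ℝ) : ∃ w ∈ W, ∀ g ∈ W, sInner (f - w) g = 0 := by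
  let e := WithLp.linearEquiv 2 ℝ (SlicePoint n p → ℝ)
  let W' : Submodule ℝ (EuclideanSpace ℝ (SlicePoint n p)) := W.comap e.toLinearMap
  refine ⟨e (W'.starProjection (e.symm f)), W'.starProjection_apply_mem _, fun g hg => ?_⟩
  have horth := W'.starProjection_inner_eq_zero (e.symm f) (e.symm g) hg
  rw [EuclideanSpace.inner_eq_star_dotProduct, star_trivial, dotProduct_comm] at horth
  rw [sInner_eq_dotProduct]
  exact div_eq_zero_iff.2 (.inl horth)

end Slice

section ColorCount

variable {C : Type*} {κ : Fin n → Option C} {x x' : SlicePoint n p} {i j : Fin n}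

/-- The number of ones of `x` among the coordinates of color `c`; coordinates of color `none` are
thought of as uncolored. -/
noncomputable def colorCount (κ : Fin n → Option C) (x : SlicePoint n p) (c : Option C) : ℕ :=
  #{i | κ i = c ∧ x.1 i = true}

lemma card_ones_eq (x x' : SlicePoint n p) :
    #{i | x.1 i = true} = #{i | x'.1 i = true} := by
  exact_mod_cast x.2.trans x'.2.symm

lemma colorCount_eq_of_some [Finite C]
    (hx : ∀ c, colorCount κ x (some c) = colorCount κ x' (some c)) :
    colorCount κ x = colorCount κ x' := by
  cases nonempty_fintype C
  have hsum (z : SlicePoint n p) : #{i | z.1 i = true} =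
      colorCount κ z none + ∑ c, colorCount κ z (some c) := by
    rw [← Fintype.sum_option fun c => colorCount κ z c,
      card_eq_sum_card_fiberwise (f := κ) (t := univ) fun _ _ => mem_univ _]
    simp only [filter_filter, colorCount, and_comm]
  have htotal := card_ones_eq x x'
  rw [hsum, hsum, Fintype.sum_congr _ _ hx, Nat.add_right_cancel_iff] at htotal
  funext c
  cases c with
  | none => exact htotal
  | some c => exact hx c

lemma colorCount_permPt_swap (hij : κ i = κ j) (x : SlicePoint n p) :
    colorCount κ (permPt (Equiv.swap i j) x) = colorCount κ x := by
  funext c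
  refine card_equiv (Equiv.swap i j) fun a => ?_
  simp only [mem_filter, mem_univ, true_and, Equiv.apply_swap_eq_self hij]
  rfl

lemma exists_of_colorCount_eq (hx : colorCount κ x = colorCount κ x') (hi : x.1 i = true)
    (hi' : x'.1 i = false) : ∃ j, κ i = κ j ∧ x.1 j = false ∧ x'.1 j = true := by
  by_contra! hno
  have hsub : (univ.filter fun j => κ j = κ i ∧ x'.1 j = true) ⊆
      univ.filter fun j => κ j = κ i ∧ x.1 j = true := by
    intro j hj
    simp only [mem_filter, mem_univ, true_and] at hj ⊢
    exact ⟨hj.1, by_contra fun h => hno j hj.1.symm (by simpa using h) hj.2⟩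
  have heq := eq_of_subset_of_card_le hsub (congrFun hx (κ i)).le
  have hmem : i ∈ univ.filter fun j => κ j = κ i ∧ x.1 j = true := by simp [hi]
  rw [← heq] at hmem
  simp [hi'] at hmem

lemma exists_exchange_of_colorCount_eq (hx : colorCount κ x = colorCount κ x') (hne : x ≠ x') :
    ∃ i j, κ i = κ j ∧ x.1 i = true ∧ x'.1 i = false ∧ x.1 j = false ∧ x'.1 j = true := by
  obtain ⟨i, hi⟩ : ∃ i, x.1 i ≠ x'.1 i := Function.ne_iff.1 fun h => hne (Subtype.ext h)
  cases hxi : x.1 i with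
  | true =>
    have hxi' : x'.1 i = false := by simpa [hxi] using hi.symm
    obtain ⟨j, hκ, hj, hj'⟩ := exists_of_colorCount_eq hx hxi hxi'
    exact ⟨i, j, hκ, hxi, hxi', hj, hj'⟩
  | false =>
    have hxi' : x'.1 i = true := by simpa [hxi] using hi.symm
    obtain ⟨j, hκ, hj', hj⟩ := exists_of_colorCount_eq hx.symm hxi' hxi
    exact ⟨j, i, hκ.symm, hj, hj', hxi, hxi'⟩

lemma hammingDist_permPt_swap_lt (hi : x.1 i = true) (hi' : x'.1 i = false) (hj : x.1 j = false)
    (hj' : x'.1 j = true) :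
    hammingDist (permPt (Equiv.swap i j) x).1 x'.1 < hammingDist x.1 x'.1 := by
  refine card_lt_card ⟨fun a ha => mem_filter.2 ⟨mem_univ a, ?_⟩, fun hsub => ?_⟩
  · have ha : x.1 (Equiv.swap i j a) ≠ x'.1 a := (mem_filter.1 ha).2
    obtain rfl | hai := eq_or_ne a i
    · simp [hi, hi']
    obtain rfl | haj := eq_or_ne a j
    · simp [hj, hj']
    rwa [Equiv.swap_apply_of_ne_of_ne hai haj] at ha
  · have hne := (mem_filter.1 (hsub (mem_filter.2 ⟨mem_univ i, by simp [hi, hi']⟩))).2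
    simp [hj, hi'] at hne

lemma eq_of_colorCount_eq [Finite C] {β : Type*} {F : SlicePoint n p → β}
    (hF : ∀ i j, κ i = κ j → ∀ x, F (permPt (Equiv.swap i j) x) = F x)
    (hx : ∀ c, colorCount κ x (some c) = colorCount κ x' (some c)) : F x = F x' := by
  replace hx := colorCount_eq_of_some hx
  induction hd : hammingDist x.1 x'.1 using Nat.strong_induction_on generalizing x with
  | _ d ih =>
    obtain rfl | hne := eq_or_ne x x'
    · rfl
    obtain ⟨i, j, hκ, hi, hi', hj, hj'⟩ := exists_exchange_of_colorCount_eq hx hne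
    rw [← hF i j hκ x]
    exact ih _ (hd ▸ hammingDist_permPt_swap_lt hi hi' hj hj')
      ((colorCount_permPt_swap hκ x).trans hx) rfl

end ColorCount

/-! ### Alternating functions on the slice -/

section Entries

variable {ι : Type*} {L : List (ι × ι)} {q r : ι × ι} {i : ι}

lemma mem_entries : i ∈ entries L ↔ ∃ q ∈ L, i = q.1 ∨ i = q.2 := by
  simp [entries]

lemma nodup_of_nodup_entries (hL : (entries L).Nodup) : L.Nodup :=
  (List.nodup_flatMap.1 hL).2.imp fun {q r} hqr => by
    rintro rfl
    simp [Function.onFun] at hqr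

lemma exists_perm_cons_of_mem (hL : (entries L).Nodup) (hq : q ∈ L) :
    ∃ L', L.Perm (q :: L') ∧ q.1 ≠ q.2 ∧ q.1 ∉ entries L' ∧ q.2 ∉ entries L' := by
  have hperm := List.perm_cons_erase hq
  have hcons := (entries_perm hperm).nodup_iff.1 hL
  simp only [entries_cons, List.nodup_cons, List.mem_cons, not_or] at hcons
  exact ⟨_, hperm, hcons.1.1, hcons.1.2, hcons.2.1⟩

lemma eq_of_mem_entries (hL : (entries L).Nodup) (hq : q ∈ L) (hr : r ∈ L)
    (hiq : i = q.1 ∨ i = q.2) (hir : i = r.1 ∨ i = r.2) : q = r := by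
  by_contra hne
  obtain ⟨L', hperm, -, h₁, h₂⟩ := exists_perm_cons_of_mem hL hq
  have hmem : i ∈ entries L' :=
    mem_entries.2 ⟨r, (List.mem_cons.1 (hperm.mem_iff.1 hr)).resolve_left (Ne.symm hne), hir⟩
  rcases hiq with rfl | rfl
  exacts [h₁ hmem, h₂ hmem]

lemma exists_pair_disjoint_of_card_lt {T : Finset ι} (hL : (entries L).Nodup)
    (hT : #T < L.length) : ∃ q ∈ L, q.1 ∉ T ∧ q.2 ∉ T := by
  by_contra! hmeet
  have hend (q : ι × ι) (hq : q ∈ L) : (if q.1 ∈ T then q.1 else q.2) ∈ T := by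
    split_ifs with h
    exacts [h, hmeet q hq h]
  rw [← List.toFinset_card_of_nodup (nodup_of_nodup_entries hL)] at hT
  refine hT.not_ge (card_le_card_of_injOn (fun q => if q.1 ∈ T then q.1 else q.2)
    (fun q hq => hend q (List.mem_toFinset.1 hq)) fun q hq r hr hqr => ?_)
  rw [mem_coe, List.mem_toFinset] at hq hr
  refine eq_of_mem_entries hL hq hr (ite_eq_or_eq (q.1 ∈ T) _ _) ?_
  simpa only [hqr] using ite_eq_or_eq (r.1 ∈ T) _ _

lemma altSum_mem {R M : Type*} [Ring R] [AddCommGroup M] [Module R M] {W : Submodule R M}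
    {u : Finset ι → M} {T : Finset ι} (hL : (entries L).Nodup) (hT : ∀ i ∈ entries L, i ∉ T)
    (hu : ∀ S, #S = #T + L.length → u S ∈ W) : altSum u L T ∈ W := by
  rw [← Submodule.Quotient.mk_eq_zero]
  refine (map_altSum W.mkQ.toAddMonoidHom u L T).trans ?_
  refine (altSum_congr_of_card (v := 0) hL hT fun S hS => ?_).trans (altSum_zero L T)
  exact (Submodule.Quotient.mk_eq_zero W).2 (hu S hS)

end Entries

section Alternating

variable {L L' : List (Fin n × Fin n)} {F : SlicePoint n p → ℝ} {q : Fin n × Fin n}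

/-- `F` changes sign under the exchange of the two points of any pair of `L`. -/
def IsAlternating (L : List (Fin n × Fin n)) (F : SlicePoint n p → ℝ) : Prop :=
  ∀ q ∈ L, permFun (Equiv.swap q.1 q.2) F = -F

lemma IsAlternating.apply_eq_zero (hF : IsAlternating L F) (hq : q ∈ L) {x : SlicePoint n p}
    (hx : x.1 q.1 = x.1 q.2) : F x = 0 := by
  have hfix : permPt (Equiv.swap q.1 q.2) x = x := by
    refine Subtype.ext (funext fun i => ?_)
    rw [permPt_val, Equiv.symm_swap, Equiv.apply_swap_eq_self hx]
  have hanti : F x = -F x := by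
    simpa only [permFun_apply, hfix, Pi.neg_apply] using congrFun (hF q hq) x
  linarith

lemma IsAlternating.sInner_eq_zero (hF : IsAlternating L F) (hL : (entries L).Nodup)
    {g : SlicePoint n p → ℝ} (hg : g ∈ degLT n p L.length) : sInner F g = 0 := by
  induction hg using Submodule.span_induction with
  | mem g hg =>
    obtain ⟨T, hT, rfl⟩ := hg
    obtain ⟨q, hq, hq₁, hq₂⟩ := exists_pair_disjoint_of_card_lt hL hT
    have hinv : permFun (Equiv.swap q.1 q.2) (andT T : SlicePoint n p → ℝ) = andT T := by
      rw [permFun_andT, Equiv.symm_swap]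
      congr 1
      rw [map_eq_image]
      refine (image_congr fun i hi => ?_).trans image_id
      exact Equiv.swap_apply_of_ne_of_ne (ne_of_mem_of_not_mem hi hq₁) (ne_of_mem_of_not_mem hi hq₂)
    have hsign := sInner_permFun (Equiv.swap q.1 q.2) F (andT T)
    rw [hF q hq, hinv, ← neg_one_smul ℝ F, sInner_smul_left] at hsign
    linarith
  | zero => exact sInner_zero_right F
  | add f g _ _ hf hg => rw [sInner_add_right, hf, hg, add_zero]
  | smul c f _ hf => rw [sInner_smul_right, hf, mul_zero]

/-- The function `Ψ_L x = ∏_{(a,b) ∈ L} (x_a - x_b)` on the slice. -/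
def slicePsi (L : List (Fin n × Fin n)) (x : SlicePoint n p) : ℝ := cubePsi L x.1

lemma slicePsi_cons (q : Fin n × Fin n) (L : List (Fin n × Fin n)) (x : SlicePoint n p) :
    slicePsi (q :: L) x = (coordR x q.1 - coordR x q.2) * slicePsi L x := by
  simp only [slicePsi, cubePsi, List.map_cons, List.prod_cons, coordR]

lemma slicePsi_perm (h : L.Perm L') : (slicePsi L : SlicePoint n p → ℝ) = slicePsi L' :=
  funext fun _ => (h.map _).prod_eq

lemma permFun_slicePsi (π : Equiv.Perm (Fin n)) (L : List (Fin n × Fin n)) :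
    permFun π (slicePsi L : SlicePoint n p → ℝ) =
      slicePsi (L.map (Prod.map π.symm π.symm)) := by
  funext x
  simp only [permFun_apply, slicePsi, cubePsi, List.map_map]
  rfl

lemma permFun_slicePsi_of_fixed {π : Equiv.Perm (Fin n)} (hπ : ∀ i ∈ entries L, π i = i) :
    permFun π (slicePsi L : SlicePoint n p → ℝ) = slicePsi L := by
  rw [permFun_slicePsi]
  congr 1
  refine (List.map_congr_left fun q hq => ?_).trans (List.map_id L)
  have h₁ := hπ q.1 (mem_entries.2 ⟨q, hq, .inl rfl⟩)
  have h₂ := hπ q.2 (mem_entries.2 ⟨q, hq, .inr rfl⟩)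
  exact Prod.ext (π.symm_apply_eq.2 h₁.symm) (π.symm_apply_eq.2 h₂.symm)

lemma slicePsi_isAlternating (hL : (entries L).Nodup) :
    IsAlternating L (slicePsi L : SlicePoint n p → ℝ) := by
  intro q hq
  obtain ⟨L', hperm, -, h₁, h₂⟩ := exists_perm_cons_of_mem hL hq
  have hfix : permFun (Equiv.swap q.1 q.2) (slicePsi L' : SlicePoint n p → ℝ) = slicePsi L' :=
    permFun_slicePsi_of_fixed fun i hi =>
      Equiv.swap_apply_of_ne_of_ne (ne_of_mem_of_not_mem hi h₁) (ne_of_mem_of_not_mem hi h₂)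
  funext x
  rw [slicePsi_perm hperm, permFun_apply, Pi.neg_apply, slicePsi_cons, slicePsi_cons,
    ← permFun_apply _ (slicePsi L'), hfix]
  simp only [coordR, permPt_val, Equiv.symm_swap, Equiv.swap_apply_left, Equiv.swap_apply_right]
  ring

lemma altSum_andT (hL : (entries L).Nodup) {T : Finset (Fin n)} (hT : ∀ i ∈ entries L, i ∉ T) :
    altSum andT L T = (andT T * slicePsi L : SlicePoint n p → ℝ) := by
  funext x
  refine (map_altSum (Pi.evalAddMonoidHom (fun _ => ℝ) x) andT L T).trans ?_
  exact altSum_prod (coordR x) hL hT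

lemma slicePsi_mem_degLE (hL : (entries L).Nodup) :
    (slicePsi L : SlicePoint n p → ℝ) ∈ degLE n p L.length := by
  have hsum : altSum andT L ∅ = (slicePsi L : SlicePoint n p → ℝ) := by
    rw [altSum_andT hL fun _ _ => notMem_empty _]
    funext x
    simp [andT]
  rw [← hsum]
  exact altSum_mem hL (fun _ _ => notMem_empty _) fun S hS =>
    andT_mem_degLE (by rw [hS, card_empty, zero_add])

lemma slicePsi_sq_of_ne {x : SlicePoint n p} (hx : ∀ q ∈ L, x.1 q.1 ≠ x.1 q.2) :
    slicePsi L x ^ 2 = 1 := by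
  induction L with
  | nil => simp [slicePsi, cubePsi]
  | cons q L ih =>
    rw [List.forall_mem_cons] at hx
    rw [slicePsi_cons, mul_pow, ih hx.2, mul_one, coordR, coordR]
    have hq := hx.1
    revert hq
    cases x.1 q.1 <;> cases x.1 q.2 <;> norm_num

lemma sNormSq_slicePsi_le_one (L : List (Fin n × Fin n)) :
    sNormSq (slicePsi L : SlicePoint n p → ℝ) ≤ 1 := by
  rw [sNormSq_eq_sExp_sq]
  refine (sExp_mono (g := 1) fun x => cubePsi_sq_le_one L x.1).trans ?_
  simpa [sExp] using div_self_le_one _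

end Alternating

section PairColor

variable {ι : Type*} {L : List (ι × ι)}

/-- The pair of `L` containing `i`, used as the color of `i`. -/
noncomputable def pairColor (L : List (ι × ι)) (i : ι) : Option (ι × ι) :=
  L.find? fun q => i = q.1 ∨ i = q.2

lemma pairColor_eq_some (hL : (entries L).Nodup) {i : ι} {q : ι × ι} :
    pairColor L i = some q ↔ q ∈ L ∧ (i = q.1 ∨ i = q.2) := by
  refine ⟨fun h => ⟨List.mem_of_find?_eq_some h, by simpa using List.find?_some h⟩, fun h => ?_⟩
  obtain ⟨r, hr⟩ : ∃ r, pairColor L i = some r :=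
    Option.isSome_iff_exists.1 (List.find?_isSome.2 ⟨q, h.1, by simpa using h.2⟩)
  rw [hr, eq_of_mem_entries hL (List.mem_of_find?_eq_some hr) h.1
    (by simpa using List.find?_some hr) h.2]

lemma pairColor_eq_none {i : ι} : pairColor L i = none ↔ i ∉ entries L := by
  simp [pairColor, mem_entries]

end PairColor

section Alternating

variable {L : List (Fin n × Fin n)} {F : SlicePoint n p → ℝ}

lemma colorCount_pairColor (hL : (entries L).Nodup) {x : SlicePoint n p}
    (hx : ∀ q ∈ L, x.1 q.1 ≠ x.1 q.2) (q : Fin n × Fin n) :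
    colorCount (pairColor L) x (some q) = if q ∈ L then 1 else 0 := by
  simp only [colorCount, pairColor_eq_some hL]
  split_ifs with hq
  · have hne := hx q hq
    rw [card_eq_one]
    cases h₁ : x.1 q.1 <;> cases h₂ : x.1 q.2 <;> simp only [h₁, h₂, ne_eq, not_true] at hne
    · exact ⟨q.2, by ext i; simp only [mem_filter, mem_univ, mem_singleton]; grind⟩
    · exact ⟨q.1, by ext i; simp only [mem_filter, mem_univ, mem_singleton]; grind⟩
  · simp [hq]

lemma IsAlternating.permFun_swap_mul_slicePsi (hF : IsAlternating L F) (hL : (entries L).Nodup)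
    (hinv : ∀ i ∉ entries L, ∀ j ∉ entries L, permFun (Equiv.swap i j) F = F) {i j : Fin n}
    (hij : pairColor L i = pairColor L j) :
    permFun (Equiv.swap i j) (F * slicePsi L) = F * slicePsi L := by
  rw [permFun_mul]
  cases hi : pairColor L i with
  | none =>
    have hiL := pairColor_eq_none.1 hi
    have hjL := pairColor_eq_none.1 (hij ▸ hi)
    rw [hinv i hiL j hjL, permFun_slicePsi_of_fixed fun a ha =>
      Equiv.swap_apply_of_ne_of_ne (ne_of_mem_of_not_mem ha hiL) (ne_of_mem_of_not_mem ha hjL)]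
  | some q =>
    obtain ⟨hq, hi'⟩ := (pairColor_eq_some hL).1 hi
    obtain ⟨-, hj'⟩ := (pairColor_eq_some hL).1 (hij ▸ hi)
    have hswap := congrArg₂ (· * ·) (hF q hq) (slicePsi_isAlternating (p := p) hL q hq)
    simp only [neg_mul_neg] at hswap
    rcases hi' with rfl | rfl <;> rcases hj' with rfl | rfl
    · rw [Equiv.swap_self]; rfl
    · exact hswap
    · rwa [Equiv.swap_comm]
    · rw [Equiv.swap_self]; rfl

/-- The product with `Ψ_L` is invariant under all exchanges within the color classes, so it is
constant on the support of `Ψ_L`. -/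
lemma IsAlternating.exists_eq_smul_slicePsi (hF : IsAlternating L F) (hL : (entries L).Nodup)
    (hinv : ∀ i ∉ entries L, ∀ j ∉ entries L, permFun (Equiv.swap i j) F = F) :
    ∃ t : ℝ, F = t • slicePsi L := by
  by_cases hsupp : ∃ x₀ : SlicePoint n p, ∀ q ∈ L, x₀.1 q.1 ≠ x₀.1 q.2
  · obtain ⟨x₀, hx₀⟩ := hsupp
    refine ⟨F x₀ * slicePsi L x₀, funext fun x => ?_⟩
    by_cases hx : ∀ q ∈ L, x.1 q.1 ≠ x.1 q.2
    · have hconst : F x * slicePsi L x = F x₀ * slicePsi L x₀ :=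
        eq_of_colorCount_eq (F := F * slicePsi L)
          (fun i j hij => congrFun (hF.permFun_swap_mul_slicePsi hL hinv hij))
          fun q => (colorCount_pairColor hL hx q).trans (colorCount_pairColor hL hx₀ q).symm
      rw [Pi.smul_apply, ← hconst, smul_eq_mul, mul_assoc, ← sq, slicePsi_sq_of_ne hx, mul_one]
    · push Not at hx
      obtain ⟨q, hq, hxq⟩ := hx
      rw [hF.apply_eq_zero hq hxq, Pi.smul_apply,
        (slicePsi_isAlternating hL).apply_eq_zero hq hxq, smul_zero]
  · push Not at hsupp
    refine ⟨0, funext fun x => ?_⟩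
    obtain ⟨q, hq, hxq⟩ := hsupp x
    rw [hF.apply_eq_zero hq hxq, zero_smul, Pi.zero_apply]

end Alternating

/-! ### Averaging between the slice and the cube -/

section CoverAverage

variable {f : SlicePoint n p → ℝ} {g : (Fin n → Bool) → ℝ}

lemma sq_sum_mul_le {ι : Type*} {s : Finset ι} {w : ι → ℝ} (hw : ∀ i ∈ s, 0 ≤ w i)
    (hsum : ∑ i ∈ s, w i ≤ 1) (f : ι → ℝ) : (∑ i ∈ s, w i * f i) ^ 2 ≤ ∑ i ∈ s, w i * f i ^ 2 := by
  have hwf : 0 ≤ ∑ i ∈ s, w i * f i ^ 2 :=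
    sum_nonneg fun i hi => mul_nonneg (hw i hi) (sq_nonneg (f i))
  calc (∑ i ∈ s, w i * f i) ^ 2 ≤ (∑ i ∈ s, w i) * ∑ i ∈ s, w i * f i ^ 2 :=
        sum_sq_le_sum_mul_sum_of_sq_le_mul s hw
          (fun i hi => mul_nonneg (hw i hi) (sq_nonneg (f i))) fun i _ => le_of_eq (by ring)
    _ ≤ ∑ i ∈ s, w i * f i ^ 2 := mul_le_of_le_one_left hwf hsum

/-- For each point `y` of the cube, the uniform probability weights on the slice points below `y`
(all equal to zero if there are none). -/
noncomputable def coverKernel (y : Fin n → Bool) (x : SlicePoint n p) : ℝ :=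
  if x.1 ≤ y then (#{z : SlicePoint n p | z.1 ≤ y} : ℝ)⁻¹ else 0

/-- The linear map sending `f` to its averages over the slice points below each point of the
cube. -/
noncomputable def downAvg (n : ℕ) (p : ℝ) : (SlicePoint n p → ℝ) →ₗ[ℝ] ((Fin n → Bool) → ℝ) :=
  (Matrix.of coverKernel).mulVecLin

/-- The adjoint of `downAvg` with respect to the uniform measures on the slice and the cube. -/
noncomputable def upAvg (n : ℕ) (p : ℝ) : ((Fin n → Bool) → ℝ) →ₗ[ℝ] (SlicePoint n p → ℝ) :=
  (Fintype.card (SlicePoint n p) / 2 ^ n : ℝ) • (Matrix.of coverKernel).transpose.mulVecLin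

lemma downAvg_apply (f : SlicePoint n p → ℝ) (y : Fin n → Bool) :
    downAvg n p f y = ∑ x, coverKernel y x * f x :=
  rfl

lemma upAvg_apply (g : (Fin n → Bool) → ℝ) (x : SlicePoint n p) :
    upAvg n p g x = Fintype.card (SlicePoint n p) / 2 ^ n * ∑ y, coverKernel y x * g y :=
  rfl

lemma coverKernel_nonneg (y : Fin n → Bool) (x : SlicePoint n p) : 0 ≤ coverKernel y x := by
  rw [coverKernel]
  split_ifs <;> positivity

lemma sum_coverKernel_le_one (y : Fin n → Bool) :
    ∑ x : SlicePoint n p, coverKernel y x ≤ 1 := by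
  simp only [coverKernel, ← sum_filter, sum_const, nsmul_eq_mul]
  exact mul_inv_le_one

lemma cPerm_le_cPerm {π : Equiv.Perm (Fin n)} {y z : Fin n → Bool} :
    cPerm π y ≤ cPerm π z ↔ y ≤ z :=
  ⟨fun h i => by simpa [cPerm] using h (π i), fun h i => h (π.symm i)⟩

lemma coverKernel_perm (π : Equiv.Perm (Fin n)) (y : Fin n → Bool) (x : SlicePoint n p) :
    coverKernel (cPerm π y) (permPt π x) = coverKernel y x := by
  have hcard : #{z : SlicePoint n p | z.1 ≤ y} = #{z : SlicePoint n p | z.1 ≤ cPerm π y} :=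
    card_equiv (permPtEquiv π) fun z => by
      simp only [mem_filter, mem_univ, true_and]
      exact cPerm_le_cPerm.symm
  rw [coverKernel, coverKernel, hcard]
  exact if_congr cPerm_le_cPerm rfl rfl

lemma downAvg_permFun (π : Equiv.Perm (Fin n)) (f : SlicePoint n p → ℝ) :
    downAvg n p (permFun π f) = downAvg n p f ∘ cPerm π := by
  funext y
  exact Fintype.sum_equiv (permPtEquiv π) _ _ fun x =>
    congrArg (· * f (permPt π x)) (coverKernel_perm π y x).symm

lemma upAvg_comp_cPerm (π : Equiv.Perm (Fin n)) (g : (Fin n → Bool) → ℝ) :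
    upAvg n p (g ∘ cPerm π) = permFun π (upAvg n p g) := by
  funext x
  rw [permFun_apply, upAvg_apply, upAvg_apply]
  exact congrArg (_ * ·) (Fintype.sum_equiv (π.arrowCongr (Equiv.refl Bool)) _ _ fun y =>
    congrArg (· * g (cPerm π y)) (coverKernel_perm π y x).symm)

lemma sInner_upAvg (f : SlicePoint n p → ℝ) (g : (Fin n → Bool) → ℝ) :
    sInner f (upAvg n p g) = cExp (downAvg n p f * g) := by
  obtain hempty | hne := isEmpty_or_nonempty (SlicePoint n p)
  · simp [sInner, sExp, cExp, downAvg_apply]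
  have hcard : (Fintype.card (SlicePoint n p) : ℝ) ≠ 0 := Nat.cast_ne_zero.2 Fintype.card_ne_zero
  simp only [sInner, sExp, cExp, Pi.mul_apply, downAvg_apply, upAvg_apply, mul_left_comm (f _),
    ← mul_sum]
  rw [mul_div_right_comm, div_right_comm, div_self hcard, one_div_mul_eq_div]
  simp only [mul_sum, sum_mul]
  rw [sum_comm]
  simp only [mul_left_comm, mul_assoc]

lemma downAvg_sq_le (f : SlicePoint n p → ℝ) : downAvg n p f ^ 2 ≤ downAvg n p (f ^ 2) := fun y =>
  sq_sum_mul_le (fun x _ => coverKernel_nonneg y x) (sum_coverKernel_le_one y) f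

lemma downAvg_one_le_one : downAvg n p 1 ≤ 1 := fun y => by
  simpa [downAvg_apply] using sum_coverKernel_le_one y

/-- By transitivity of the permutation action, `upAvg 1` is constant. -/
lemma upAvg_one_le_one : upAvg n p 1 ≤ 1 := by
  intro x
  have : Nonempty (SlicePoint n p) := ⟨x⟩
  have hconst (x' : SlicePoint n p) : upAvg n p 1 x' = upAvg n p 1 x :=
    eq_of_colorCount_eq (C := Empty) (κ := fun _ => none)
      (fun i j _ z => (congrFun (upAvg_comp_cPerm (Equiv.swap i j) 1) z).symm) Empty.rec
  calc upAvg n p 1 x = sInner 1 (upAvg n p 1) := by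
        simp only [sInner, hconst, Pi.one_apply, one_mul, sExp_const]
    _ = cExp (downAvg n p 1 * 1) := sInner_upAvg 1 1
    _ ≤ cExp 1 := cExp_mono (by rw [mul_one]; exact downAvg_one_le_one)
    _ = 1 := by simp [cExp]

lemma upAvg_sq_le (g : (Fin n → Bool) → ℝ) : upAvg n p g ^ 2 ≤ upAvg n p (g ^ 2) := by
  intro x
  have hw (y : Fin n → Bool) :
      0 ≤ Fintype.card (SlicePoint n p) / 2 ^ n * coverKernel y x :=
    mul_nonneg (by positivity) (coverKernel_nonneg y x)
  have hone : upAvg n p 1 x ≤ 1 := upAvg_one_le_one x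
  simp only [upAvg_apply, mul_sum, ← mul_assoc, Pi.pow_apply, Pi.one_apply, mul_one] at hone ⊢
  exact sq_sum_mul_le (fun y _ => hw y) hone g

lemma sExp_upAvg_le {g : (Fin n → Bool) → ℝ} (hg : 0 ≤ g) : sExp (upAvg n p g) ≤ cExp g := by
  calc sExp (upAvg n p g) = sInner 1 (upAvg n p g) := by simp only [sInner, Pi.one_apply, one_mul]
    _ = cExp (downAvg n p 1 * g) := sInner_upAvg 1 g
    _ ≤ cExp g := cExp_mono fun y => mul_le_of_le_one_left (hg y) (downAvg_one_le_one y)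

lemma cExp_downAvg_sq_le (f : SlicePoint n p → ℝ) : cExp (downAvg n p f ^ 2) ≤ sNormSq f := by
  calc cExp (downAvg n p f ^ 2) ≤ cExp (downAvg n p (f ^ 2) * 1) := by
        rw [mul_one]
        exact cExp_mono (downAvg_sq_le f)
    _ = sInner (f ^ 2) (upAvg n p 1) := (sInner_upAvg _ _).symm
    _ ≤ sExp (f ^ 2) :=
        sExp_mono fun x => mul_le_of_le_one_right (sq_nonneg (f x)) (upAvg_one_le_one x)
    _ = sNormSq f := (sNormSq_eq_sExp_sq f).symm

lemma sExp_upAvg_pow_four_le (g : (Fin n → Bool) → ℝ) :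
    sExp (upAvg n p g ^ 4) ≤ cExp (g ^ 4) := by
  calc sExp (upAvg n p g ^ 4) ≤ sExp (upAvg n p (g ^ 2) ^ 2) := sExp_mono fun x => by
        simpa only [Pi.pow_apply, ← pow_mul] using
          pow_le_pow_left₀ (sq_nonneg (upAvg n p g x)) (upAvg_sq_le g x) 2
    _ ≤ sExp (upAvg n p ((g ^ 2) ^ 2)) := sExp_mono (upAvg_sq_le (g ^ 2))
    _ ≤ cExp ((g ^ 2) ^ 2) := sExp_upAvg_le fun y => sq_nonneg (g y ^ 2)
    _ = cExp (g ^ 4) := by rw [← pow_mul]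

end CoverAverage

/-! ### The noise operator on the slice -/

section SliceNoise

/-- The noise operator `R` on the slice: pass to the cube, apply the cube noise operator twice, and
return. -/
noncomputable def sliceNoise (n : ℕ) (p : ℝ) : (SlicePoint n p → ℝ) →ₗ[ℝ] (SlicePoint n p → ℝ) :=
  upAvg n p ∘ₗ cubeNoise (1 / 2) ∘ₗ cubeNoise (1 / 2) ∘ₗ downAvg n p

lemma sInner_sliceNoise (f g : SlicePoint n p → ℝ) :
    sInner f (sliceNoise n p g) =
      cExp (cubeNoise (1 / 2) (downAvg n p f) * cubeNoise (1 / 2) (downAvg n p g)) :=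
  (sInner_upAvg _ _).trans (cExp_mul_cubeNoise _ _ _)

lemma sInner_sliceNoise_self (f : SlicePoint n p → ℝ) :
    sInner f (sliceNoise n p f) = cExp (cubeNoise (1 / 2) (downAvg n p f) ^ 2) := by
  rw [sInner_sliceNoise, sq]

lemma sInner_sliceNoise_self_nonneg (f : SlicePoint n p → ℝ) : 0 ≤ sInner f (sliceNoise n p f) := by
  rw [sInner_sliceNoise_self]
  exact cExp_nonneg fun y => sq_nonneg _

lemma sInner_sliceNoise_comm (f g : SlicePoint n p → ℝ) :
    sInner f (sliceNoise n p g) = sInner g (sliceNoise n p f) := by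
  rw [sInner_sliceNoise, mul_comm, sInner_sliceNoise]

lemma sExp_sliceNoise_pow_four_le (f : SlicePoint n p → ℝ) :
    sExp (sliceNoise n p f ^ 4) ≤ sInner f (sliceNoise n p f) ^ 2 := by
  rw [sInner_sliceNoise_self]
  exact (sExp_upAvg_pow_four_le _).trans (cExp_cubeNoise_pow_four_le (by norm_num) _)

end SliceNoise

/-! ### Equivariant operators and degree -/

section Equivariant

variable {T : Finset (Fin n)} {d : ℕ} {f : SlicePoint n p → ℝ}
  {R : (SlicePoint n p → ℝ) →ₗ[ℝ] (SlicePoint n p → ℝ)}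

lemma prod_boole_mem_span_andT (S T : Finset (Fin n)) :
    (fun x : SlicePoint n p => ∏ i ∈ T, if x.1 i ↔ i ∈ S then (1 : ℝ) else 0) ∈
      Submodule.span ℝ (andT '' (T.powerset : Set (Finset (Fin n)))) := by
  have hfactor (x : SlicePoint n p) (i : Fin n) : (if x.1 i ↔ i ∈ S then (1 : ℝ) else 0) =
      (if i ∈ S then 1 else -1) * coordR x i + if i ∈ S then 0 else 1 := by
    by_cases hi : i ∈ S <;> cases hx : x.1 i <;> simp [coordR, hi, hx]
  have hexpand : (fun x : SlicePoint n p => ∏ i ∈ T, if x.1 i ↔ i ∈ S then (1 : ℝ) else 0) =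
      ∑ U ∈ T.powerset, ((∏ i ∈ U, if i ∈ S then 1 else -1) *
        ∏ i ∈ T \ U, if i ∈ S then 0 else 1 : ℝ) • andT U := by
    funext x
    simp only [hfactor, prod_add, prod_mul_distrib, Finset.sum_apply, Pi.smul_apply, smul_eq_mul,
      andT, mul_right_comm]
  rw [hexpand]
  exact Submodule.sum_mem _ fun U hU =>
    Submodule.smul_mem _ _ (Submodule.subset_span ⟨U, hU, rfl⟩)

lemma mem_span_andT_of_agree {F : SlicePoint n p → ℝ}
    (hF : ∀ x x' : SlicePoint n p, (∀ i ∈ T, x.1 i = x'.1 i) → F x = F x') :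
    F ∈ Submodule.span ℝ (andT '' (T.powerset : Set (Finset (Fin n)))) := by
  let ones (x : SlicePoint n p) : Finset (Fin n) := {i ∈ T | x.1 i}
  have hones (x : SlicePoint n p) {S : Finset (Fin n)} (hS : S ⊆ T) :
      (∀ i ∈ T, (x.1 i ↔ i ∈ S)) ↔ ones x = S := by
    simp only [ones, Finset.ext_iff, mem_filter]
    grind
  have hfactors : F.FactorsThrough ones := fun x x' h => hF x x' fun i hi =>
    Bool.eq_iff_iff.2 (filter_inj'.1 h hi)
  have hdecomp : F = ∑ S ∈ T.powerset, Function.extend ones F 0 S •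
      fun x : SlicePoint n p => ∏ i ∈ T, if x.1 i ↔ i ∈ S then (1 : ℝ) else 0 := by
    funext x
    have hterm (S : Finset (Fin n)) (hS : S ∈ T.powerset) :
        (Function.extend ones F 0 S •
          fun x : SlicePoint n p => ∏ i ∈ T, if x.1 i ↔ i ∈ S then (1 : ℝ) else 0) x =
          if ones x = S then F x else 0 := by
      rw [Pi.smul_apply, prod_boole, smul_ite, smul_zero]
      refine ite_congr (propext (hones x (mem_powerset.1 hS))) (fun h => ?_) fun _ => rfl
      rw [← h, hfactors.extend_apply, smul_eq_mul, mul_one]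
    rw [Finset.sum_apply, sum_congr rfl hterm, sum_ite_eq,
      if_pos (mem_powerset.2 (filter_subset _ _))]
  rw [hdecomp]
  exact Submodule.sum_mem _ fun S _ => Submodule.smul_mem _ _ (prod_boole_mem_span_andT S T)

lemma mem_span_andT_of_invariant {F : SlicePoint n p → ℝ}
    (hF : ∀ i ∉ T, ∀ j ∉ T, permFun (Equiv.swap i j) F = F) :
    F ∈ Submodule.span ℝ (andT '' (T.powerset : Set (Finset (Fin n)))) := by
  let κ (i : Fin n) : Option (Fin n) := if i ∈ T then some i else none
  refine mem_span_andT_of_agree fun x x' hx => eq_of_colorCount_eq (κ := κ) (fun i j hij z => ?_)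
    fun c => congrArg card (ext fun i => ?_)
  · by_cases hi : i ∈ T <;> by_cases hj : j ∈ T <;> simp only [κ, hi, hj, if_true, if_false] at hij
    · rw [Option.some_inj.1 hij, Equiv.swap_self]
      rfl
    · cases hij
    · cases hij
    · exact congrFun (hF i hi j hj) z
  · simp only [mem_filter, mem_univ, true_and]
    refine and_congr_right fun hi => ?_
    rw [hx i (by_contra fun h => by simp [κ, h] at hi)]

/-- A linear operator on functions on the slice that commutes with permuting coordinates. -/
def IsEquivariant (R : (SlicePoint n p → ℝ) →ₗ[ℝ] (SlicePoint n p → ℝ)) : Prop :=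
  ∀ π f, R (permFun π f) = permFun π (R f)

lemma sliceNoise_isEquivariant : IsEquivariant (sliceNoise n p) := fun π f => by
  simp only [sliceNoise, LinearMap.comp_apply, downAvg_permFun, cubeNoise_comp_cPerm,
    upAvg_comp_cPerm]

namespace IsEquivariant

lemma apply_andT_mem_span (hR : IsEquivariant R) (T : Finset (Fin n)) :
    R (andT T) ∈ Submodule.span ℝ (andT '' (T.powerset : Set (Finset (Fin n)))) := by
  refine mem_span_andT_of_invariant fun i hi j hj => ?_
  have hmap : T.map (Equiv.swap i j).symm.toEmbedding = T := by
    rw [map_eq_image]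
    exact (image_congr fun a ha => Equiv.swap_apply_of_ne_of_ne (ne_of_mem_of_not_mem ha hi)
      (ne_of_mem_of_not_mem ha hj)).trans image_id
  rw [← hR, permFun_andT, hmap]

lemma apply_mem_degLE (hR : IsEquivariant R) (hf : f ∈ degLE n p d) : R f ∈ degLE n p d := by
  suffices degLE n p d ≤ (degLE n p d).comap R from this hf
  refine Submodule.span_le.2 ?_
  rintro _ ⟨T, hT, rfl⟩
  refine (Submodule.span_le.2 ?_ : _ ≤ degLE n p d) (hR.apply_andT_mem_span T)
  rintro _ ⟨U, hU, rfl⟩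
  exact andT_mem_degLE ((card_le_card (mem_powerset.1 hU)).trans hT)

lemma apply_mem_degLT (hR : IsEquivariant R) (hf : f ∈ degLT n p d) : R f ∈ degLT n p d := by
  cases d with
  | zero =>
    rw [degLT_zero, Submodule.mem_bot] at hf ⊢
    rw [hf, map_zero]
  | succ d =>
    rw [degLT_succ] at hf ⊢
    exact hR.apply_mem_degLE hf

lemma exists_apply_andT_sub_smul_mem (hR : IsEquivariant R) (T : Finset (Fin n)) :
    ∃ lam : ℝ, R (andT T) - lam • andT T ∈ degLT n p #T := by
  have hmem := hR.apply_andT_mem_span T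
  rw [← insert_erase (mem_powerset_self T), coe_insert, Set.image_insert_eq,
    Submodule.mem_span_insert] at hmem
  obtain ⟨lam, g, hg, heq⟩ := hmem
  refine ⟨lam, ?_⟩
  rw [heq, add_sub_cancel_left]
  refine (Submodule.span_mono ?_ : _ ≤ degLT n p #T) hg
  rintro _ ⟨U, hU, rfl⟩
  exact ⟨U, card_lt_card (mem_ssubsets.1 hU), rfl⟩

/-- All `AND_T` with `|T| = d` are related by permutations, so they share their eigenvalue modulo
lower degree. -/
theorem exists_eigenvalue (hR : IsEquivariant R) (d : ℕ) :
    ∃ lam : ℝ, ∀ f ∈ degLE n p d, R f - lam • f ∈ degLT n p d := by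
  obtain ⟨lam, hlam⟩ : ∃ lam : ℝ, ∀ T : Finset (Fin n), #T = d →
      R (andT T) - lam • andT T ∈ degLT n p d := by
    by_cases hd : ∃ T₀ : Finset (Fin n), #T₀ = d
    · obtain ⟨T₀, rfl⟩ := hd
      obtain ⟨lam, hlam⟩ := hR.exists_apply_andT_sub_smul_mem T₀
      refine ⟨lam, fun T hT => ?_⟩
      let π := (equivOfCardEq hT.symm).extendSubtype
      have hπ : T₀.map π.symm.symm.toEmbedding = T :=
        eq_of_subset_of_card_le (map_subset_iff_subset_preimage.2 fun i hi =>
          mem_preimage.2 ((equivOfCardEq hT.symm).extendSubtype_mem i hi)) (by simp [hT])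
      have := permFun_mem_degLT π.symm hlam
      rwa [map_sub, map_smul, ← hR, permFun_andT, hπ] at this
    · exact ⟨0, fun T hT => absurd ⟨T, hT⟩ hd⟩
  refine ⟨lam, fun f hf => ?_⟩
  suffices degLE n p d ≤ (degLT n p d).comap (R - lam • LinearMap.id) from this hf
  refine Submodule.span_le.2 ?_
  rintro _ ⟨T, hT, rfl⟩
  obtain hT | hT := hT.eq_or_lt
  · exact hlam T hT
  · have hmem : andT T ∈ degLT n p d := Submodule.subset_span ⟨T, hT, rfl⟩
    exact Submodule.sub_mem _ (hR.apply_mem_degLT hmem) (Submodule.smul_mem _ lam hmem)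

end IsEquivariant

end Equivariant

/-! ### The eigenvalues of the noise operator -/

section Counting

variable {A : Finset (Fin n)} {m d : ℕ} {y : Fin n → Bool}

/-- Replacing `m` by `m + 1` costs the factor `(1 + 1 / m) ^ d ≤ e`. -/
lemma pow_le_four_pow_mul_descFactorial {m d : ℕ} (hd : d ≤ m) :
    (m : ℝ) ^ d ≤ 4 ^ d * m.descFactorial d := by
  induction d generalizing m with
  | zero => simp
  | succ d ih =>
    obtain ⟨m, rfl⟩ : ∃ m', m = m' + 1 := ⟨m - 1, by omega⟩
    have hdm : d ≤ m := by omega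
    have hratio : ((m + 1 : ℕ) : ℝ) ^ d ≤ 4 * (m : ℝ) ^ d := by
      obtain rfl | hm := m.eq_zero_or_pos
      · obtain rfl : d = 0 := by omega
        norm_num
      have hm₀ : (0 : ℝ) < m := Nat.cast_pos.2 hm
      calc ((m + 1 : ℕ) : ℝ) ^ d = (1 / m + 1) ^ d * (m : ℝ) ^ d := by
            rw [← mul_pow, add_mul, one_div_mul_cancel hm₀.ne']
            push_cast
            ring
        _ ≤ Real.exp (1 / m) ^ d * (m : ℝ) ^ d := by
            gcongr
            exact Real.add_one_le_exp _
        _ ≤ 4 * (m : ℝ) ^ d := by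
            gcongr
            calc Real.exp (1 / m) ^ d = Real.exp (d / m) := by
                  rw [← Real.exp_nat_mul, mul_one_div]
              _ ≤ Real.exp 1 := Real.exp_le_exp.2 ((div_le_one hm₀).2 (Nat.cast_le.2 hdm))
              _ ≤ 4 := Real.exp_one_lt_three.le.trans (by norm_num)
    calc ((m + 1 : ℕ) : ℝ) ^ (d + 1) ≤ (4 * (m : ℝ) ^ d) * (m + 1 : ℕ) := by
          rw [pow_succ]
          gcongr
      _ ≤ (4 * (4 ^ d * m.descFactorial d)) * (m + 1 : ℕ) := by
          gcongr
          exact ih hdm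
      _ = 4 ^ (d + 1) * (m + 1).descFactorial (d + 1) := by
          rw [Nat.succ_descFactorial_succ]
          push_cast
          ring

lemma choose_sub_mul_descFactorial {s m a : ℕ} (ha : a ≤ m) :
    (s - a).choose (m - a) * s.descFactorial a = s.choose m * m.descFactorial a := by
  rw [Nat.descFactorial_eq_factorial_mul_choose, Nat.descFactorial_eq_factorial_mul_choose,
    mul_left_comm, mul_left_comm (s.choose m), Nat.choose_mul ha, mul_comm (s.choose a)]

/-- The set of coordinates equal to one. -/
def ones (y : Fin n → Bool) : Finset (Fin n) := {i | y i = true}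

lemma mem_ones {i : Fin n} : i ∈ ones y ↔ y i = true := by
  simp [ones]

lemma ones_subset_ones {y z : Fin n → Bool} : ones y ⊆ ones z ↔ y ≤ z := by
  simp only [subset_iff, mem_ones, Pi.le_def, Bool.le_iff_imp]

lemma card_ones_slice (hm : (m : ℝ) = p * n) (x : SlicePoint n p) : #(ones x.1) = m := by
  exact_mod_cast x.2.trans hm.symm

lemma card_filter_powersetCard_superset {Y : Finset (Fin n)} (hA : A ⊆ Y) (hAm : #A ≤ m) :
    #{S ∈ Y.powersetCard m | A ⊆ S} = (#Y - #A).choose (m - #A) := by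
  rw [← card_sdiff_of_subset hA, ← card_powersetCard]
  refine card_nbij' (· \ A) (· ∪ A) ?_ ?_ ?_ ?_
  · intro S hS
    simp only [mem_coe, mem_filter, mem_powersetCard] at hS ⊢
    exact ⟨sdiff_subset_sdiff hS.1.1 le_rfl, by rw [card_sdiff_of_subset hS.2, hS.1.2]⟩
  · intro S hS
    simp only [mem_coe, mem_filter, mem_powersetCard, subset_sdiff] at hS ⊢
    rw [card_union_of_disjoint hS.1.2, hS.2]
    exact ⟨⟨union_subset hS.1.1 hA, Nat.sub_add_cancel hAm⟩, subset_union_right⟩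
  · intro S hS
    exact sdiff_union_of_subset (mem_filter.1 hS).2
  · intro S hS
    exact union_sdiff_cancel_right (subset_sdiff.1 (mem_powersetCard.1 hS).1).2

lemma card_slice_between (hm : (m : ℝ) = p * n) (hA : A ⊆ ones y) (hAm : #A ≤ m) :
    #{x : SlicePoint n p | A ⊆ ones x.1 ∧ x.1 ≤ y} = (#(ones y) - #A).choose (m - #A) := by
  rw [← card_filter_powersetCard_superset hA hAm]
  refine card_bij (fun x _ => ones x.1) (fun x hx => ?_) (fun x _ x' _ h => ?_) fun S hS => ?_
  · simp only [mem_filter, mem_univ, true_and, mem_powersetCard] at hx ⊢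
    exact ⟨⟨ones_subset_ones.2 hx.2, card_ones_slice hm x⟩, hx.1⟩
  · exact Subtype.ext (funext fun i => Bool.eq_iff_iff.2 (by rw [← mem_ones, ← mem_ones, h]))
  · simp only [mem_filter, mem_powersetCard] at hS
    have hones : ones (fun i => decide (i ∈ S)) = S := by ext; simp [mem_ones]
    have hcard : (#(ones fun i => decide (i ∈ S)) : ℝ) = p * n := by rw [hones, hS.1.2, hm]
    refine ⟨⟨fun i => decide (i ∈ S), hcard⟩, ?_, hones⟩
    · simp only [mem_filter, mem_univ, true_and, hones, ← ones_subset_ones]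
      exact ⟨hS.2, hS.1.1⟩

lemma mul_card_le_card_between (hm : (m : ℝ) = p * n) (hp : 0 ≤ p) (hA : A ⊆ ones y)
    (hAm : #A ≤ m) (hy : m ≤ #(ones y)) :
    (p / 4) ^ #A * #{x : SlicePoint n p | x.1 ≤ y} ≤
      #{x : SlicePoint n p | A ⊆ ones x.1 ∧ x.1 ≤ y} := by
  have hall : #{x : SlicePoint n p | x.1 ≤ y} = (#(ones y)).choose m := by
    simpa using card_slice_between hm (empty_subset (ones y)) (Nat.zero_le m)
  have hpos : (0 : ℝ) < (#(ones y)).descFactorial #A :=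
    Nat.cast_pos.2 (Nat.pos_of_ne_zero fun h => by
      rw [Nat.descFactorial_eq_zero_iff_lt] at h
      omega)
  have hdesc : (p / 4) ^ #A * (#(ones y)).descFactorial #A ≤ m.descFactorial #A := by
    calc (p / 4) ^ #A * ((#(ones y)).descFactorial #A : ℝ) ≤ (p / 4) ^ #A * (n : ℝ) ^ #A := by
          gcongr
          exact_mod_cast (Nat.descFactorial_le_pow _ _).trans
            (Nat.pow_le_pow_left (card_finset_fin_le _) _)
      _ = (m : ℝ) ^ #A / 4 ^ #A := by rw [← mul_pow, ← div_pow, hm, div_mul_eq_mul_div]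
      _ ≤ m.descFactorial #A :=
          div_le_of_le_mul₀ (by positivity) (by positivity)
            (mul_comm (4 ^ #A : ℝ) _ ▸ pow_le_four_pow_mul_descFactorial hAm)
  rw [hall, card_slice_between hm hA hAm]
  refine le_of_mul_le_mul_right ?_ hpos
  rw [← Nat.cast_mul, choose_sub_mul_descFactorial hAm, mul_right_comm, mul_comm, Nat.cast_mul]
  gcongr

end Counting

section Correlation

variable {m : ℕ} {L : List (Fin n × Fin n)} {y : Fin n → Bool} {x : SlicePoint n p}

lemma cExp_comp_involutive {σ : (Fin n → Bool) → Fin n → Bool} (hσ : σ.Involutive)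
    (f : (Fin n → Bool) → ℝ) : cExp (f ∘ σ) = cExp f :=
  congrArg (· / _) (Equiv.sum_comp hσ.toPerm f)

lemma cubePsi_mul_cubePsi (L : List (Fin n × Fin n)) (y z : Fin n → Bool) :
    cubePsi L y * cubePsi L z = (L.map fun q =>
      (((if y q.1 then 1 else 0) - if y q.2 then 1 else 0) *
        ((if z q.1 then 1 else 0) - if z q.2 then 1 else 0) : ℝ)).prod :=
  List.prod_map_mul.symm

lemma cExp_cubePsi_sq (hL : (entries L).Nodup) : cExp (cubePsi L ^ 2) = (1 / 2) ^ L.length := by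
  induction L with
  | nil => simp [cExp, cubePsi]
  | cons q L ih =>
    simp only [entries_cons, List.nodup_cons, List.mem_cons, not_or] at hL
    obtain ⟨⟨hab, ha⟩, -, hL⟩ := hL
    let flip (y : Fin n → Bool) : Fin n → Bool := Function.update y q.1 (!y q.1)
    have hflip : flip.Involutive := fun y => by simp [flip]
    have hfix (y : Fin n → Bool) : cubePsi L (flip y) = cubePsi L y := by
      refine congrArg List.prod (List.map_congr_left fun r hr => ?_)
      have h₁ : r.1 ≠ q.1 := fun h => ha (mem_entries.2 ⟨r, hr, Or.inl h.symm⟩)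
      have h₂ : r.2 ≠ q.1 := fun h => ha (mem_entries.2 ⟨r, hr, Or.inr h.symm⟩)
      simp only [flip, Function.update_of_ne h₁, Function.update_of_ne h₂]
    have hsum : cubePsi (q :: L) ^ 2 + (cubePsi (q :: L) ^ 2) ∘ flip = cubePsi L ^ 2 := by
      funext y
      have hcons (z : Fin n → Bool) : cubePsi (q :: L) z =
          ((if z q.1 then 1 else 0) - if z q.2 then 1 else 0) * cubePsi L z := List.prod_cons
      simp only [Pi.add_apply, Pi.pow_apply, Function.comp_apply, hcons, hfix]
      cases h₁ : y q.1 <;> cases h₂ : y q.2 <;> simp [flip, h₁, h₂, Ne.symm hab]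
    have hhalf := ih hL
    rw [← hsum, cExp_add, cExp_comp_involutive hflip] at hhalf
    rw [List.length_cons, pow_succ (1 / 2 : ℝ)]
    linarith

lemma slicePsi_mul_cubePsi_nonneg (L : List (Fin n × Fin n)) (hxy : x.1 ≤ y) :
    0 ≤ slicePsi L x * cubePsi L y := by
  rw [slicePsi, cubePsi_mul_cubePsi]
  refine List.prod_nonneg fun r hr => ?_
  obtain ⟨q, -, rfl⟩ := List.mem_map.1 hr
  have h₁ := hxy q.1
  have h₂ := hxy q.2
  revert h₁ h₂
  cases x.1 q.1 <;> cases x.1 q.2 <;> cases y q.1 <;> cases y q.2 <;> simp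

lemma exists_forall_slicePsi_mul_cubePsi_eq_one (hy : ∀ q ∈ L, y q.1 ≠ y q.2) :
    ∃ A ⊆ ones y, #A ≤ L.length ∧ ∀ x : SlicePoint n p, A ⊆ ones x.1 → x.1 ≤ y →
      slicePsi L x * cubePsi L y = 1 := by
  let top (q : Fin n × Fin n) : Fin n := if y q.1 then q.1 else q.2
  refine ⟨(L.map top).toFinset, fun i hi => ?_, ?_, fun x hA hxy => ?_⟩
  · obtain ⟨q, hq, rfl⟩ := List.mem_map.1 (List.mem_toFinset.1 hi)
    have hne := hy q hq
    rw [mem_ones]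
    cases h₁ : y q.1 <;> cases h₂ : y q.2 <;> simp_all [top]
  · exact (List.toFinset_card_le _).trans_eq (List.length_map top)
  · rw [slicePsi, cubePsi_mul_cubePsi]
    refine List.prod_eq_one fun r hr => ?_
    obtain ⟨q, hq, rfl⟩ := List.mem_map.1 hr
    have hne := hy q hq
    have htop := mem_ones.1 (hA (List.mem_toFinset.2 (List.mem_map_of_mem (f := top) hq)))
    have h₁ := hxy q.1
    have h₂ := hxy q.2
    revert h₁ h₂ htop hne
    cases hy₁ : y q.1 <;> cases y q.2 <;> cases hx₁ : x.1 q.1 <;>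
      cases hx₂ : x.1 q.2 <;> simp [top, hy₁, hx₁, hx₂]

lemma downAvg_mul (f : SlicePoint n p → ℝ) (y : Fin n → Bool) (c : ℝ) :
    downAvg n p f y * c =
      (∑ x : SlicePoint n p with x.1 ≤ y, f x * c) / #{x : SlicePoint n p | x.1 ≤ y} := by
  simp only [downAvg_apply, coverKernel, ite_mul, zero_mul, ← sum_filter, ← mul_sum, sum_mul,
    div_eq_inv_mul, mul_assoc]

lemma downAvg_slicePsi_mul_cubePsi_nonneg (L : List (Fin n × Fin n)) (y : Fin n → Bool) :
    0 ≤ downAvg n p (slicePsi L) y * cubePsi L y := by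
  rw [downAvg_mul]
  exact div_nonneg (sum_nonneg fun x hx => slicePsi_mul_cubePsi_nonneg L (mem_filter.1 hx).2)
    (Nat.cast_nonneg _)

lemma mul_sq_le_downAvg_slicePsi_mul_cubePsi (hm : (m : ℝ) = p * n) (hp₀ : 0 < p) (hp₁ : p ≤ 1)
    (hLm : L.length ≤ m) (hy : m ≤ #(ones y)) :
    (p / 4) ^ L.length * cubePsi L y ^ 2 ≤ downAvg n p (slicePsi L) y * cubePsi L y := by
  by_cases hpairs : ∀ q ∈ L, y q.1 ≠ y q.2
  swap
  · push Not at hpairs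
    obtain ⟨q, hq, heq⟩ := hpairs
    have hzero : cubePsi L y = 0 := List.prod_eq_zero (List.mem_map.2 ⟨q, hq, by simp [heq]⟩)
    simp [hzero]
  obtain ⟨A, hA, hAL, hone⟩ := exists_forall_slicePsi_mul_cubePsi_eq_one (p := p) hpairs
  have hpos : (0 : ℝ) < #{x : SlicePoint n p | x.1 ≤ y} := by
    have hall := card_slice_between hm (empty_subset (ones y)) (Nat.zero_le m)
    simp only [empty_subset, true_and, card_empty, Nat.sub_zero] at hall
    rw [hall]
    exact Nat.cast_pos.2 (Nat.choose_pos hy)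
  rw [downAvg_mul, le_div_iff₀ hpos]
  calc (p / 4) ^ L.length * cubePsi L y ^ 2 * #{x : SlicePoint n p | x.1 ≤ y}
      ≤ (p / 4) ^ #A * 1 * #{x : SlicePoint n p | x.1 ≤ y} := by
        gcongr ?_ * ?_ * _
        · exact pow_le_pow_of_le_one (by positivity) (by linarith) hAL
        · exact cubePsi_sq_le_one L y
    _ ≤ #{x : SlicePoint n p | A ⊆ ones x.1 ∧ x.1 ≤ y} := by
        rw [mul_one]
        exact mul_card_le_card_between hm hp₀.le hA (hAL.trans hLm) hy
    _ = ∑ x : SlicePoint n p with A ⊆ ones x.1 ∧ x.1 ≤ y, slicePsi L x * cubePsi L y := by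
        rw [sum_congr rfl fun x hx => hone x (mem_filter.1 hx).2.1 (mem_filter.1 hx).2.2,
          sum_const, nsmul_one]
    _ ≤ ∑ x : SlicePoint n p with x.1 ≤ y, slicePsi L x * cubePsi L y :=
        sum_le_sum_of_subset_of_nonneg (monotone_filter_right _ fun x _ hx => hx.2)
          fun x hx _ => slicePsi_mul_cubePsi_nonneg L (mem_filter.1 hx).2

lemma card_ones_add_card_ones_compl (y : Fin n → Bool) : #(ones y) + #(ones yᶜ) = n := by
  have hcompl : ones yᶜ = (ones y)ᶜ := by ext i; simp [mem_ones]
  rw [hcompl, card_add_card_compl, Fintype.card_fin]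

lemma two_mul_le_of_density (hm : (m : ℝ) = p * n) (hp₁ : p ≤ 1 / 2) : 2 * m ≤ n := by
  have : (2 * m : ℝ) ≤ n := by
    rw [hm]
    nlinarith [(Nat.cast_nonneg n : (0 : ℝ) ≤ n)]
  exact_mod_cast this

lemma le_cExp_downAvg_slicePsi_mul_cubePsi (hm : (m : ℝ) = p * n) (hp₀ : 0 < p) (hp₁ : p ≤ 1 / 2)
    (hL : (entries L).Nodup) (hLm : L.length ≤ m) :
    (p / 8) ^ L.length / 2 ≤ cExp (downAvg n p (slicePsi L) * cubePsi L) := by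
  have hmn := two_mul_le_of_density hm hp₁
  set F := downAvg n p (slicePsi L) * cubePsi L
  have hF₀ (y : Fin n → Bool) : 0 ≤ F y := downAvg_slicePsi_mul_cubePsi_nonneg L y
  have hF {y : Fin n → Bool} (hy : m ≤ #(ones y)) : (p / 4) ^ L.length * cubePsi L y ^ 2 ≤ F y :=
    mul_sq_le_downAvg_slicePsi_mul_cubePsi hm hp₀ (by linarith) hLm hy
  have hcompl (y : Fin n → Bool) : cubePsi L yᶜ ^ 2 = cubePsi L y ^ 2 := by
    rw [sq, sq, cubePsi_mul_cubePsi, cubePsi_mul_cubePsi]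
    refine congrArg List.prod (List.map_congr_left fun q _ => ?_)
    cases h₁ : y q.1 <;> cases h₂ : y q.2 <;> simp [h₁, h₂]
  have hpoint : (p / 4) ^ L.length • cubePsi L ^ 2 ≤ F + F ∘ compl := fun y => by
    have hcard := card_ones_add_card_ones_compl y
    change (p / 4) ^ L.length * cubePsi L y ^ 2 ≤ F y + F yᶜ
    obtain hy | hy : m ≤ #(ones y) ∨ m ≤ #(ones yᶜ) := by omega
    · linarith [hF hy, hF₀ yᶜ]
    · linarith [hcompl y ▸ hF hy, hF₀ y]
  have hmean := cExp_mono hpoint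
  rw [cExp_smul, cExp_cubePsi_sq hL, cExp_add, cExp_comp_involutive compl_involutive,
    ← mul_pow] at hmean
  have hbase : p / 4 * (1 / 2) = p / 8 := by ring
  rw [hbase] at hmean
  linarith

end Correlation

section Spectral

variable {m k d : ℕ} {L : List (Fin n × Fin n)} {f : SlicePoint n p → ℝ} {lam : ℝ}

lemma pow_le_cExp_downAvg_slicePsi_mul_cubePsi (hm : (m : ℝ) = p * n) (hp₀ : 0 < p)
    (hp₁ : p ≤ 1 / 2) (hL : (entries L).Nodup) (hLm : L.length ≤ m) :
    p ^ (4 * L.length + 1) ≤ cExp (downAvg n p (slicePsi L) * cubePsi L) := by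
  have hbase : p ^ 4 ≤ p / 8 := by
    have : p ^ 3 ≤ (1 / 2) ^ 3 := pow_le_pow_left₀ hp₀.le hp₁ 3
    nlinarith
  refine le_trans ?_ (le_cExp_downAvg_slicePsi_mul_cubePsi hm hp₀ hp₁ hL hLm)
  calc p ^ (4 * L.length + 1) = (p ^ 4) ^ L.length * p := by rw [pow_succ, pow_mul]
    _ ≤ (p / 8) ^ L.length * (1 / 2) := by gcongr
    _ = (p / 8) ^ L.length / 2 := by ring

lemma cExp_cubePsi_sq_le_one (hL : (entries L).Nodup) : cExp (cubePsi L ^ 2) ≤ 1 := by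
  rw [cExp_cubePsi_sq hL]
  exact pow_le_one₀ (by norm_num) (by norm_num)

lemma pow_le_sNormSq_slicePsi (hm : (m : ℝ) = p * n) (hp₀ : 0 < p) (hp₁ : p ≤ 1 / 2)
    (hL : (entries L).Nodup) (hLm : L.length ≤ m) :
    p ^ (8 * L.length + 2) ≤ sNormSq (slicePsi L : SlicePoint n p → ℝ) := by
  calc p ^ (8 * L.length + 2) = (p ^ (4 * L.length + 1)) ^ 2 := by rw [← pow_mul]; congr 1; ring
    _ ≤ cExp (downAvg n p (slicePsi L) * cubePsi L) ^ 2 := by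
      gcongr
      exact pow_le_cExp_downAvg_slicePsi_mul_cubePsi hm hp₀ hp₁ hL hLm
    _ ≤ cExp (downAvg n p (slicePsi L) ^ 2) * cExp (cubePsi L ^ 2) := cExp_mul_sq_le _ _
    _ ≤ cExp (downAvg n p (slicePsi L) ^ 2) :=
      mul_le_of_le_one_right (cExp_nonneg fun y => sq_nonneg _) (cExp_cubePsi_sq_le_one hL)
    _ ≤ sNormSq (slicePsi L : SlicePoint n p → ℝ) := cExp_downAvg_sq_le _

lemma pow_le_sInner_sliceNoise_slicePsi (hm : (m : ℝ) = p * n) (hp₀ : 0 < p) (hp₁ : p ≤ 1 / 2)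
    (hL : (entries L).Nodup) (hLm : L.length ≤ m) :
    p ^ (10 * L.length + 2) ≤ sInner (slicePsi L) (sliceNoise n p (slicePsi L)) := by
  set F := downAvg n p (slicePsi L)
  have hnoise : cExp (cubeNoise (1 / 2) F * cubePsi L) =
      (1 / 2) ^ L.length * cExp (F * cubePsi L) := by
    rw [← cExp_mul_cubeNoise, cubeNoise_cubePsi hL, mul_smul_comm, cExp_smul]
  calc p ^ (10 * L.length + 2) = (p ^ L.length * p ^ (4 * L.length + 1)) ^ 2 := by
        rw [← pow_add, ← pow_mul]; congr 1; ring
    _ ≤ cExp (cubeNoise (1 / 2) F * cubePsi L) ^ 2 := by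
      rw [hnoise]
      gcongr
      exact pow_le_cExp_downAvg_slicePsi_mul_cubePsi hm hp₀ hp₁ hL hLm
    _ ≤ cExp (cubeNoise (1 / 2) F ^ 2) * cExp (cubePsi L ^ 2) := cExp_mul_sq_le _ _
    _ ≤ cExp (cubeNoise (1 / 2) F ^ 2) :=
      mul_le_of_le_one_right (cExp_nonneg fun y => sq_nonneg _) (cExp_cubePsi_sq_le_one hL)
    _ = sInner (slicePsi L) (sliceNoise n p (slicePsi L)) := (sInner_sliceNoise_self _).symm

lemma exists_isPairing {ι : Type*} (d : ℕ) (A : Finset ι) (hA : 2 * d ≤ #A) :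
    ∃ L, IsPairing A d L := by
  induction d generalizing A with
  | zero => exact ⟨[], by simp [IsPairing, DistinctIn]⟩
  | succ d ih =>
    obtain ⟨a, ha, b, hb, hab⟩ := one_lt_card.1 (by omega : 1 < #A)
    have hb' : b ∈ A.erase a := mem_erase.2 ⟨hab.symm, hb⟩
    obtain ⟨L, hL, hd⟩ := ih ((A.erase a).erase b) (by
      rw [card_erase_of_mem hb', card_erase_of_mem ha]
      omega)
    refine ⟨(a, b) :: L, isPairing_cons.2 ⟨distinctIn_cons.2 ⟨ha, fun haL => ?_,
      distinctIn_cons.2 ⟨hb, fun hbL => notMem_erase b _ (hL.2 b hbL), ?_⟩⟩, hd⟩⟩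
    · exact (List.mem_cons.1 haL).elim hab
        fun haL => notMem_erase a A (mem_of_mem_erase (hL.2 a haL))
    · exact hL.mono ((erase_subset b _).trans (erase_subset a A))

lemma pow_le_eigenvalue (hm : (m : ℝ) = p * n) (hp₀ : 0 < p) (hp₁ : p ≤ 1 / 2) (hdm : d ≤ m)
    (hlam : ∀ f ∈ degLE n p d, sliceNoise n p f - lam • f ∈ degLT n p d) :
    p ^ (10 * d + 2) ≤ lam := by
  have hmn := two_mul_le_of_density hm hp₁
  obtain ⟨L, ⟨hL, -⟩, rfl⟩ := exists_isPairing d (univ : Finset (Fin n)) (by simp; omega)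
  have hRayleigh : sInner (slicePsi L) (sliceNoise n p (slicePsi L)) =
      lam * sNormSq (slicePsi L : SlicePoint n p → ℝ) := by
    have h₀ := (slicePsi_isAlternating hL).sInner_eq_zero hL (hlam _ (slicePsi_mem_degLE hL))
    rwa [sInner_sub_right, sInner_smul_right, sub_eq_zero] at h₀
  have hlow := pow_le_sInner_sliceNoise_slicePsi hm hp₀ hp₁ hL hdm
  rw [hRayleigh] at hlow
  have hpow : 0 < p ^ (10 * L.length + 2) := by positivity
  have hlam₀ : 0 ≤ lam :=
    (pos_of_mul_pos_left (hpow.trans_le hlow) (sNormSq_nonneg _)).le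
  exact hlow.trans (mul_le_of_le_one_right hlam₀ (sNormSq_slicePsi_le_one L))

lemma mem_degLE_card_ones (hm : (m : ℝ) = p * n) (f : SlicePoint n p → ℝ) : f ∈ degLE n p m := by
  have hdelta (x x' : SlicePoint n p) : andT (ones x.1) x' = if x' = x then 1 else 0 := by
    simp only [andT, coordR, prod_boole]
    congr 1
    refine propext ⟨fun h => ?_, ?_⟩
    · have hsub : ones x.1 ⊆ ones x'.1 := fun i hi => mem_ones.2 (h i hi)
      have heq : ones x.1 = ones x'.1 :=
        eq_of_subset_of_card_le hsub (by rw [card_ones_slice hm, card_ones_slice hm])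
      exact Subtype.ext (le_antisymm (ones_subset_ones.1 heq.ge) (ones_subset_ones.1 heq.le))
    · rintro rfl i hi
      exact mem_ones.1 hi
  have hf : f = ∑ x, f x • andT (ones x.1) := by
    funext x'
    simp [hdelta]
  rw [hf]
  exact Submodule.sum_mem _ fun x _ =>
    Submodule.smul_mem _ _ (andT_mem_degLE (card_ones_slice hm x).le)

lemma pow_mul_sNormSq_le_of_mem_degLT (hm : (m : ℝ) = p * n) (hp₀ : 0 < p) (hp₁ : p ≤ 1 / 2)
    (hk : 1 ≤ k) (hd : d ≤ min k m + 1) (hf : f ∈ degLT n p d) :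
    p ^ (12 * k) * sNormSq f ≤ sInner f (sliceNoise n p f) := by
  induction d generalizing f with
  | zero =>
    rw [degLT_zero, Submodule.mem_bot] at hf
    simp [hf, sNormSq]
  | succ d ih =>
    rw [degLT_succ] at hf
    obtain ⟨w, hw, horth⟩ := exists_orthogonal_projection (degLT n p d) f
    obtain ⟨lam, hlam⟩ := sliceNoise_isEquivariant.exists_eigenvalue (n := n) (p := p) d
    obtain ⟨v, rfl⟩ : ∃ v, f = v + w := ⟨f - w, (sub_add_cancel f w).symm⟩
    rw [add_sub_cancel_right] at horth
    have hlow : p ^ (12 * k) ≤ lam :=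
      (pow_le_pow_of_le_one hp₀.le (by linarith) (by omega)).trans
        (pow_le_eigenvalue hm hp₀ hp₁ (by omega) hlam)
    have hvv : sInner v (sliceNoise n p v) = lam * sNormSq v := by
      have h₀ := horth _ (hlam v ((Submodule.add_mem_iff_left _ (degLT_le_degLE d hw)).1 hf))
      rwa [sInner_sub_right, sInner_smul_right, sub_eq_zero] at h₀
    have hvw : sInner v (sliceNoise n p w) = 0 :=
      horth _ (sliceNoise_isEquivariant.apply_mem_degLT hw)
    have hwv : sInner w (sliceNoise n p v) = 0 := by rw [sInner_sliceNoise_comm, hvw]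
    have hww := ih (by omega) hw
    rw [map_add, sNormSq_add, horth w hw, sInner_add_right, sInner_add_left, sInner_add_left, hvv,
      hvw, hwv]
    linarith [mul_le_mul_of_nonneg_right hlow (sNormSq_nonneg v)]

lemma pow_mul_sNormSq_le_sInner_sliceNoise (hm : (m : ℝ) = p * n) (hp₀ : 0 < p)
    (hp₁ : p ≤ 1 / 2) (hk : 1 ≤ k) (hf : f ∈ degLE n p k) :
    p ^ (12 * k) * sNormSq f ≤ sInner f (sliceNoise n p f) := by
  refine pow_mul_sNormSq_le_of_mem_degLT hm hp₀ hp₁ hk le_rfl ?_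
  rw [degLT_succ]
  obtain h | h := le_total k m
  · rwa [min_eq_left h]
  · rw [min_eq_right h]
    exact mem_degLE_card_ones hm f

end Spectral

/-! ### The gap for functions with discrete values -/

section Gap

variable {m k l : ℕ} {f f₁ g : SlicePoint n p → ℝ} {ε : ℝ}

/-- The function `f` takes values in `2⁻ˡ ℤ`. -/
def IsDyadic (l : ℕ) (f : SlicePoint n p → ℝ) : Prop := ∀ x, ∃ z : ℤ, 2 ^ l * f x = z

lemma IsDyadic.sub (hf : IsDyadic l f) (hg : IsDyadic l g) : IsDyadic l (f - g) := fun x => by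
  obtain ⟨z, hz⟩ := hf x
  obtain ⟨w, hw⟩ := hg x
  exact ⟨z - w, by rw [Pi.sub_apply, mul_sub, hz, hw, Int.cast_sub]⟩

lemma IsDyadic.permFun (hf : IsDyadic l f) (π : Equiv.Perm (Fin n)) : IsDyadic l (permFun π f) :=
  fun x => hf (permPt π x)

lemma IsDyadic.one_le_of_ne_zero (hf : IsDyadic l f) {x : SlicePoint n p} (hx : f x ≠ 0) :
    1 ≤ 4 ^ l * f x ^ 2 := by
  obtain ⟨z, hz⟩ := hf x
  have hz₀ : z ≠ 0 := by
    rintro rfl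
    rw [Int.cast_zero] at hz
    exact mul_ne_zero (by positivity) hx hz
  have hz₁ : 0 < z ^ 2 := by positivity
  calc (1 : ℝ) ≤ (z : ℝ) ^ 2 := by exact_mod_cast hz₁
    _ = 4 ^ l * f x ^ 2 := by rw [← hz, mul_pow, ← pow_mul, mul_comm l, pow_mul]; norm_num

lemma sInner_pow_four_le (f φ : SlicePoint n p → ℝ) :
    sInner f φ ^ 4 ≤ sNormSq f ^ 2 * (sExp (fun x => if f x = 0 then 0 else 1) * sExp (φ ^ 4)) := by
  set χ : SlicePoint n p → ℝ := fun x => if f x = 0 then 0 else 1 with hχ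
  have hcases (x : SlicePoint n p) : f x = 0 ∧ χ x = 0 ∨ χ x = 1 := by
    by_cases h : f x = 0 <;> simp [hχ, h]
  have hrestrict : sInner f φ = sInner f (χ * φ) := by
    refine congrArg sExp (funext fun x => ?_)
    obtain ⟨h, -⟩ | h := hcases x <;> simp [h]
  have hsq : sNormSq (χ * φ) = sInner χ (φ ^ 2) := by
    refine congrArg sExp (funext fun x => ?_)
    obtain ⟨-, h⟩ | h := hcases x <;> simp [h, sq]
  have hχsq : sNormSq χ = sExp χ := by
    refine congrArg sExp (funext fun x => ?_)
    obtain ⟨-, h⟩ | h := hcases x <;> simp [h]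
  have hφ : sNormSq (φ ^ 2) = sExp (φ ^ 4) := by rw [sNormSq_eq_sExp_sq, ← pow_mul]
  calc sInner f φ ^ 4 = (sInner f (χ * φ) ^ 2) ^ 2 := by rw [hrestrict]; ring
    _ ≤ (sNormSq f * sInner χ (φ ^ 2)) ^ 2 := by
      rw [← hsq]
      gcongr
      exact sInner_sq_le _ _
    _ = sNormSq f ^ 2 * sInner χ (φ ^ 2) ^ 2 := mul_pow _ _ 2
    _ ≤ sNormSq f ^ 2 * (sExp χ * sExp (φ ^ 4)) := by
      rw [← hχsq, ← hφ]
      gcongr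
      exact sInner_sq_le _ _

lemma IsDyadic.sInner_sliceNoise_sq_le (hf : IsDyadic l f) :
    sInner f (sliceNoise n p f) ^ 2 ≤ 4 ^ l * sNormSq f ^ 3 := by
  have hsupp : sExp (fun x => if f x = 0 then 0 else 1) ≤ 4 ^ l * sNormSq f := by
    rw [sNormSq, ← sInner_smul_left]
    refine sExp_mono fun x => ?_
    change (if f x = 0 then 0 else 1 : ℝ) ≤ 4 ^ l * f x * f x
    split_ifs with hx
    · simp [hx]
    · linarith [hf.one_le_of_ne_zero hx]
  set s := sNormSq f
  have hs : 0 ≤ s := sNormSq_nonneg f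
  have hmain := sInner_pow_four_le f (sliceNoise n p f)
  have hfour := sExp_sliceNoise_pow_four_le f
  have hfour₀ : 0 ≤ sExp (sliceNoise n p f ^ 4) := by
    have := sNormSq_nonneg (sliceNoise n p f ^ 2)
    rwa [sNormSq_eq_sExp_sq, ← pow_mul] at this
  set r := sInner f (sliceNoise n p f)
  obtain hr | hr := eq_or_ne r 0
  · rw [hr, zero_pow two_ne_zero]
    positivity
  have hr₀ : 0 < r ^ 2 := by positivity
  refine le_of_mul_le_mul_right ?_ hr₀
  calc r ^ 2 * r ^ 2 = r ^ 4 := by ring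
    _ ≤ s ^ 2 * (sExp (fun x => if f x = 0 then 0 else 1) * sExp (sliceNoise n p f ^ 4)) := hmain
    _ ≤ s ^ 2 * (4 ^ l * s * r ^ 2) := by gcongr
    _ = 4 ^ l * s ^ 3 * r ^ 2 := by ring

lemma IsLowProj.sNormSq_eq (h : IsLowProj n p k f f₁) :
    sNormSq f = sNormSq f₁ + sNormSq (f - f₁) := by
  have horth : sInner f₁ (f - f₁) = 0 := by rw [sInner_comm, h.2 _ h.1]
  rw [← add_sub_cancel f₁ f, sNormSq_add, add_sub_cancel, horth]
  ring

lemma IsLowProj.sInner_sliceNoise_le (h : IsLowProj n p k f f₁) :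
    sInner f₁ (sliceNoise n p f₁) ≤ sInner f (sliceNoise n p f) := by
  have hcross : sInner (f - f₁) (sliceNoise n p f₁) = 0 :=
    h.2 _ (sliceNoise_isEquivariant.apply_mem_degLE h.1)
  have hcross' : sInner f₁ (sliceNoise n p (f - f₁)) = 0 := by rw [sInner_sliceNoise_comm, hcross]
  have hpos := sInner_sliceNoise_self_nonneg (f - f₁)
  obtain ⟨f₂, rfl⟩ : ∃ f₂, f = f₁ + f₂ := ⟨f - f₁, (add_sub_cancel f₁ f).symm⟩
  rw [add_sub_cancel_left] at hcross hcross' hpos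
  rw [map_add, sInner_add_right, sInner_add_left, sInner_add_left,
    hcross, hcross']
  linarith

/-- If a nonzero `f` is close to its low-degree part, then the spectral bound makes `⟨f, R f⟩`
comparable to `‖f‖²`, while hypercontractivity bounds it by a multiple of `‖f‖³`, so `‖f‖` is
bounded below. -/
theorem IsDyadic.sNormSq_le_of_isLowProj (hf : IsDyadic l f) (hm : (m : ℝ) = p * n) (hp₀ : 0 < p)
    (hp₁ : p ≤ 1 / 2) (hk : 1 ≤ k) (hl : l ≤ k) (hproj : IsLowProj n p k f f₁)
    (hε : sNormSq (f - f₁) ≤ ε) (hsmall : sNormSq f ≤ p ^ (28 * k)) : sNormSq f ≤ 2 * ε := by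
  by_contra! hlarge
  have hspec := (pow_mul_sNormSq_le_sInner_sliceNoise hm hp₀ hp₁ hk hproj.1).trans
    hproj.sInner_sliceNoise_le
  have hnorm := hproj.sNormSq_eq
  have hnoise := hf.sInner_sliceNoise_sq_le
  have hf₁ := sNormSq_nonneg (f - f₁)
  set s := sNormSq f
  have hs : 0 < s := by linarith
  have hlow : p ^ (12 * k) * (s / 2) < sInner f (sliceNoise n p f) :=
    (mul_lt_mul_of_pos_left (by linarith) (by positivity)).trans_le hspec
  have hgap : p ^ (24 * k) < 4 * 4 ^ l * s := by
    refine lt_of_mul_lt_mul_right ?_ (by positivity : 0 ≤ s ^ 2 / 4)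
    calc p ^ (24 * k) * (s ^ 2 / 4) = (p ^ (12 * k) * (s / 2)) ^ 2 := by
          rw [mul_pow, ← pow_mul]
          ring
      _ < sInner f (sliceNoise n p f) ^ 2 := by gcongr
      _ ≤ 4 ^ l * s ^ 3 := hnoise
      _ = 4 * 4 ^ l * s * (s ^ 2 / 4) := by ring
  refine hgap.not_ge ?_
  calc 4 * 4 ^ l * s ≤ 4 ^ k * 4 ^ k * p ^ (28 * k) := by
        gcongr
        · exact le_self_pow₀ (by norm_num) (by omega)
        · norm_num
    _ = (16 * p ^ 4) ^ k * p ^ (24 * k) := by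
      rw [mul_pow, ← mul_pow, ← pow_mul, mul_assoc, ← pow_add]
      congr 2
      · norm_num
      · ring
    _ ≤ p ^ (24 * k) := by
      refine mul_le_of_le_one_left (by positivity) (pow_le_one₀ (by positivity) ?_)
      have : p ^ 4 ≤ (1 / 2) ^ 4 := pow_le_pow_left₀ hp₀.le hp₁ 4
      linarith

end Gap

/-! ### Iterated derivatives -/

section Derivatives

variable {k l : ℕ} {f f₁ g F : SlicePoint n p → ℝ} {q r : Fin n × Fin n}
  {L L' : List (Fin n × Fin n)}

/-- The derivative `D_{ab}` along a pair `q = (a, b)`, as a linear map. -/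
noncomputable def pairDeriv (q : Fin n × Fin n) : Module.End ℝ (SlicePoint n p → ℝ) :=
  (1 / 2 : ℝ) • (1 - permFun (Equiv.swap q.1 q.2))

lemma pairDeriv_apply (q : Fin n × Fin n) (f : SlicePoint n p → ℝ) :
    pairDeriv q f = (1 / 2 : ℝ) • (f - permFun (Equiv.swap q.1 q.2) f) :=
  rfl

lemma Dij_eq_pairDeriv (a b : Fin n) (f : SlicePoint n p → ℝ) : Dij a b f = pairDeriv (a, b) f := by
  funext x
  rw [pairDeriv_apply, Pi.smul_apply, one_div, smul_eq_mul, ← div_eq_inv_mul]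
  rfl

lemma pairDeriv_swap (q : Fin n × Fin n) :
    (pairDeriv q.swap : Module.End ℝ (SlicePoint n p → ℝ)) = pairDeriv q := by
  rw [pairDeriv, Prod.fst_swap, Prod.snd_swap, Equiv.swap_comm, pairDeriv]

lemma permFun_pairDeriv (q : Fin n × Fin n) (f : SlicePoint n p → ℝ) :
    permFun (Equiv.swap q.1 q.2) (pairDeriv q f) = -pairDeriv q f := by
  rw [pairDeriv_apply, map_smul, map_sub, permFun_permFun, Equiv.swap_mul_self, permFun_one,
    ← smul_neg, neg_sub]

lemma pairDeriv_eq_self (hF : permFun (Equiv.swap q.1 q.2) F = -F) : pairDeriv q F = F := by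
  rw [pairDeriv_apply, hF, sub_neg_eq_add, ← two_smul ℝ, smul_smul]
  norm_num

lemma sInner_pairDeriv_left (q : Fin n × Fin n) (f g : SlicePoint n p → ℝ) :
    sInner (pairDeriv q f) g = sInner f (pairDeriv q g) := by
  simp only [pairDeriv_apply, sInner_smul_left, sInner_smul_right, sInner_sub_left,
    sInner_sub_right, sInner_permFun_left, Equiv.swap_inv]

lemma sNormSq_pairDeriv_le (q : Fin n × Fin n) (f : SlicePoint n p → ℝ) :
    sNormSq (pairDeriv q f) ≤ sNormSq f := by
  rw [pairDeriv_apply, sNormSq_smul]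
  linarith [sNormSq_sub_le f (permFun (Equiv.swap q.1 q.2) f),
    sNormSq_permFun (Equiv.swap q.1 q.2) f]

lemma pairDeriv_mem_degLE (hf : f ∈ degLE n p k) : pairDeriv q f ∈ degLE n p k :=
  Submodule.smul_mem _ _ (Submodule.sub_mem _ hf (permFun_mem_degLE _ hf))

lemma IsLowProj.pairDeriv (h : IsLowProj n p k f f₁) (q : Fin n × Fin n) :
    IsLowProj n p k (pairDeriv q f) (pairDeriv q f₁) := by
  refine ⟨pairDeriv_mem_degLE h.1, fun g hg => ?_⟩
  rw [← map_sub, sInner_pairDeriv_left, h.2 _ (pairDeriv_mem_degLE hg)]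

lemma IsDyadic.pairDeriv (hf : IsDyadic l f) (q : Fin n × Fin n) :
    IsDyadic (l + 1) (pairDeriv q f) := fun x => by
  obtain ⟨z, hz⟩ := hf.sub (hf.permFun (Equiv.swap q.1 q.2)) x
  refine ⟨z, ?_⟩
  rw [pairDeriv_apply, Pi.smul_apply, smul_eq_mul, ← hz]
  ring

lemma commute_pairDeriv (h : (entries [q, r]).Nodup) :
    Commute (pairDeriv q : Module.End ℝ (SlicePoint n p → ℝ)) (pairDeriv r) := by
  have hswap : Commute (Equiv.swap q.1 q.2) (Equiv.swap r.1 r.2) :=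
    (Equiv.Perm.disjoint_swap_swap h).commute
  have hperm : Commute (permFun (Equiv.swap q.1 q.2) : Module.End ℝ (SlicePoint n p → ℝ))
      (permFun (Equiv.swap r.1 r.2)) :=
    LinearMap.ext fun f => by
      rw [Module.End.mul_apply, Module.End.mul_apply, permFun_permFun, permFun_permFun, hswap.eq]
  exact (((Commute.one_right _).sub_right
    ((Commute.one_left _).sub_left hperm)).smul_left _).smul_right _

/-- The composition of the derivatives along the pairs of a list. -/
noncomputable def listDeriv (L : List (Fin n × Fin n)) : Module.End ℝ (SlicePoint n p → ℝ) :=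
  (L.map pairDeriv).prod

@[simp] lemma listDeriv_nil (f : SlicePoint n p → ℝ) : listDeriv [] f = f := rfl

lemma listDeriv_cons (q : Fin n × Fin n) (L : List (Fin n × Fin n)) (f : SlicePoint n p → ℝ) :
    listDeriv (q :: L) f = pairDeriv q (listDeriv L f) := by
  rw [listDeriv, List.map_cons, List.prod_cons, Module.End.mul_apply, listDeriv]

lemma listDeriv_perm (h : L.Perm L') (hL : (entries L).Nodup) :
    (listDeriv L : Module.End ℝ (SlicePoint n p → ℝ)) = listDeriv L' := by
  refine (h.map _).prod_eq' ?_
  rw [List.pairwise_map]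
  refine (List.nodup_flatMap.1 hL).2.imp_of_mem fun {q r} hq hr hqr => commute_pairDeriv ?_
  have hpair := (List.nodup_flatMap.1 hL).1
  exact (hpair q hq).append (hpair r hr) hqr

lemma listDeriv_isAlternating (hL : (entries L).Nodup) (f : SlicePoint n p → ℝ) :
    IsAlternating L (listDeriv L f) := by
  intro q hq
  rw [listDeriv_perm (List.perm_cons_erase hq) hL, listDeriv_cons, permFun_pairDeriv]

lemma sInner_listDeriv_left (hF : IsAlternating L F) (f : SlicePoint n p → ℝ) :
    sInner (listDeriv L f) F = sInner f F := by
  induction L with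
  | nil => rfl
  | cons q L ih =>
    rw [IsAlternating, List.forall_mem_cons] at hF
    rw [listDeriv_cons, sInner_pairDeriv_left, pairDeriv_eq_self hF.1, ih hF.2]

lemma sNormSq_listDeriv_le (L : List (Fin n × Fin n)) (f : SlicePoint n p → ℝ) :
    sNormSq (listDeriv L f) ≤ sNormSq f := by
  induction L with
  | nil => rfl
  | cons q L ih => exact (sNormSq_pairDeriv_le q _).trans ih

lemma IsLowProj.listDeriv (h : IsLowProj n p k f f₁) (L : List (Fin n × Fin n)) :
    IsLowProj n p k (listDeriv L f) (listDeriv L f₁) := by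
  induction L with
  | nil => exact h
  | cons q L ih => exact ih.pairDeriv q

lemma IsDyadic.listDeriv (hf : IsDyadic l f) (L : List (Fin n × Fin n)) :
    IsDyadic (l + L.length) (listDeriv L f) := by
  induction L with
  | nil => exact hf
  | cons q L ih => exact ih.pairDeriv q

lemma DP_eq_listDeriv (P : Finset (Fin n × Fin n)) (f : SlicePoint n p → ℝ) :
    DP P f = listDeriv P.toList f := by
  rw [DP]
  induction P.toList with
  | nil => rfl
  | cons q L ih => rw [List.foldr_cons, ih, Dij_eq_pairDeriv, listDeriv_cons]

lemma IsTuple.isPairing {P : Finset (Fin n × Fin n)} (hP : IsTuple k P) :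
    IsPairing univ k P.toList := by
  obtain ⟨hcard, hlt, hdisj⟩ := hP
  refine ⟨⟨List.nodup_flatMap.2 ⟨fun q hq => ?_, ?_⟩, fun _ _ => mem_univ _⟩,
    (length_toList P).trans hcard⟩
  · simpa using (hlt q (mem_toList.1 hq)).ne
  · refine P.nodup_toList.pairwise_of_forall_ne fun q hq r hr hqr => ?_
    have := hdisj q (mem_toList.1 hq) r (mem_toList.1 hr) hqr
    simp only [Function.onFun, List.disjoint_cons_left, List.mem_cons, List.not_mem_nil, or_false,
      not_or, List.disjoint_nil_left]
    tauto

/-- The pair `q` with its smaller entry first. -/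
def orientPair (q : Fin n × Fin n) : Fin n × Fin n := if q.1 < q.2 then q else q.swap

lemma entries_map_orientPair_perm (L : List (Fin n × Fin n)) :
    (entries (L.map orientPair)).Perm (entries L) := by
  induction L with
  | nil => rfl
  | cons q L ih =>
    rw [List.map_cons, entries_cons, entries_cons, orientPair]
    split_ifs
    · exact (ih.cons _).cons _
    · exact (List.Perm.swap _ _ _).trans ((ih.cons _).cons _)

lemma listDeriv_map_orientPair (L : List (Fin n × Fin n)) :
    (listDeriv (L.map orientPair) : Module.End ℝ (SlicePoint n p → ℝ)) = listDeriv L := by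
  rw [listDeriv, List.map_map, listDeriv]
  refine congrArg List.prod (List.map_congr_left fun q _ => ?_)
  rw [Function.comp_apply, orientPair]
  split_ifs
  exacts [rfl, pairDeriv_swap q]

lemma IsPairing.exists_isTuple (hL : IsPairing univ k L) (f : SlicePoint n p → ℝ) :
    ∃ P, IsTuple k P ∧ DP P f = listDeriv L f := by
  obtain ⟨⟨hL, -⟩, rfl⟩ := hL
  set L' := L.map orientPair with hL'
  have hent : (entries L').Nodup := (entries_map_orientPair_perm L).nodup_iff.2 hL
  have hnodup := nodup_of_nodup_entries hent
  have hmeet {i : Fin n} {q r : Fin n × Fin n} (hq : q ∈ L'.toFinset) (hr : r ∈ L'.toFinset)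
      (hqr : q ≠ r) (hiq : i = q.1 ∨ i = q.2) : ¬(i = r.1 ∨ i = r.2) := fun hir =>
    hqr (eq_of_mem_entries hent (List.mem_toFinset.1 hq) (List.mem_toFinset.1 hr) hiq hir)
  refine ⟨L'.toFinset, ⟨?_, fun q hq => ?_, fun q hq r hr hqr => ?_⟩, ?_⟩
  · rw [List.toFinset_card_of_nodup hnodup, hL', List.length_map]
  · obtain ⟨r, hr, rfl⟩ := List.mem_map.1 (List.mem_toFinset.1 hq)
    obtain ⟨-, -, hne, -⟩ := exists_perm_cons_of_mem hL hr
    rw [orientPair]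
    split_ifs with h
    exacts [h, lt_of_le_of_ne (not_lt.1 h) hne.symm]
  · have h₁ := hmeet hq hr hqr (.inl rfl)
    have h₂ := hmeet hq hr hqr (.inr rfl)
    tauto
  · have hperm : L'.toFinset.toList.Perm L' := List.toFinset_toList hnodup
    rw [DP_eq_listDeriv, ← listDeriv_perm hperm.symm hent, listDeriv_map_orientPair]

end Derivatives

/-! ### Derivatives of homogeneous multilinear polynomials -/

section Multilinear

variable {l : ℕ} {g : SlicePoint n p → ℝ} {q : Fin n × Fin n} {L : List (Fin n × Fin n)}
  {T : Finset (Fin n)}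

section Indicator

variable {ι : Type*} {L : List (ι × ι)} {T : Finset ι} {z : ι}

lemma altSum_indicator_cons_singleton (hz : z ∉ entries L) (hzT : z ∉ T) :
    altSum (Set.indicator {cons z T hzT} (1 : Finset ι → ℝ)) L {z} =
      altSum (Set.indicator {T} 1) L ∅ := by
  rw [← erase_singleton z]
  refine altSum_eq_altSum_erase (fun S hzS => ?_) hz (mem_singleton_self z)
  have hiff : S = cons z T hzT ↔ S.erase z = T := by
    rw [cons_eq_insert, erase_eq_iff_eq_insert hzS hzT]
  simp only [Set.indicator_apply, Set.mem_singleton_iff, hiff, Pi.one_apply]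

lemma altSum_indicator_singleton_of_notMem (hz : z ∉ entries L) (hzT : z ∉ T) :
    altSum (Set.indicator {T} (1 : Finset ι → ℝ)) L {z} = 0 := by
  rw [altSum_eq_altSum_erase (v := 0) (fun S hzS => ?_) hz (mem_singleton_self z), altSum_zero]
  exact Set.indicator_of_notMem (s := {T}) (ne_of_mem_of_not_mem' hzS hzT) 1

lemma altSum_indicator_of_mem {S : Finset ι} (hz : z ∉ entries L) (hzT : z ∈ T) (hzS : z ∉ S) :
    altSum (Set.indicator {T} (1 : Finset ι → ℝ)) L S = 0 := by
  rw [altSum_congr_of_notMem (v := 0) (fun R hzR => ?_) hz hzS, altSum_zero]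
  exact Set.indicator_of_notMem (s := {T}) (ne_of_mem_of_not_mem' hzT hzR).symm 1

lemma sum_mul_altSum_indicator [Fintype ι] (u : Finset ι → ℝ) (hL : (entries L).Nodup) :
    ∑ T with #T = L.length, u T * altSum (Set.indicator {T} 1) L ∅ = altSum u L ∅ := by
  let φ : (Finset ι → ℝ) →+ ℝ :=
    ∑ T with #T = L.length, (AddMonoidHom.mulLeft (u T)).comp (Pi.evalAddMonoidHom _ T)
  have hφ (v : Finset ι → ℝ) : φ v = ∑ T with #T = L.length, u T * v T := by
    simp [φ, AddMonoidHom.finsetSum_apply]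
  have heval (T : Finset ι) : altSum (fun S => Set.indicator {S} (1 : Finset ι → ℝ)) L ∅ T =
      altSum (Set.indicator {T} 1) L ∅ := by
    refine (map_altSum (Pi.evalAddMonoidHom (fun _ => ℝ) T) _ L ∅).trans ?_
    congr 1
    funext S
    simp only [Function.comp_apply, Pi.evalAddMonoidHom_apply, Set.indicator_apply,
      Set.mem_singleton_iff, Pi.one_apply, eq_comm]
  have huniv : φ (altSum (fun S => Set.indicator {S} 1) L ∅) = altSum u L ∅ := by
    rw [map_altSum]
    refine altSum_congr_of_card hL (fun _ _ => notMem_empty _) fun S hS => ?_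
    rw [card_empty, zero_add] at hS
    simp only [Function.comp_apply, hφ, Set.indicator_apply, Set.mem_singleton_iff, Pi.one_apply,
      mul_ite, mul_one, mul_zero]
    rw [sum_ite_eq', if_pos (mem_filter.2 ⟨mem_univ S, hS⟩)]
  simp only [← huniv, hφ, heval]

end Indicator

lemma exists_eq_cons {ι : Type*} {T : Finset ι} {z : ι} (hz : z ∈ T) :
    ∃ T' h, T = cons z T' h :=
  ⟨T.erase z, notMem_erase z T, by rw [cons_eq_insert, insert_erase hz]⟩

lemma listDeriv_mul (hg : ∀ q ∈ L, permFun (Equiv.swap q.1 q.2) g = g) (f : SlicePoint n p → ℝ) :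
    listDeriv L (g * f) = g * listDeriv L f := by
  induction L with
  | nil => rfl
  | cons q L ih =>
    rw [List.forall_mem_cons] at hg
    rw [listDeriv_cons, ih hg.2, pairDeriv_apply, permFun_mul, hg.1, ← mul_sub,
      ← mul_smul_comm, ← pairDeriv_apply, listDeriv_cons]

lemma listDeriv_cons_apply (hL : (entries (q :: L)).Nodup) (f : SlicePoint n p → ℝ) :
    listDeriv (q :: L) f = listDeriv L (pairDeriv q f) := by
  rw [listDeriv_perm (List.perm_append_singleton q L).symm hL, listDeriv, List.map_append,
    List.prod_append, Module.End.mul_apply]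
  rfl

lemma pairDeriv_andT_of_mem_iff (hT : q.1 ∈ T ↔ q.2 ∈ T) :
    pairDeriv q (andT T : SlicePoint n p → ℝ) = 0 := by
  have hmap : T.map (Equiv.swap q.1 q.2).toEmbedding = T := by
    ext i
    rw [mem_map_equiv, Equiv.symm_swap]
    grind
  rw [pairDeriv_apply, permFun_andT, Equiv.symm_swap, hmap, sub_self, smul_zero]

lemma two_smul_pairDeriv_andT_insert (h₁ : q.1 ∉ T) (h₂ : q.2 ∉ T) :
    (2 : ℝ) • pairDeriv q (andT (insert q.1 T)) =
      ((fun x => coordR x q.1 - coordR x q.2) * andT T : SlicePoint n p → ℝ) := by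
  have hmap : (insert q.1 T).map (Equiv.swap q.1 q.2).toEmbedding = insert q.2 T := by
    ext i
    rw [mem_map_equiv, Equiv.symm_swap]
    grind
  rw [pairDeriv_apply, smul_smul, permFun_andT, Equiv.symm_swap, hmap]
  funext x
  simp only [Pi.smul_apply, Pi.sub_apply, Pi.mul_apply, andT, prod_insert h₁, prod_insert h₂,
    smul_eq_mul]
  ring

lemma two_pow_smul_listDeriv_insert (hL : (entries (q :: L)).Nodup) (h₁ : q.1 ∉ T) (h₂ : q.2 ∉ T) :
    (2 : ℝ) ^ (q :: L).length • listDeriv (q :: L) (andT (insert q.1 T) : SlicePoint n p → ℝ) =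
      (fun x => coordR x q.1 - coordR x q.2) * (2 : ℝ) ^ L.length • listDeriv L (andT T) := by
  have hinv (r) (hr : r ∈ L) : permFun (Equiv.swap r.1 r.2)
      (fun x : SlicePoint n p => coordR x q.1 - coordR x q.2) =
        fun x => coordR x q.1 - coordR x q.2 := by
    simp only [entries_cons, List.nodup_cons, List.mem_cons, not_or, mem_entries, not_exists,
      not_and] at hL
    have hq₁ := hL.1.2 r hr
    have hq₂ := hL.2.1 r hr
    funext x
    rw [permFun_apply, coordR, coordR, permPt_val, permPt_val, Equiv.symm_swap,
      Equiv.swap_apply_of_ne_of_ne hq₁.1 hq₁.2, Equiv.swap_apply_of_ne_of_ne hq₂.1 hq₂.2]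
    rfl
  rw [List.length_cons, pow_succ, mul_smul, listDeriv_cons_apply hL, ← map_smul,
    two_smul_pairDeriv_andT_insert h₁ h₂, listDeriv_mul hinv, ← mul_smul_comm]

lemma two_pow_smul_listDeriv_insert_snd (hL : (entries (q :: L)).Nodup) (h₁ : q.1 ∉ T)
    (h₂ : q.2 ∉ T) :
    (2 : ℝ) ^ (q :: L).length • listDeriv (q :: L) (andT (insert q.2 T) : SlicePoint n p → ℝ) =
      (fun x => coordR x q.2 - coordR x q.1) * (2 : ℝ) ^ L.length • listDeriv L (andT T) := by
  have hswap := two_pow_smul_listDeriv_insert (p := p) (q := q.swap)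
    ((List.Perm.swap _ _ _).nodup_iff.2 hL) h₂ h₁
  rwa [listDeriv_cons, pairDeriv_swap, ← listDeriv_cons] at hswap

lemma two_pow_smul_listDeriv_andT (hL : (entries L).Nodup) (hT : #T = L.length) :
    (2 : ℝ) ^ L.length • listDeriv L (andT T : SlicePoint n p → ℝ) =
      altSum (Set.indicator {T} (1 : Finset (Fin n) → ℝ)) L ∅ • slicePsi L := by
  induction L generalizing T with
  | nil =>
    rw [List.length_nil, card_eq_zero] at hT
    funext x
    simp [hT, andT, altSum, slicePsi, cubePsi]
  | cons q L ih =>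
    have hL' := hL
    simp only [entries_cons, List.nodup_cons, List.mem_cons, not_or] at hL'
    obtain ⟨⟨hne, h₁⟩, h₂, hL₀⟩ := hL'
    rw [altSum, insert_empty_eq, insert_empty_eq]
    by_cases hq₁ : q.1 ∈ T <;> by_cases hq₂ : q.2 ∈ T
    · rw [altSum_indicator_of_mem h₂ hq₂ (by simpa using Ne.symm hne),
        altSum_indicator_of_mem h₁ hq₁ (by simpa using hne), sub_zero, zero_smul,
        listDeriv_cons_apply hL, pairDeriv_andT_of_mem_iff (by tauto), map_zero, smul_zero]
    · obtain ⟨T, hT₁, rfl⟩ := exists_eq_cons hq₁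
      have hq₂' : q.2 ∉ T := fun h => hq₂ (mem_cons_of_mem h)
      rw [altSum_indicator_cons_singleton h₁ hT₁, altSum_indicator_singleton_of_notMem h₂ hq₂,
        sub_zero, cons_eq_insert, two_pow_smul_listDeriv_insert hL hT₁ hq₂',
        ih hL₀ (Nat.succ.inj ((card_cons hT₁).symm.trans hT))]
      funext x
      simp only [Pi.smul_apply, Pi.mul_apply, smul_eq_mul, slicePsi_cons]
      ring
    · obtain ⟨T, hT₂, rfl⟩ := exists_eq_cons hq₂
      have hq₁' : q.1 ∉ T := fun h => hq₁ (mem_cons_of_mem h)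
      rw [altSum_indicator_singleton_of_notMem h₁ hq₁, altSum_indicator_cons_singleton h₂ hT₂,
        zero_sub, cons_eq_insert, two_pow_smul_listDeriv_insert_snd hL hq₁' hT₂,
        ih hL₀ (Nat.succ.inj ((card_cons hT₂).symm.trans hT))]
      funext x
      simp only [Pi.smul_apply, Pi.mul_apply, smul_eq_mul, slicePsi_cons]
      ring
    · rw [altSum_indicator_singleton_of_notMem h₁ hq₁, altSum_indicator_singleton_of_notMem h₂ hq₂,
        sub_zero, zero_smul, listDeriv_cons_apply hL, pairDeriv_andT_of_mem_iff (by tauto),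
        map_zero, smul_zero]

/-- The homogeneous multilinear polynomial `∑_{|T| = l} u(T) AND_T`. -/
noncomputable def homogPoly (n : ℕ) (p : ℝ) (l : ℕ) (u : Finset (Fin n) → ℤ) :
    SlicePoint n p → ℝ :=
  ∑ T with #T = l, (u T : ℝ) • andT T

lemma homogPoly_mem_degLE (l : ℕ) (u : Finset (Fin n) → ℤ) : homogPoly n p l u ∈ degLE n p l :=
  Submodule.sum_mem _ fun _ hT =>
    Submodule.smul_mem _ _ (andT_mem_degLE (mem_filter.1 hT).2.le)

lemma exists_int_eq_homogPoly (l : ℕ) (u : Finset (Fin n) → ℤ) (x : SlicePoint n p) :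
    ∃ z : ℤ, homogPoly n p l u x = z :=
  ⟨∑ T with #T = l, u T * ∏ i ∈ T, if x.1 i then 1 else 0, by
    simp [homogPoly, Finset.sum_apply, andT, coordR]⟩

lemma two_pow_smul_listDeriv_homogPoly (hL : (entries L).Nodup) (u : Finset (Fin n) → ℤ) :
    (2 : ℝ) ^ L.length • listDeriv L (homogPoly n p L.length u) =
      ((altSum u L ∅ : ℤ) : ℝ) • slicePsi L := by
  have hcast : ((altSum u L ∅ : ℤ) : ℝ) = altSum (fun S => (u S : ℝ)) L ∅ :=
    map_altSum (Int.castAddHom ℝ) u L ∅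
  rw [hcast, ← sum_mul_altSum_indicator _ hL, homogPoly, map_sum, smul_sum, sum_smul]
  refine sum_congr rfl fun T hT => ?_
  rw [map_smul, smul_comm, two_pow_smul_listDeriv_andT hL (mem_filter.1 hT).2, smul_smul]

end Multilinear

/-! ### Averaging over the coordinates outside a pairing -/

section Average

variable {L : List (Fin n × Fin n)} {f : SlicePoint n p → ℝ} {C : ℝ}

lemma sInner_sum_left {ι : Type*} (s : Finset ι) (G : ι → SlicePoint n p → ℝ)
    (g : SlicePoint n p → ℝ) : sInner (∑ i ∈ s, G i) g = ∑ i ∈ s, sInner (G i) g := by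
  simp only [sInner_eq_dotProduct, sum_dotProduct, sum_div]

lemma sNormSq_average_le {ι : Type*} [Fintype ι] [Nonempty ι] {G : ι → SlicePoint n p → ℝ}
    (hG : ∀ i, sNormSq (G i) ≤ C) : sNormSq ((Fintype.card ι : ℝ)⁻¹ • ∑ i, G i) ≤ C := by
  set A := (Fintype.card ι : ℝ)⁻¹ • ∑ i, G i
  have hN : 0 < (Fintype.card ι : ℝ) := Nat.cast_pos.2 Fintype.card_pos
  have hinner (i : ι) : 2 * sInner (G i) A ≤ C + sNormSq A := by
    linarith [sNormSq_nonneg (G i - A), sNormSq_sub (G i) A, hG i]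
  have hsum : Fintype.card ι * sNormSq A = ∑ i, sInner (G i) A := by
    rw [← sInner_sum_left, sNormSq, ← sInner_smul_left, smul_inv_smul₀ hN.ne']
  have hle : ∑ i, 2 * sInner (G i) A ≤ ∑ _ : ι, (C + sNormSq A) := sum_le_sum fun i _ => hinner i
  rw [← mul_sum, ← hsum, sum_const, card_univ, nsmul_eq_mul] at hle
  refine le_of_mul_le_mul_left ?_ hN
  linarith

/-- The average of `f` over all permutations of the coordinates that are not entries of `L`. -/
noncomputable def offAverage (L : List (Fin n × Fin n)) (f : SlicePoint n p → ℝ) :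
    SlicePoint n p → ℝ :=
  (Fintype.card (Equiv.Perm {i // i ∉ entries L}) : ℝ)⁻¹ •
    ∑ τ : Equiv.Perm {i // i ∉ entries L}, permFun (Equiv.Perm.ofSubtype τ) f

lemma ofSubtype_apply_of_mem_entries (τ : Equiv.Perm {i // i ∉ entries L}) {i : Fin n}
    (hi : i ∈ entries L) : Equiv.Perm.ofSubtype τ i = i :=
  Equiv.Perm.ofSubtype_apply_of_not_mem τ (not_not.2 hi)

lemma offAverage_isAlternating (hf : IsAlternating L f) : IsAlternating L (offAverage L f) := by
  intro q hq
  rw [offAverage, map_smul, map_sum, ← smul_neg, ← sum_neg_distrib]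
  congr 1
  refine sum_congr rfl fun τ _ => ?_
  have hcomm : Equiv.Perm.ofSubtype τ * Equiv.swap q.1 q.2 =
      Equiv.swap q.1 q.2 * Equiv.Perm.ofSubtype τ := by
    rw [Equiv.mul_swap_eq_swap_mul,
      ofSubtype_apply_of_mem_entries τ (mem_entries.2 ⟨q, hq, .inl rfl⟩),
      ofSubtype_apply_of_mem_entries τ (mem_entries.2 ⟨q, hq, .inr rfl⟩)]
  rw [permFun_permFun, hcomm, ← permFun_permFun, hf q hq, map_neg]

lemma permFun_swap_offAverage (f : SlicePoint n p → ℝ) {i j : Fin n} (hi : i ∉ entries L)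
    (hj : j ∉ entries L) :
    permFun (Equiv.swap i j) (offAverage L f) = offAverage L f := by
  set σ : Equiv.Perm {i // i ∉ entries L} := Equiv.swap ⟨i, hi⟩ ⟨j, hj⟩ with hdef
  have hσ : Equiv.swap i j = Equiv.Perm.ofSubtype σ := by rw [hdef, Equiv.Perm.ofSubtype_swap_eq]
  rw [offAverage, map_smul, map_sum]
  congr 1
  refine Fintype.sum_equiv (Equiv.mulRight σ) _ _ fun τ => ?_
  rw [hσ, permFun_permFun, ← map_mul, Equiv.coe_mulRight]

lemma sNormSq_sub_offAverage_le
    (hf : ∀ τ : Equiv.Perm {i // i ∉ entries L},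
      sNormSq (f - permFun (Equiv.Perm.ofSubtype τ) f) ≤ C) :
    sNormSq (f - offAverage L f) ≤ C := by
  have hsub : f - offAverage L f = (Fintype.card (Equiv.Perm {i // i ∉ entries L}) : ℝ)⁻¹ •
      ∑ τ : Equiv.Perm {i // i ∉ entries L}, (f - permFun (Equiv.Perm.ofSubtype τ) f) := by
    rw [sum_sub_distrib, smul_sub, sum_const, card_univ, ← Nat.cast_smul_eq_nsmul ℝ,
      inv_smul_smul₀ (Nat.cast_ne_zero.2 Fintype.card_ne_zero), offAverage]
  rw [hsub]
  exact sNormSq_average_le hf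

lemma sInner_offAverage_slicePsi (f : SlicePoint n p → ℝ) :
    sInner (offAverage L f) (slicePsi L) = sInner f (slicePsi L) := by
  have hterm (τ : Equiv.Perm {i // i ∉ entries L}) :
      sInner (permFun (Equiv.Perm.ofSubtype τ) f) (slicePsi L) = sInner f (slicePsi L) := by
    rw [sInner_permFun_left, ← map_inv,
      permFun_slicePsi_of_fixed fun i hi => ofSubtype_apply_of_mem_entries τ⁻¹ hi]
  rw [offAverage, sInner_smul_left, sInner_sum_left, Fintype.sum_congr _ _ hterm, sum_const,
    card_univ, nsmul_eq_mul, inv_mul_cancel_left₀ (Nat.cast_ne_zero.2 Fintype.card_ne_zero)]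

end Average

/-! ### Rounding the derivatives of an integer-valued function -/

section Rounding

variable {m k l : ℕ} {f f₁ h h₁ : SlicePoint n p → ℝ} {ε C : ℝ} {L L' : List (Fin n × Fin n)}

lemma IsLowProj.sub_permFun (hproj : IsLowProj n p k f f₁) (σ : Equiv.Perm (Fin n)) :
    IsLowProj n p k (f - permFun σ f) (f₁ - permFun σ f₁) := by
  refine ⟨Submodule.sub_mem _ hproj.1 (permFun_mem_degLE σ hproj.1), fun g hg => ?_⟩
  rw [sub_sub_sub_comm, ← map_sub, sInner_sub_left, sInner_permFun_left, hproj.2 g hg,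
    hproj.2 _ (permFun_mem_degLE σ⁻¹ hg), sub_zero]

/-- Composing with one more transposition costs a constant factor, which the gap recovers. -/
lemma sNormSq_sub_permFun_ofSubtype_le {A : Fin n → Prop} [DecidablePred A]
    (hf : IsDyadic l f) (hm : (m : ℝ) = p * n) (hp₀ : 0 < p) (hp₁ : p ≤ 1 / 2) (hk : 1 ≤ k)
    (hl : l ≤ k) (hproj : IsLowProj n p k f f₁) (hε : sNormSq (f - f₁) ≤ ε)
    (hsmall : 32 * ε ≤ p ^ (28 * k))
    (hswap : ∀ i j, A i → A j → i ≠ j → sNormSq (f - permFun (Equiv.swap i j) f) ≤ 8 * ε)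
    (τ : Equiv.Perm {i // A i}) :
    sNormSq (f - permFun (Equiv.Perm.ofSubtype τ) f) ≤ 8 * ε := by
  induction τ using Equiv.Perm.swap_induction_on with
  | one =>
    have hε₀ := (sNormSq_nonneg _).trans hε
    simpa [sNormSq] using hε₀
  | swap_mul τ i j hij ih =>
    rw [map_mul, Equiv.Perm.ofSubtype_swap_eq]
    have hsplit : f - permFun (Equiv.swap i.1 j.1 * Equiv.Perm.ofSubtype τ) f =
        (f - permFun (Equiv.Perm.ofSubtype τ) f) +
          permFun (Equiv.Perm.ofSubtype τ) (f - permFun (Equiv.swap i.1 j.1) f) := by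
      rw [map_sub, permFun_permFun, sub_add_sub_cancel]
    set σ := Equiv.swap i.1 j.1 * Equiv.Perm.ofSubtype τ
    have hweak : sNormSq (f - permFun σ f) ≤ 32 * ε := by
      have := hswap i j i.2 j.2 (Subtype.coe_injective.ne hij)
      rw [hsplit]
      refine (sNormSq_add_le _ _).trans ?_
      rw [sNormSq_permFun]
      linarith
    have hclose : sNormSq (f - permFun σ f - (f₁ - permFun σ f₁)) ≤ 4 * ε := by
      rw [sub_sub_sub_comm, ← map_sub]
      refine (sNormSq_sub_le _ _).trans ?_
      rw [sNormSq_permFun]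
      linarith
    have := (hf.sub (hf.permFun σ)).sNormSq_le_of_isLowProj hm hp₀ hp₁ hk hl
      (hproj.sub_permFun σ) hclose (hweak.trans hsmall)
    linarith

/-- The coefficient of `Ψ_L` in the orthogonal projection of `f`, scaled so that it is an integer
whenever `f` is an integer-valued function with `D_L f` proportional to `Ψ_L`. -/
noncomputable def psiCoeff (f : SlicePoint n p → ℝ) (L : List (Fin n × Fin n)) : ℝ :=
  2 ^ L.length * sInner f (slicePsi L) / sNormSq (slicePsi L : SlicePoint n p → ℝ)

lemma exists_perm_map_eq {α : Type*} {s t : List α} (hs : s.Nodup) (ht : t.Nodup)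
    (hlen : s.length = t.length) : ∃ π : Equiv.Perm α, s.map π = t := by
  have htrans := Equiv.Perm.isMultiplyPretransitive α s.length
  obtain ⟨π, hπ⟩ := htrans.exists_smul_eq ⟨s.get, List.nodup_iff_injective_get.1 hs⟩
    ⟨fun i => t.get (i.cast hlen),
      (List.nodup_iff_injective_get.1 ht).comp (Fin.cast_injective hlen)⟩
  refine ⟨π, List.ext_get (by rw [List.length_map, hlen]) fun i hi _ => ?_⟩
  rw [List.length_map] at hi
  simpa using DFunLike.congr_fun hπ ⟨i, hi⟩

lemma eq_map_of_map_entries_eq {ι : Type*} {π : ι → ι} {L L' : List (ι × ι)}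
    (h : (entries L).map π = entries L') : L' = L.map (Prod.map π π) := by
  induction L generalizing L' with
  | nil => cases L' <;> simp_all
  | cons q L ih =>
    cases L' with
    | nil => simp at h
    | cons r L' =>
      simp only [entries_cons, List.map_cons, List.cons.injEq] at h
      rw [List.map_cons, ih h.2.2, Prod.map, h.1, h.2.1]

lemma sNormSq_slicePsi_congr (hL : (entries L).Nodup) (hL' : (entries L').Nodup)
    (hlen : L.length = L'.length) :
    sNormSq (slicePsi L : SlicePoint n p → ℝ) = sNormSq (slicePsi L' : SlicePoint n p → ℝ) := by
  have hentries : (entries L).length = (entries L').length := by simp [entries, hlen]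
  obtain ⟨π, hπ⟩ := exists_perm_map_eq hL hL' hentries
  rw [eq_map_of_map_entries_eq hπ, ← sNormSq_permFun π.symm (slicePsi L), permFun_slicePsi,
    Equiv.symm_symm]

lemma slicePsi_swap_cons (a b : Fin n) (L : List (Fin n × Fin n)) :
    (slicePsi ((b, a) :: L) : SlicePoint n p → ℝ) = (-1 : ℝ) • slicePsi ((a, b) :: L) := by
  funext x
  simp only [Pi.smul_apply, smul_eq_mul, slicePsi_cons]
  ring

lemma slicePsi_cons_add_slicePsi_cons (a b c : Fin n) (L : List (Fin n × Fin n)) :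
    (slicePsi ((a, b) :: L) + slicePsi ((b, c) :: L) : SlicePoint n p → ℝ) =
      slicePsi ((a, c) :: L) := by
  funext x
  simp only [Pi.add_apply, slicePsi_cons]
  ring

lemma slicePsi_plucker (a b c d : Fin n) (L : List (Fin n × Fin n)) :
    (slicePsi ((c, a) :: (b, d) :: L) : SlicePoint n p → ℝ) =
      (-1 : ℝ) • (slicePsi ((a, b) :: (c, d) :: L) + slicePsi ((b, c) :: (a, d) :: L)) := by
  funext x
  simp only [Pi.smul_apply, Pi.add_apply, smul_eq_mul, slicePsi_cons]
  ring

lemma garnirRelations_psiCoeff (f : SlicePoint n p → ℝ) (k : ℕ) :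
    GarnirRelations univ k (psiCoeff f) where
  perm L L' h _ := by rw [psiCoeff, psiCoeff, slicePsi_perm h, h.length_eq]
  swap_pair a b L _ := by
    rw [psiCoeff, psiCoeff, slicePsi_swap_cons, sInner_smul_right, sNormSq_smul, List.length_cons,
      List.length_cons]
    ring
  add_pair a b e L hL _ := by
    simp only [distinctIn_cons, List.mem_cons, not_or] at hL
    obtain ⟨-, ⟨hab, hae, haL⟩, -, ⟨hbe, hbL⟩, -, heL, hL, -⟩ := hL
    have hnodup {i j : Fin n} (hij : i ≠ j) (hi : i ∉ entries L) (hj : j ∉ entries L) :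
        (entries ((i, j) :: L)).Nodup := by simp [*]
    rw [psiCoeff, psiCoeff, psiCoeff,
      sNormSq_slicePsi_congr (hnodup hab haL hbL) (hnodup hae haL heL) rfl,
      sNormSq_slicePsi_congr (hnodup hbe hbL heL) (hnodup hae haL heL) rfl,
      ← slicePsi_cons_add_slicePsi_cons a b e L, sInner_add_right, List.length_cons,
      List.length_cons, List.length_cons]
    ring
  plucker a b e d L hL _ := by
    have hp₁ : (entries ((a, b) :: (e, d) :: L)).Perm (entries ((b, e) :: (a, d) :: L)) :=
      (List.Perm.swap b a _).trans (.cons b (.swap e a _))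
    have hp₂ : (entries ((a, b) :: (e, d) :: L)).Perm (entries ((e, a) :: (b, d) :: L)) :=
      (List.Perm.cons a (.swap e b _)).trans (.swap e a _)
    have hnodup : (entries ((a, b) :: (e, d) :: L)).Nodup := hL.1
    simp only [psiCoeff, List.length_cons]
    rw [← sNormSq_slicePsi_congr hnodup (hp₁.nodup_iff.1 hnodup) rfl,
      ← sNormSq_slicePsi_congr hnodup (hp₂.nodup_iff.1 hnodup) rfl,
      slicePsi_plucker, sInner_smul_right, sInner_add_right]
    ring

lemma garnirRelations_round {ι : Type*} {A : Finset ι} {c : List (ι × ι) → ℝ}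
    (hc : GarnirRelations A k c) (hr : ∀ L, IsPairing A k L → |c L - round (c L)| < 1 / 4) :
    GarnirRelations A k fun L => round (c L) where
  perm L L' h hL := by rw [hc.perm L L' h hL]
  swap_pair a b L hL := by
    have h := abs_lt.1 (hr _ hL)
    rw [hc.swap_pair a b L hL, round_eq_iff]
    push_cast
    constructor <;> linarith
  add_pair a b e L hL hk := by
    have hab := hL.perm ((List.Perm.cons a (.swap e b _)).trans (.swap e a _))
    have h₁ := abs_lt.1 (hr ((a, b) :: L) ⟨(distinctIn_cons.1 hab).2.2, hk⟩)
    have h₂ := abs_lt.1 (hr ((b, e) :: L) ⟨(distinctIn_cons.1 hL).2.2, hk⟩)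
    rw [hc.add_pair a b e L hL hk, round_eq_iff]
    push_cast
    constructor <;> linarith
  plucker a b e f L hL hk := by
    have h₁ := abs_lt.1 (hr ((a, b) :: (e, f) :: L) ⟨hL, hk⟩)
    have h₂ := abs_lt.1 (hr ((b, e) :: (a, f) :: L)
      ⟨hL.perm ((List.Perm.swap b a _).trans (.cons b (.swap e a _))), hk⟩)
    rw [← neg_eq_iff_add_eq_zero, eq_comm, round_eq_iff,
      ← neg_eq_of_add_eq_zero_right (hc.plucker a b e f L hL hk)]
    push_cast
    constructor <;> linarith

lemma isDyadic_zero : IsDyadic 0 f ↔ ∀ x, ∃ z : ℤ, f x = z := by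
  simp [IsDyadic]

lemma sq_sub_round_div_le (t : ℝ) (l : ℕ) (z : ℤ) :
    (t - round (2 ^ l * t) / 2 ^ l) ^ 2 ≤ (t - z / 2 ^ l) ^ 2 := by
  have hscale (w : ℤ) : t - w / 2 ^ l = (2 ^ l * t - w) / 2 ^ l := by field_simp
  rw [hscale, hscale, div_pow, div_pow]
  exact div_le_div_of_nonneg_right (sq_le_sq.2 (round_le _ z)) (by positivity)

lemma IsDyadic.sNormSq_smul_slicePsi_le (hf : IsDyadic l f) (hL : (entries L).Nodup) (t : ℝ) :
    sNormSq ((t - round (2 ^ l * t) / 2 ^ l) • slicePsi L : SlicePoint n p → ℝ) ≤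
      sNormSq (f - t • slicePsi L) := by
  rw [sNormSq_eq_sExp_sq, sNormSq_eq_sExp_sq]
  refine sExp_mono fun x => ?_
  obtain ⟨z, hz⟩ := hf x
  have hfx : f x = z / 2 ^ l := by rw [← hz, mul_div_cancel_left₀ _ (by positivity)]
  simp only [Pi.pow_apply, Pi.smul_apply, Pi.sub_apply, smul_eq_mul]
  by_cases hx : ∀ q ∈ L, x.1 q.1 ≠ x.1 q.2
  · rw [mul_pow, slicePsi_sq_of_ne hx, mul_one, hfx]
    obtain h | h := sq_eq_one_iff.1 (slicePsi_sq_of_ne hx)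
    · rw [h]
      linarith [sq_sub_round_div_le t l z]
    · rw [h]
      have := sq_sub_round_div_le t l (-z)
      rw [Int.cast_neg, neg_div] at this
      linarith
  · push Not at hx
    obtain ⟨q, hq, hxq⟩ := hx
    rw [(slicePsi_isAlternating hL).apply_eq_zero hq hxq, mul_zero, zero_pow two_ne_zero]
    positivity

lemma sNormSq_slicePsi_pos (hm : (m : ℝ) = p * n) (hp₀ : 0 < p) (hp₁ : p ≤ 1 / 2)
    (hL : (entries L).Nodup) (hLm : L.length ≤ m) :
    0 < sNormSq (slicePsi L : SlicePoint n p → ℝ) :=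
  (pow_pos hp₀ _).trans_le (pow_le_sNormSq_slicePsi hm hp₀ hp₁ hL hLm)

lemma offAverage_listDeriv (hm : (m : ℝ) = p * n) (hp₀ : 0 < p) (hp₁ : p ≤ 1 / 2)
    (hL : (entries L).Nodup) (hLm : L.length ≤ m) (f : SlicePoint n p → ℝ) :
    offAverage L (listDeriv L f) = (psiCoeff f L / 2 ^ L.length) • slicePsi L := by
  have halt := offAverage_isAlternating (listDeriv_isAlternating hL f)
  obtain ⟨t, ht⟩ := halt.exists_eq_smul_slicePsi hL fun i hi j hj => permFun_swap_offAverage _ hi hj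
  have hpos := sNormSq_slicePsi_pos (n := n) hm hp₀ hp₁ hL hLm
  have hinner : sInner f (slicePsi L) = t * sNormSq (slicePsi L : SlicePoint n p → ℝ) := by
    rw [sNormSq, ← sInner_smul_left, ← ht, sInner_offAverage_slicePsi,
      sInner_listDeriv_left (slicePsi_isAlternating hL)]
  rw [ht, psiCoeff, hinner]
  congr 1
  field_simp

lemma sNormSq_listDeriv_sub_permFun_swap_le
    (hderiv : ∀ M, IsPairing univ (L.length + 1) M → sNormSq (listDeriv M f) ≤ C)
    (hL : (entries L).Nodup) {i j : Fin n} (hi : i ∉ entries L) (hj : j ∉ entries L) (hij : i ≠ j) :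
    sNormSq (listDeriv L f - permFun (Equiv.swap i j) (listDeriv L f)) ≤ 4 * C := by
  have hM : IsPairing univ (L.length + 1) ((i, j) :: L) :=
    ⟨⟨by simp [hi, hj, hij, hL], fun _ _ => mem_univ _⟩, rfl⟩
  have := hderiv _ hM
  rw [listDeriv_cons, pairDeriv_apply, sNormSq_smul] at this
  linarith

lemma four_pow_mul_pow_lt (hp₀ : 0 < p) (hp₁ : p ≤ 1 / 2) (hk : 1 ≤ k) :
    4 ^ k * (p ^ (28 * k) / 4) < (1 / 4) ^ 2 * p ^ (10 * k) := by
  have hpow : p ^ (16 * k) < 1 / 4 :=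
    calc p ^ (16 * k) ≤ p ^ 3 := pow_le_pow_of_le_one hp₀.le (by linarith) (by omega)
      _ ≤ (1 / 2) ^ 3 := by gcongr
      _ < 1 / 4 := by norm_num
  calc 4 ^ k * (p ^ (28 * k) / 4)
      = (4 * p ^ 2) ^ k * (p ^ (16 * k) / 4 * p ^ (10 * k)) := by ring
    _ ≤ 1 * (p ^ (16 * k) / 4 * p ^ (10 * k)) := by
      gcongr
      exact pow_le_one₀ (by positivity) (by nlinarith)
    _ < (1 / 4) ^ 2 * p ^ (10 * k) := by
      rw [one_mul]
      gcongr
      linarith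

section Round

variable (hm : (m : ℝ) = p * n) (hp₀ : 0 < p) (hp₁ : p ≤ 1 / 2) (hk : 1 ≤ k)
  (hL : (entries L).Nodup) (hLm : L.length ≤ m) (hLk : L.length ≤ k) (hh : IsDyadic 0 h)
  (hproj : IsLowProj n p k h h₁) (hε : sNormSq (h - h₁) ≤ ε) (hsmall : 32 * ε ≤ p ^ (28 * k))
  (hderiv : ∀ M, IsPairing univ (L.length + 1) M → sNormSq (listDeriv M h) ≤ 2 * ε)
include hm hp₀ hp₁ hk hL hLm hLk hh hproj hε hsmall hderiv

lemma sNormSq_listDeriv_sub_psiCoeff_smul_le :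
    sNormSq (listDeriv L h - (psiCoeff h L / 2 ^ L.length) • slicePsi L) ≤ 8 * ε := by
  have hdyadic : IsDyadic L.length (listDeriv L h) := by simpa using hh.listDeriv L
  have hclose : sNormSq (listDeriv L h - listDeriv L h₁) ≤ ε := by
    rw [← map_sub]
    exact (sNormSq_listDeriv_le L _).trans hε
  rw [← offAverage_listDeriv hm hp₀ hp₁ hL hLm]
  refine sNormSq_sub_offAverage_le fun τ => ?_
  refine sNormSq_sub_permFun_ofSubtype_le hdyadic hm hp₀ hp₁ hk hLk (hproj.listDeriv L) hclose
    hsmall (fun i j hi hj hij => ?_) τ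
  linarith [sNormSq_listDeriv_sub_permFun_swap_le hderiv hL hi hj hij]

lemma sNormSq_psiCoeff_sub_round_smul_le :
    sNormSq ((psiCoeff h L / 2 ^ L.length - round (psiCoeff h L) / 2 ^ L.length) •
      slicePsi L : SlicePoint n p → ℝ) ≤ 8 * ε := by
  have hdyadic : IsDyadic L.length (listDeriv L h) := by simpa using hh.listDeriv L
  have hround := hdyadic.sNormSq_smul_slicePsi_le hL (psiCoeff h L / 2 ^ L.length)
  rw [mul_div_cancel₀ _ (by positivity)] at hround
  exact hround.trans (sNormSq_listDeriv_sub_psiCoeff_smul_le hm hp₀ hp₁ hk hL hLm hLk hh hproj hε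
    hsmall hderiv)

lemma sNormSq_listDeriv_sub_round_smul_le :
    sNormSq (listDeriv L h - ((round (psiCoeff h L) : ℝ) / 2 ^ L.length) • slicePsi L) ≤
      32 * ε := by
  have h₁ := sNormSq_listDeriv_sub_psiCoeff_smul_le hm hp₀ hp₁ hk hL hLm hLk hh hproj hε hsmall
    hderiv
  have h₂ := sNormSq_psiCoeff_sub_round_smul_le hm hp₀ hp₁ hk hL hLm hLk hh hproj hε hsmall hderiv
  rw [← sub_add_sub_cancel _ ((psiCoeff h L / 2 ^ L.length) • slicePsi L), ← sub_smul]
  exact (sNormSq_add_le _ _).trans (by linarith)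

lemma abs_psiCoeff_sub_round_lt : |psiCoeff h L - round (psiCoeff h L)| < 1 / 4 := by
  have hnorm := sNormSq_psiCoeff_sub_round_smul_le hm hp₀ hp₁ hk hL hLm hLk hh hproj hε hsmall
    hderiv
  rw [sNormSq_smul, ← sub_div, div_pow] at hnorm
  set δ := psiCoeff h L - round (psiCoeff h L)
  have hlower : p ^ (10 * k) ≤ sNormSq (slicePsi L : SlicePoint n p → ℝ) :=
    (pow_le_pow_of_le_one hp₀.le (by linarith) (by omega)).trans
      (pow_le_sNormSq_slicePsi hm hp₀ hp₁ hL hLm)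
  have hsq : δ ^ 2 * p ^ (10 * k) < (1 / 4) ^ 2 * p ^ (10 * k) :=
    calc δ ^ 2 * p ^ (10 * k)
        ≤ δ ^ 2 * sNormSq (slicePsi L : SlicePoint n p → ℝ) := by gcongr
      _ = 4 ^ L.length * (δ ^ 2 / (2 ^ L.length) ^ 2 *
          sNormSq (slicePsi L : SlicePoint n p → ℝ)) := by
        rw [show (4 : ℝ) = 2 ^ 2 by norm_num, pow_right_comm]
        field_simp
      _ ≤ 4 ^ k * (p ^ (28 * k) / 4) :=
        mul_le_mul (pow_le_pow_right₀ (by norm_num) hLk) (by linarith)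
          (mul_nonneg (by positivity) (sNormSq_nonneg _)) (by positivity)
      _ < (1 / 4) ^ 2 * p ^ (10 * k) := four_pow_mul_pow_lt hp₀ hp₁ hk
  exact abs_lt_of_sq_lt_sq (lt_of_mul_lt_mul_right hsq (by positivity)) (by norm_num)

end Round

end Rounding

/-! ### Integer-valued functions approximating the derivatives -/

section Main

variable {m k l : ℕ} {f f₁ g h h₁ : SlicePoint n p → ℝ} {ε : ℝ}

lemma IsLowProj.sub_mem (hproj : IsLowProj n p k f f₁) (hg : g ∈ degLE n p k) :
    IsLowProj n p k (f - g) (f₁ - g) :=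
  ⟨Submodule.sub_mem _ hproj.1 hg, by rw [sub_sub_sub_cancel_right]; exact hproj.2⟩

lemma degLE_zero : degLE n p 0 = Submodule.span ℝ {slicePsi []} := by
  rw [degLE]
  congr 1
  ext g
  simp only [Nat.le_zero, card_eq_zero, exists_eq_left, Set.mem_ofPred_eq, Set.mem_singleton_iff]
  rfl

lemma exists_int_smul_sNormSq_sub_le (hh : IsDyadic 0 h) (hproj : IsLowProj n p 0 h h₁) :
    ∃ z : ℤ, sNormSq (h - (z : ℝ) • slicePsi []) ≤ 2 * sNormSq (h - h₁) := by
  obtain ⟨t, rfl⟩ := Submodule.mem_span_singleton.1 (degLE_zero (n := n) (p := p) ▸ hproj.1)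
  have hround := hh.sNormSq_smul_slicePsi_le (L := []) List.nodup_nil t
  rw [pow_zero, one_mul, div_one] at hround
  have horth := hproj.2 ((t - round t) • slicePsi [])
    (Submodule.smul_mem _ _ (slicePsi_mem_degLE (L := []) List.nodup_nil))
  refine ⟨round t, ?_⟩
  rw [← sub_add_sub_cancel h (t • slicePsi []), ← sub_smul, sNormSq_add, horth]
  linarith

lemma exists_int_degLE_zero_sNormSq_listDeriv_le (hh : IsDyadic 0 h)
    (hproj : IsLowProj n p 0 h h₁) (hε : sNormSq (h - h₁) ≤ ε) :
    ∃ g ∈ degLE n p 0, IsDyadic 0 g ∧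
      ∀ L, IsPairing univ 0 L → sNormSq (listDeriv L (h - g)) ≤ 2 * ε := by
  obtain ⟨z, hz⟩ := exists_int_smul_sNormSq_sub_le hh hproj
  refine ⟨(z : ℝ) • slicePsi [], ?_, fun x => ⟨z, ?_⟩, fun L _ => ?_⟩
  · exact Submodule.smul_mem _ _ (slicePsi_mem_degLE (L := []) List.nodup_nil)
  · simp [slicePsi, cubePsi]
  · exact (sNormSq_listDeriv_le L _).trans (by linarith)

theorem exists_int_degLE_sNormSq_listDeriv_le (hm : (m : ℝ) = p * n) (hp₀ : 0 < p)
    (hp₁ : p ≤ 1 / 2) (hk : 1 ≤ k) (hlm : l ≤ m) (hlk : l ≤ k) (hh : IsDyadic 0 h)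
    (hproj : IsLowProj n p k h h₁) (hε : sNormSq (h - h₁) ≤ ε)
    (hsmall : 32 * ε ≤ p ^ (28 * k))
    (hderiv : ∀ M, IsPairing univ (l + 1) M → sNormSq (listDeriv M h) ≤ 2 * ε) :
    ∃ g ∈ degLE n p l, IsDyadic 0 g ∧
      ∀ L, IsPairing univ l L → sNormSq (listDeriv L (h - g)) ≤ 2 * ε := by
  have hgarnir : GarnirRelations univ l fun L => round (psiCoeff h L) := by
    refine garnirRelations_round (garnirRelations_psiCoeff h l) ?_
    rintro L ⟨⟨hL, -⟩, rfl⟩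
    exact abs_psiCoeff_sub_round_lt hm hp₀ hp₁ hk hL hlm hlk hh hproj hε hsmall hderiv
  obtain ⟨u, hu⟩ := hgarnir.exists_eq_altSum
  set g := homogPoly n p l u with hg_def
  have hg : IsDyadic 0 g := isDyadic_zero.2 (exists_int_eq_homogPoly l u)
  have hg_mem : g ∈ degLE n p l := homogPoly_mem_degLE l u
  refine ⟨g, hg_mem, hg, ?_⟩
  intro L hLl
  obtain ⟨⟨hL, -⟩, rfl⟩ := id hLl
  have hDg : listDeriv L g = ((round (psiCoeff h L) : ℝ) / 2 ^ L.length) • slicePsi L := by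
    rw [hu L hLl, div_eq_inv_mul, mul_smul, hg_def, ← two_pow_smul_listDeriv_homogPoly hL u,
      inv_smul_smul₀ (by positivity)]
  have hdyadic : IsDyadic L.length (listDeriv L (h - g)) := by simpa using (hh.sub hg).listDeriv L
  refine hdyadic.sNormSq_le_of_isLowProj hm hp₀ hp₁ hk hlk
    ((hproj.sub_mem (degLE_mono hlk hg_mem)).listDeriv L) ?_ (le_trans ?_ hsmall)
  · rw [← map_sub, sub_sub_sub_cancel_right]
    exact (sNormSq_listDeriv_le L _).trans hε
  · rw [map_sub, hDg]
    exact sNormSq_listDeriv_sub_round_smul_le hm hp₀ hp₁ hk hL hlm hlk hh hproj hε hsmall hderiv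

lemma thirty_two_mul_le_of_le_rpow (hp₀ : 0 < p) (hp₁ : p ≤ 1 / 2) (hk : 1 ≤ k)
    (hε : ε ≤ p ^ ((33 : ℝ) * k)) : 32 * ε ≤ p ^ (28 * k) := by
  have hpow : p ^ (5 * k) ≤ 1 / 32 :=
    calc p ^ (5 * k) ≤ p ^ 5 := pow_le_pow_of_le_one hp₀.le (by linarith) (by omega)
      _ ≤ (1 / 2) ^ 5 := by gcongr
      _ = 1 / 32 := by norm_num
  calc 32 * ε ≤ 32 * p ^ ((33 : ℝ) * k) := by gcongr
    _ = 32 * p ^ (5 * k) * p ^ (28 * k) := by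
      rw [mul_assoc, ← pow_add, ← Real.rpow_natCast]
      congr 2
      push_cast
      ring
    _ ≤ p ^ (28 * k) := mul_le_of_le_one_left (by positivity) (by linarith)

end Main

/-- There is a universal constant `c₁ > 0` such that: if `0 < p ≤ 1/2`, `p n ∈ ℤ`,
`h : S(n,p) → ℤ` satisfies `‖h^{>k}‖₂² ≤ ε ≤ p^{c₁ k}` and, for some `l ≤ k`, all
`(l+1)`-tuples `Q` have `‖D_Q h‖₂² ≤ 2 ε`, then there is an integer-valued `g` of degree
`≤ l` such that `‖D_P (h - g)‖₂² ≤ 2 ε` for every `l`-tuple `P`. -/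
theorem eating_derivatives :
    ∃ c₁ : ℝ, 0 < c₁ ∧
      ∀ (n : ℕ) (p : ℝ), 0 < p → p ≤ 1 / 2 → (∃ m : ℤ, (m : ℝ) = p * n) →
        ∀ (k : ℕ) (ε : ℝ) (h : SlicePoint n p → ℝ),
          (∀ x, ∃ m : ℤ, h x = m) →
          (∃ hk, IsLowProj n p k h hk ∧ sNormSq (h - hk) ≤ ε) →
          ε ≤ p ^ (c₁ * k) →
          ∀ l : ℕ, l ≤ k →
            (∀ Q : Finset (Fin n × Fin n), IsTuple (l + 1) Q → sNormSq (DP Q h) ≤ 2 * ε) →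
            ∃ g : SlicePoint n p → ℝ,
              (∀ x, ∃ m : ℤ, g x = m) ∧ g ∈ degLE n p l ∧
              ∀ P : Finset (Fin n × Fin n), IsTuple l P →
                sNormSq (DP P (h - g)) ≤ 2 * ε := by
  refine ⟨33, by norm_num, fun n p hp₀ hp₁ ⟨m, hm⟩ k ε h hint ⟨h₁, hproj, hε⟩ hsmall l hlk hQ => ?_⟩
  lift m to ℕ using by
    have : (0 : ℝ) ≤ m := hm ▸ by positivity
    exact_mod_cast this
  rw [Int.cast_natCast] at hm
  have hh : IsDyadic 0 h := isDyadic_zero.2 hint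
  have hderiv (M) (hM : IsPairing univ (l + 1) M) : sNormSq (listDeriv M h) ≤ 2 * ε := by
    obtain ⟨Q, hQ', hQM⟩ := hM.exists_isTuple h
    exact hQM ▸ hQ Q hQ'
  obtain ⟨g, hgl, hg, hgL⟩ : ∃ g ∈ degLE n p l, IsDyadic 0 g ∧
      ∀ L, IsPairing univ l L → sNormSq (listDeriv L (h - g)) ≤ 2 * ε := by
    obtain hml | hlm := lt_or_ge m l
    · have hε₀ := (sNormSq_nonneg _).trans hε
      exact ⟨h, degLE_mono hml.le (mem_degLE_card_ones hm h), hh, fun L _ => by simpa [sNormSq]⟩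
    obtain rfl | hk := k.eq_zero_or_pos
    · obtain rfl := Nat.le_zero.1 hlk
      exact exists_int_degLE_zero_sNormSq_listDeriv_le hh hproj hε
    · exact exists_int_degLE_sNormSq_listDeriv_le hm hp₀ hp₁ hk hlm hlk hh hproj hε
        (thirty_two_mul_le_of_le_rpow hp₀ hp₁ hk hsmall) hderiv
  exact ⟨g, isDyadic_zero.1 hg, hgl, fun P hP => DP_eq_listDeriv P _ ▸ hgL _ hP.isPairing⟩
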